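/- arXiv:2504.06916 — 4 statements merged into one kernel-verified Lean document; each statement's English description precedes it below -/
import Mathlib

section
/- Let V be a finite-dimensional vector space over an algebraically closed field K of characteristic zero, and let G ≤ GL(V) be a finite reflection group. Let v ∈ V with stabiliser G_v, and let η = π^{-1}(π(v)) be the scheme-theoretic fibre of the quotient morphism π : V → V/G over π(v). Then the stalk O_{η,v} satisfies Γ(O_{η,v}) ≅ K⟨G_v⟩, the regular representation of the stabiliser G_v. -/
open MvPolynomial

noncomputable section

/-- The "stalk at `v`" ideal: for a finite subscheme cut out by `J ⊆ K[x₁,…,xₙ]`, the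
kernel of `K[x₁,…,xₙ] → O_{Spec(K[x]/J), v}` consists of the functions annihilated by
some function not vanishing at `v`. -/
def stalkAtIdeal (K : Type*) [Field K] (nn : ℕ) (v : Fin nn → K)
    (J : Ideal (MvPolynomial (Fin nn) K)) : Ideal (MvPolynomial (Fin nn) K) where
  carrier := {f | ∃ t : MvPolynomial (Fin nn) K, eval v t ≠ 0 ∧ t * f ∈ J}
  zero_mem' := ⟨1, by simp, by simpa using J.zero_mem⟩
  add_mem' := by
    rintro a b ⟨t, ht, hta⟩ ⟨s, hs, hsb⟩
    refine ⟨t * s, by simp [ht, hs], ?_⟩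
    have h : t * s * (a + b) = s * (t * a) + t * (s * b) := by ring
    rw [h]
    exact J.add_mem (J.mul_mem_left _ hta) (J.mul_mem_left _ hsb)
  smul_mem' := by
    rintro c x ⟨t, ht, htx⟩
    refine ⟨t, ht, ?_⟩
    have h : t * (c • x) = c * (t * x) := by rw [smul_eq_mul]; ring
    rw [h]
    exact J.mul_mem_left _ htx

/-- The stabiliser of the point `v` in a group acting linearly via `φ`. -/
def ptStabilizer {K : Type*} [Field K] {nn : ℕ} {G : Type*} [Group G]
    (φ : G →* ((Fin nn → K) ≃ₗ[K] (Fin nn → K))) (v : Fin nn → K) : Subgroup G where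
  carrier := {g | φ g v = v}
  one_mem' := by simp
  mul_mem' := by
    intro a b ha hb
    show φ (a * b) v = v
    rw [map_mul]
    show φ a (φ b v) = v
    rw [hb, ha]
  inv_mem' := by
    intro a ha
    show φ a⁻¹ v = v
    calc φ a⁻¹ v = φ a⁻¹ (φ a v) := by rw [ha]
    _ = φ (a⁻¹ * a) v := by rw [map_mul]; rfl
    _ = v := by rw [inv_mul_cancel, map_one]; rfl

section

variable {K : Type*} [Field K] {n : ℕ} {G : Type*} [Group G]

/-- Homogeneous components of a product. -/
theorem homogeneousComponent_mul_eq_sum_antidiagonal (d : ℕ) (p q : MvPolynomial (Fin n) K) :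
    homogeneousComponent d (p * q) = ∑ ij ∈ Finset.HasAntidiagonal.antidiagonal d,
      homogeneousComponent ij.1 p * homogeneousComponent ij.2 q := by
  have hmon : ∀ (e : ℕ) (m : Fin n →₀ ℕ) (c : K), homogeneousComponent e (monomial m c) =
      if m.degree = e then monomial m c else 0 := fun e m c =>
    homogeneousComponent_of_mem (isHomogeneous_monomial c rfl) |>.trans (by simp [eq_comm])
  induction p using MvPolynomial.induction_on' with
  | add p₁ p₂ h₁ h₂ => simp only [add_mul, map_add, h₁, h₂, Finset.sum_add_distrib]
  | monomial a c =>
    induction q using MvPolynomial.induction_on' with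
    | add q₁ q₂ h₁ h₂ => simp only [mul_add, map_add, h₁, h₂, Finset.sum_add_distrib]
    | monomial b c' =>
      simp only [monomial_mul, hmon, map_add]
      by_cases h : a.degree + b.degree = d
      · rw [if_pos h, Finset.sum_eq_single (a.degree, b.degree)]
        · simp
        · rintro ⟨i, j⟩ _ hne
          by_cases hi : a.degree = i
          · have hj : b.degree ≠ j := fun hj => hne (by simp [hi, hj])
            simp [hj]
          · simp [hi]
        · simp [h]
      · rw [if_neg h, Finset.sum_eq_zero]
        rintro ⟨i, j⟩ hij
        rw [Finset.HasAntidiagonal.mem_antidiagonal] at hij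
        by_cases hi : a.degree = i
        · have hj : b.degree ≠ j := fun hj => h (by simp_all)
          simp [hj]
        · simp [hi]

theorem homogeneousComponent_succ_mul_of_isHomogeneous_one (d : ℕ) {l : MvPolynomial (Fin n) K}
    (hl : l.IsHomogeneous 1) (q : MvPolynomial (Fin n) K) :
    homogeneousComponent (d + 1) (l * q) = l * homogeneousComponent d q := by
  rw [homogeneousComponent_mul_eq_sum_antidiagonal, Finset.sum_eq_single (1, d)]
  · simp [homogeneousComponent_eq_self hl]
  · rintro ⟨i, j⟩ hij hne
    rw [Finset.HasAntidiagonal.mem_antidiagonal] at hij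
    have hi : i ≠ 1 := by
      rintro rfl
      exact hne (by simp at hij ⊢; omega)
    rw [homogeneousComponent_of_mem hl, if_neg hi, zero_mul]
  · simp [add_comm]

/-- Interpolation at finitely many distinct points. -/
theorem exists_eval_eq_of_injective {ι : Type*} [Finite ι] {p : ι → Fin n → K}
    (hp : Function.Injective p) (c : ι → K) :
    ∃ r : MvPolynomial (Fin n) K, ∀ i, eval (p i) r = c i := by
  classical
  have := Fintype.ofFinite ι
  have hsep : ∀ i j, ∃ e : MvPolynomial (Fin n) K,
      eval (p i) e = 1 ∧ (i ≠ j → eval (p j) e = 0) := by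
    intro i j
    by_cases hij : i = j
    · exact ⟨1, by simp, fun h => absurd hij h⟩
    · obtain ⟨k, hk⟩ := Function.ne_iff.mp (hp.ne hij)
      refine ⟨C (p i k - p j k)⁻¹ * (X k - C (p j k)), ?_, fun _ => by simp⟩
      simp [inv_mul_cancel₀ (sub_ne_zero.mpr hk)]
  choose e he₁ he₂ using hsep
  refine ⟨∑ i, C (c i) * ∏ j, e i j, fun i => ?_⟩
  rw [map_sum, Finset.sum_eq_single i]
  · simp [he₁, map_prod]
  · intro j _ hji
    rw [map_mul, map_prod, Finset.prod_eq_zero (Finset.mem_univ i) (he₂ j i hji), mul_zero]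
  · simp

variable (σ : G →* (MvPolynomial (Fin n) K ≃ₐ[K] MvPolynomial (Fin n) K))

/-- The subalgebra of polynomials invariant under an action `σ`. -/
def polynomialInvariants : Subalgebra K (MvPolynomial (Fin n) K) where
  carrier := {f | ∀ g, σ g f = f}
  mul_mem' ha hb g := by rw [map_mul, ha g, hb g]
  add_mem' ha hb g := by rw [map_add, ha g, hb g]
  algebraMap_mem' c g := (σ g).commutes c

/-- The ideal generated by the invariants vanishing at `v`: it cuts out the scheme-theoretic
fibre through `v` of the quotient morphism. -/
def fibreIdeal (v : Fin n → K) : Ideal (MvPolynomial (Fin n) K) :=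
  Ideal.span {f | (∀ g, σ g f = f) ∧ eval v f = 0}

variable {σ}

theorem map_inv_apply_map_apply (g : G) (f : MvPolynomial (Fin n) K) : σ g⁻¹ (σ g f) = f := by
  rw [← AlgEquiv.mul_apply, ← map_mul, inv_mul_cancel, map_one, AlgEquiv.one_apply]

theorem sub_C_mem_fibreIdeal {s : MvPolynomial (Fin n) K} (hs : s ∈ polynomialInvariants σ)
    (v : Fin n → K) : s - C (eval v s) ∈ fibreIdeal σ v :=
  Ideal.subset_span ⟨fun g => by rw [map_sub, hs g]; congr 1; exact (σ g).commutes _, by simp⟩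

theorem map_mem_fibreIdeal {v : Fin n → K} (g : G) {f : MvPolynomial (Fin n) K}
    (hf : f ∈ fibreIdeal σ v) : σ g f ∈ fibreIdeal σ v := by
  have : fibreIdeal σ v ≤ (fibreIdeal σ v).comap (σ g) :=
    Ideal.span_le.mpr fun x hx => by
      change σ g x ∈ fibreIdeal σ v
      rw [hx.1 g]
      exact Ideal.subset_span hx
  exact this hf

theorem sum_map_mem_polynomialInvariants [Fintype G] (f : MvPolynomial (Fin n) K) :
    ∑ g, σ g f ∈ polynomialInvariants σ := fun h => by
  rw [map_sum]
  exact Fintype.sum_equiv (Equiv.mulLeft h) _ _ fun g => by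
    rw [Equiv.coe_mulLeft, map_mul, AlgEquiv.mul_apply]

theorem prod_map_mem_polynomialInvariants [Fintype G] (f : MvPolynomial (Fin n) K) :
    ∏ g, σ g f ∈ polynomialInvariants σ := fun h => by
  rw [map_prod]
  exact Fintype.prod_equiv (Equiv.mulLeft h) _ _ fun g => by
    rw [Equiv.coe_mulLeft, map_mul, AlgEquiv.mul_apply]

theorem isHomogeneous_map_of_linear (hlin : ∀ g j, (σ g (X j)).IsHomogeneous 1) (g : G) {d : ℕ}
    {f : MvPolynomial (Fin n) K} (hf : f.IsHomogeneous d) : (σ g f).IsHomogeneous d := by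
  have h : σ g f = aeval (fun j => σ g (X j)) f := by
    exact DFunLike.congr_fun (aeval_unique (σ g).toAlgHom) f
  rw [h]
  simpa using hf.aeval _ (hlin g)

theorem homogeneousComponent_map_of_linear (hlin : ∀ g j, (σ g (X j)).IsHomogeneous 1) (g : G)
    (d : ℕ) (f : MvPolynomial (Fin n) K) :
    homogeneousComponent d (σ g f) = σ g (homogeneousComponent d f) := by
  conv_lhs => rw [← sum_homogeneousComponent f]
  rw [map_sum, map_sum]
  have h : ∀ i, homogeneousComponent d (σ g (homogeneousComponent i f)) =
      if d = i then σ g (homogeneousComponent i f) else 0 := fun i =>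
    homogeneousComponent_of_mem
      (isHomogeneous_map_of_linear hlin g (homogeneousComponent_isHomogeneous i f))
  simp only [h, Finset.sum_ite_eq, Finset.mem_range]
  split_ifs with hd
  · rfl
  · rw [homogeneousComponent_eq_zero _ _ (by omega), map_zero]

theorem homogeneousComponent_mem_polynomialInvariants
    (hlin : ∀ g j, (σ g (X j)).IsHomogeneous 1) {s : MvPolynomial (Fin n) K}
    (hs : s ∈ polynomialInvariants σ) (d : ℕ) :
    homogeneousComponent d s ∈ polynomialInvariants σ := fun g => by
  rw [← homogeneousComponent_map_of_linear hlin, hs g]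

end

section

variable {K : Type*} [Field K] {n : ℕ} {G : Type*} [Group G]
  {σ : G →* (MvPolynomial (Fin n) K ≃ₐ[K] MvPolynomial (Fin n) K)}

variable (σ) in
/-- An element acts on polynomials as a reflection if all differences `σ g f - f` are divisible
by a fixed nonzero linear form. -/
def ActsAsReflection (g : G) : Prop :=
  ∃ l : MvPolynomial (Fin n) K, l.IsHomogeneous 1 ∧ l ≠ 0 ∧ ∀ f, l ∣ σ g f - f

theorem mem_fibreIdeal_zero_of_map_sub_mem [Finite G] [CharZero K]
    (hlin : ∀ g j, (σ g (X j)).IsHomogeneous 1)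
    (hgen : Subgroup.closure {g | ActsAsReflection σ g} = ⊤) {d : ℕ} (hd : d ≠ 0)
    {r : MvPolynomial (Fin n) K} (hr : r.IsHomogeneous d)
    (h : ∀ g, ActsAsReflection σ g → σ g r - r ∈ fibreIdeal σ 0) : r ∈ fibreIdeal σ 0 := by
  have := Fintype.ofFinite G
  have hall : ∀ g : G, σ g r - r ∈ fibreIdeal σ 0 := by
    intro g
    have hg : g ∈ Subgroup.closure {g | ActsAsReflection σ g} := hgen ▸ Subgroup.mem_top g
    induction hg using Subgroup.closure_induction with
    | mem x hx => exact h x hx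
    | one => simp
    | mul x y _ _ hx hy =>
      have := add_mem (map_mem_fibreIdeal x hy) hx
      rwa [map_sub, sub_add_sub_cancel, ← AlgEquiv.mul_apply, ← map_mul] at this
    | inv x _ hx =>
      have := neg_mem (map_mem_fibreIdeal x⁻¹ hx)
      rwa [map_sub, map_inv_apply_map_apply, neg_sub] at this
  have hinv : ∑ g, σ g r ∈ fibreIdeal σ 0 := by
    refine Ideal.subset_span ⟨sum_map_mem_polynomialInvariants r, ?_⟩
    have hhom : (∑ g, σ g r).IsHomogeneous d :=
      IsHomogeneous.sum _ _ _ fun g _ => isHomogeneous_map_of_linear hlin g hr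
    rw [eval_zero, constantCoeff_eq]
    exact hhom.coeff_eq_zero (by simpa using hd.symm)
  have hsum := sub_mem hinv (sum_mem fun g (_ : g ∈ Finset.univ) => hall g)
  rw [← Finset.sum_sub_distrib] at hsum
  simp only [sub_sub_cancel, Finset.sum_const, Finset.card_univ] at hsum
  have hcard : (Fintype.card G : K) ≠ 0 := Nat.cast_ne_zero.mpr Fintype.card_ne_zero
  have := Ideal.mul_mem_left _ (C (Fintype.card G : K)⁻¹) hsum
  rwa [nsmul_eq_mul, ← mul_assoc, ← map_natCast (C (σ := Fin n) (R := K)), ← map_mul,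
    inv_mul_cancel₀ hcard, map_one, one_mul] at this

/-- **Chevalley's lemma** on relations with invariant coefficients, in a form that reads off the
top homogeneous components. -/
theorem sum_dual_smul_homogeneousComponent_mem [Finite G] [CharZero K]
    (hlin : ∀ g j, (σ g (X j)).IsHomogeneous 1)
    (hgen : Subgroup.closure {g | ActsAsReflection σ g} = ⊤) {ι : Type*} (t : Finset ι)
    {s : ι → MvPolynomial (Fin n) K} (hs : ∀ i ∈ t, s i ∈ polynomialInvariants σ)
    (μ : Module.Dual K (MvPolynomial (Fin n) K)) (d : ℕ) {r : ι → MvPolynomial (Fin n) K}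
    (hr : ∀ i ∈ t, (r i).totalDegree ≤ d) (hsum : ∑ i ∈ t, s i * r i = 0) :
    ∑ i ∈ t, μ (s i) • homogeneousComponent d (r i) ∈ fibreIdeal σ 0 := by
  induction d generalizing r with
  | zero =>
    have hconst : ∀ i ∈ t, r i = C (coeff 0 (r i)) := fun i hi =>
      totalDegree_eq_zero_iff_eq_C.mp (Nat.le_zero.mp (hr i hi))
    have h0 : ∑ i ∈ t, coeff 0 (r i) • s i = 0 := by
      rw [← hsum]
      refine Finset.sum_congr rfl fun i hi => ?_
      conv_rhs => rw [hconst i hi]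
      rw [smul_eq_C_mul, mul_comm]
    have h1 : ∑ i ∈ t, μ (s i) * coeff 0 (r i) = 0 := by
      have := congrArg μ h0
      simpa [map_sum, mul_comm] using this
    have : ∑ i ∈ t, μ (s i) • homogeneousComponent 0 (r i) = 0 := by
      simp_rw [homogeneousComponent_zero, smul_eq_C_mul, ← map_mul]
      rw [← map_sum, h1, map_zero]
    rw [this]
    exact zero_mem _
  | succ d ih =>
    refine mem_fibreIdeal_zero_of_map_sub_mem hlin hgen (Nat.succ_ne_zero d)
      (IsHomogeneous.sum _ _ _ fun i _ => ?_) fun g hg => ?_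
    · rw [smul_eq_C_mul]
      exact (homogeneousComponent_isHomogeneous _ _).C_mul _
    · obtain ⟨l, hl, hl0, hdvd⟩ := hg
      choose q hq using fun i => hdvd (r i)
      have hqsum : ∑ i ∈ t, s i * q i = 0 := by
        refine (mul_eq_zero.mp ?_).resolve_left hl0
        have h1 : ∑ i ∈ t, s i * σ g (r i) = 0 := by
          have := congrArg (σ g) hsum
          rw [map_sum, map_zero] at this
          rw [← this]
          exact Finset.sum_congr rfl fun i hi => by rw [map_mul, hs i hi g]
        rw [Finset.mul_sum, ← sub_zero (0 : MvPolynomial (Fin n) K)]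
        nth_rw 1 [← h1]
        rw [← hsum, ← Finset.sum_sub_distrib]
        refine Finset.sum_congr rfl fun i _ => ?_
        rw [← mul_sub, hq]
        ring
      have hqdeg : ∀ i ∈ t, (q i).totalDegree ≤ d := by
        intro i hi
        by_cases hqi : q i = 0
        · simp [hqi]
        have h1 : (σ g (r i)).totalDegree ≤ d + 1 := by
          rw [← sum_homogeneousComponent (r i), map_sum]
          refine totalDegree_finsetSum_le fun j hj => ?_
          refine (isHomogeneous_map_of_linear hlin g
            (homogeneousComponent_isHomogeneous j (r i))).totalDegree_le.trans ?_
          have := hr i hi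
          have := Finset.mem_range.mp hj
          omega
        have h2 : (l * q i).totalDegree ≤ d + 1 := by
          rw [← hq]
          exact (totalDegree_sub _ _).trans (max_le h1 (hr i hi))
        rw [totalDegree_mul_of_isDomain hl0 hqi, hl.totalDegree hl0] at h2
        omega
      have key := Ideal.mul_mem_left _ l (ih hqdeg hqsum)
      convert key using 1
      rw [map_sum, Finset.mul_sum, ← Finset.sum_sub_distrib]
      refine Finset.sum_congr rfl fun i _ => ?_
      rw [map_smul, ← smul_sub, ← homogeneousComponent_map_of_linear hlin, ← map_sub, hq,
        homogeneousComponent_succ_mul_of_isHomogeneous_one d hl, mul_smul_comm]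

/-- Homogeneous polynomials that are linearly independent modulo the Hilbert ideal are linearly
independent over the invariants. -/
theorem eq_zero_of_sum_invariant_mul_eq_zero [Finite G] [CharZero K]
    (hlin : ∀ g j, (σ g (X j)).IsHomogeneous 1)
    (hgen : Subgroup.closure {g | ActsAsReflection σ g} = ⊤) {ι : Type*}
    {b : ι → MvPolynomial (Fin n) K} {e : ι → ℕ} (hb : ∀ i, (b i).IsHomogeneous (e i))
    (hind : LinearIndependent K fun i => Ideal.Quotient.mk (fibreIdeal σ 0) (b i))
    (t : Finset ι) {s : ι → MvPolynomial (Fin n) K} (hs : ∀ i ∈ t, s i ∈ polynomialInvariants σ)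
    (hsum : ∑ i ∈ t, s i * b i = 0) : ∀ i ∈ t, s i = 0 := by
  classical
  by_contra! hne
  obtain ⟨i₁, hi₁, hsi₁⟩ := hne
  set t' := t.filter fun i => s i ≠ 0 with ht'
  obtain ⟨i₀, hi₀, hmax⟩ := t'.exists_max_image e ⟨i₁, by simp [ht', hi₁, hsi₁]⟩
  have hsum' : ∑ i ∈ t', s i * b i = 0 := by
    rw [← hsum]
    refine Finset.sum_subset (Finset.filter_subset _ _) fun i hi hi' => ?_
    have : s i = 0 := by by_contra h; exact hi' (by simp [ht', hi, h])
    rw [this, zero_mul]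
  refine (Finset.mem_filter.mp hi₀).2 ((Module.forall_dual_apply_eq_zero_iff K (s i₀)).mp fun μ => ?_)
  have h := sum_dual_smul_homogeneousComponent_mem hlin hgen t'
    (fun i hi => hs i (Finset.mem_filter.mp hi).1) μ (e i₀)
    (fun i hi => (hb i).totalDegree_le.trans (hmax i hi)) hsum'
  have hcoef := linearIndependent_iff'.mp hind t'
    (fun i => if e i₀ = e i then μ (s i) else 0) ?_ i₀ hi₀
  · simpa using hcoef
  · rw [← Ideal.Quotient.eq_zero_iff_mem, ← Ideal.Quotient.mkₐ_eq_mk K, map_sum] at h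
    rw [← h]
    refine Finset.sum_congr rfl fun i _ => ?_
    rw [map_smul, homogeneousComponent_of_mem (hb i)]
    split_ifs <;> simp

/-- Homogeneous polynomials that span modulo the Hilbert ideal generate the polynomial ring as a
module over the invariants. -/
theorem span_polynomialInvariants_eq_top (hlin : ∀ g j, (σ g (X j)).IsHomogeneous 1) {ι : Type*}
    {b : ι → MvPolynomial (Fin n) K} {e : ι → ℕ} (hb : ∀ i, (b i).IsHomogeneous (e i))
    (hspan : Submodule.span K (Set.range fun i => Ideal.Quotient.mk (fibreIdeal σ 0) (b i)) = ⊤) :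
    Submodule.span (polynomialInvariants σ) (Set.range b) = ⊤ := by
  set N := Submodule.span (polynomialInvariants σ) (Set.range b) with hN
  have hsmul : ∀ {s x}, s ∈ polynomialInvariants σ → x ∈ N → s * x ∈ N := fun {s x} hs hx =>
    N.smul_mem (⟨s, hs⟩ : polynomialInvariants σ) hx
  have hhom : ∀ d (f : MvPolynomial (Fin n) K), homogeneousComponent d f ∈ N := by
    intro d
    induction d using Nat.strong_induction_on with
    | _ d ih =>
    have hideal : ∀ x ∈ fibreIdeal σ 0, ∀ h, homogeneousComponent d (h * x) ∈ N := by
      intro x hx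
      induction hx using Submodule.span_induction with
      | zero => simp
      | add x y _ _ hx hy => exact fun h => by rw [mul_add, map_add]; exact add_mem (hx h) (hy h)
      | smul a x _ hx => exact fun h => by rw [smul_eq_mul, ← mul_assoc]; exact hx _
      | mem p hp =>
        intro h
        rw [mul_comm, homogeneousComponent_mul_eq_sum_antidiagonal]
        refine sum_mem fun ij hij => ?_
        rw [Finset.HasAntidiagonal.mem_antidiagonal] at hij
        obtain hi | hi := Nat.eq_zero_or_pos ij.1
        · have h0 : coeff 0 p = 0 := by
            rw [← constantCoeff_eq, ← eval_zero]
            exact hp.2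
          simp [hi, h0]
        · exact hsmul (homogeneousComponent_mem_polynomialInvariants hlin hp.1 _)
            (ih _ (by omega) _)
    have hspanK : ∀ u ∈ Submodule.span K (Set.range b), homogeneousComponent d u ∈ N := by
      intro u hu
      induction hu using Submodule.span_induction with
      | zero => simp
      | add x y _ _ hx hy => rw [map_add]; exact add_mem hx hy
      | smul a x _ hx =>
        rw [map_smul, smul_eq_C_mul]
        exact hsmul ((polynomialInvariants σ).algebraMap_mem a) hx
      | mem x hx =>
        obtain ⟨i, rfl⟩ := hx
        rw [homogeneousComponent_of_mem (hb i)]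
        split_ifs
        · exact Submodule.subset_span ⟨i, rfl⟩
        · exact zero_mem _
    intro f
    have hf : Ideal.Quotient.mk (fibreIdeal σ 0) f ∈ Submodule.map
        (Ideal.Quotient.mkₐ K (fibreIdeal σ 0)).toLinearMap (Submodule.span K (Set.range b)) := by
      rw [Submodule.map_span, ← Set.range_comp]
      exact hspan.symm ▸ Submodule.mem_top
    obtain ⟨u, hu, huf⟩ := hf
    have hdiff : f - u ∈ fibreIdeal σ 0 := Ideal.Quotient.eq.mp huf.symm
    have := add_mem (hideal _ hdiff 1) (hspanK u hu)
    rwa [one_mul, ← map_add, sub_add_cancel] at this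
  refine eq_top_iff.mpr fun f _ => ?_
  rw [← sum_homogeneousComponent f]
  exact sum_mem fun i _ => hhom i f

end

section

variable {K : Type*} [Field K] {n : ℕ}

/-- A linear functional on `Kⁿ` is the evaluation of a homogeneous linear form. -/
theorem exists_isHomogeneous_one_eval_eq (L : (Fin n → K) →ₗ[K] K) :
    ∃ l : MvPolynomial (Fin n) K, l.IsHomogeneous 1 ∧ ∀ w, eval w l = L w := by
  refine ⟨∑ k, C (L fun j => if k = j then 1 else 0) * X k,
    IsHomogeneous.sum _ _ _ fun k _ => isHomogeneous_C_mul_X _ k, fun w => ?_⟩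
  rw [LinearMap.pi_apply_eq_sum_univ L w, map_sum]
  exact Finset.sum_congr rfl fun k _ => by rw [map_mul, eval_C, eval_X, smul_eq_mul, mul_comm]

variable {G : Type*} [Group G]
  {σ : G →* (MvPolynomial (Fin n) K ≃ₐ[K] MvPolynomial (Fin n) K)}
  {φ : G →* ((Fin n → K) ≃ₗ[K] (Fin n → K))}

theorem isHomogeneous_map_X [CharZero K] (hσ : ∀ g f w, eval w (σ g f) = eval (φ g⁻¹ w) f)
    (g : G) (j : Fin n) : (σ g (X j)).IsHomogeneous 1 := by
  obtain ⟨l, hl, heval⟩ := exists_isHomogeneous_one_eval_eq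
    (LinearMap.proj j ∘ₗ (φ g⁻¹).toLinearMap)
  have : σ g (X j) = l := MvPolynomial.funext fun w => by rw [heval, hσ]; simp
  rwa [this]

theorem actsAsReflection_inv [CharZero K] (hσ : ∀ g f w, eval w (σ g f) = eval (φ g⁻¹ w) f)
    {g : G} (hg : Module.finrank K (LinearMap.ker ((φ g).toLinearMap - LinearMap.id)) + 1 = n) :
    ActsAsReflection σ g⁻¹ := by
  set T := (φ g).toLinearMap - LinearMap.id with hT
  have hrank : Module.finrank K (LinearMap.range T) = 1 := by
    have := LinearMap.finrank_range_add_finrank_ker T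
    rw [Module.finrank_fin_fun] at this
    omega
  obtain ⟨⟨u, w₀, hw₀⟩, hu0, hu⟩ := finrank_eq_one_iff'.mp hrank
  obtain ⟨j₀, hj₀⟩ := Function.ne_iff.mp (fun h : u = 0 => hu0 (Subtype.ext h))
  rw [Pi.zero_apply] at hj₀
  obtain ⟨l, hl, heval⟩ := exists_isHomogeneous_one_eval_eq (LinearMap.proj j₀ ∘ₗ T)
  refine ⟨l, hl, ?_, ?_⟩
  · rintro rfl
    have := heval w₀
    simp [hw₀] at this
    exact hj₀ this.symm
  · have hX : ∀ j, l ∣ σ g⁻¹ (X j) - X j := by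
      intro j
      refine ⟨C (u j / u j₀), MvPolynomial.funext fun w => ?_⟩
      obtain ⟨c, hc⟩ := hu ⟨T w, w, rfl⟩
      have hc' : T w = c • u := (congrArg Subtype.val hc).symm
      have hTw : eval w (σ g⁻¹ (X j) - X j) = T w j := by
        rw [map_sub, hσ, inv_inv, eval_X, eval_X]
        rfl
      rw [hTw, map_mul, heval, eval_C, LinearMap.comp_apply, hc', LinearMap.proj_apply]
      simp only [Pi.smul_apply, smul_eq_mul]
      field_simp
    intro f
    induction f using MvPolynomial.induction_on with
    | C a =>
      rw [← algebraMap_eq, AlgEquiv.commutes, sub_self]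
      exact dvd_zero l
    | add p q hp hq =>
      rw [map_add, add_sub_add_comm]
      exact dvd_add hp hq
    | mul_X p j hp =>
      have : σ g⁻¹ (p * X j) - p * X j =
          (σ g⁻¹ p - p) * X j + σ g⁻¹ p * (σ g⁻¹ (X j) - X j) := by
        rw [map_mul]; ring
      rw [this]
      exact dvd_add (hp.mul_right _) ((hX j).mul_left _)

theorem closure_actsAsReflection_eq_top [CharZero K]
    (hσ : ∀ g f w, eval w (σ g f) = eval (φ g⁻¹ w) f)
    (hrefl : Subgroup.closure {g : G |
      Module.finrank K (LinearMap.ker ((φ g).toLinearMap - LinearMap.id)) + 1 = n} = ⊤) :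
    Subgroup.closure {g | ActsAsReflection σ g} = ⊤ := by
  rw [eq_top_iff, ← hrefl, Subgroup.closure_le]
  intro g hg
  have := Subgroup.subset_closure (k := {g | ActsAsReflection σ g}) (actsAsReflection_inv hσ hg)
  simpa using inv_mem this

/-- A nonzero polynomial is nonzero at some point with trivial stabiliser. -/
theorem exists_eval_ne_zero_and_injective [Finite G] [CharZero K]
    (hσ : ∀ g f w, eval w (σ g f) = eval (φ g⁻¹ w) f) (hφ : Function.Injective φ)
    {f : MvPolynomial (Fin n) K} (hf : f ≠ 0) :
    ∃ w, eval w f ≠ 0 ∧ Function.Injective fun g => φ g w := by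
  classical
  have := Fintype.ofFinite G
  have hsep : ∀ g : G, ∃ l : MvPolynomial (Fin n) K,
      l ≠ 0 ∧ (g ≠ 1 → ∀ w, eval w l ≠ 0 → φ g w ≠ w) := by
    intro g
    by_cases hg : g = 1
    · exact ⟨1, one_ne_zero, fun h => absurd hg h⟩
    obtain ⟨w, hw⟩ : ∃ w, φ g w ≠ w := by
      by_contra! h
      exact hg (hφ (by rw [map_one]; exact LinearEquiv.ext h))
    obtain ⟨j, hj⟩ := Function.ne_iff.mp hw
    have heval : ∀ w, eval w (σ g⁻¹ (X j) - X j) = φ g w j - w j := fun w => by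
      rw [map_sub, hσ, inv_inv, eval_X, eval_X]
    refine ⟨σ g⁻¹ (X j) - X j, fun h0 => ?_, fun _ w' hw' h => ?_⟩
    · have := heval w
      rw [h0, map_zero] at this
      exact hj (sub_eq_zero.mp this.symm)
    · rw [heval, h, sub_self] at hw'
      exact hw' rfl
  choose l hl0 hl using hsep
  have hne : f * ∏ g, l g ≠ 0 := mul_ne_zero hf (Finset.prod_ne_zero_iff.mpr fun g _ => hl0 g)
  obtain ⟨w, hw⟩ : ∃ w, eval w (f * ∏ g, l g) ≠ 0 := by
    by_contra! h
    exact hne (MvPolynomial.funext fun w => by rw [h, map_zero])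
  rw [map_mul, map_prod] at hw
  refine ⟨w, left_ne_zero_of_mul hw, fun x y hxy => ?_⟩
  by_contra hne
  refine hl (y⁻¹ * x) (fun h => hne (inv_mul_eq_one.mp h).symm) w
    (Finset.prod_ne_zero_iff.mp (right_ne_zero_of_mul hw) _ (Finset.mem_univ _)) ?_
  have hxy' : φ x w = φ y w := hxy
  rw [map_mul, LinearEquiv.mul_apply, hxy', ← LinearEquiv.mul_apply, ← map_mul, inv_mul_cancel,
    map_one]
  rfl

/-- The polynomial ring has rank at most `|G|` over the invariants. -/
theorem card_le_of_independent_over_invariants [Fintype G] [CharZero K]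
    (hσ : ∀ g f w, eval w (σ g f) = eval (φ g⁻¹ w) f) (hφ : Function.Injective φ)
    {ι : Type*} [Fintype ι] {b : ι → MvPolynomial (Fin n) K}
    (hb : ∀ s : ι → MvPolynomial (Fin n) K, (∀ i, s i ∈ polynomialInvariants σ) →
      ∑ i, s i * b i = 0 → ∀ i, s i = 0) :
    Fintype.card ι ≤ Fintype.card G := by
  classical
  set L : (ι → MvPolynomial (Fin n) K) →ₗ[MvPolynomial (Fin n) K] (G → MvPolynomial (Fin n) K) :=
    LinearMap.pi fun g => ∑ i, (σ g (b i)) • LinearMap.proj i with hL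
  have hLapp : ∀ a g, L a g = ∑ i, a i * σ g (b i) := fun a g => by
    simp [hL, mul_comm]
  refine card_le_of_injective _ L ((injective_iff_map_eq_zero L).mpr fun a ha => ?_)
  by_contra hne
  obtain ⟨i₀, hi₀⟩ := Function.ne_iff.mp hne
  obtain ⟨w, hw, hinj⟩ := exists_eval_ne_zero_and_injective hσ hφ hi₀
  obtain ⟨c, hc⟩ := exists_eval_eq_of_injective hinj (Pi.single 1 1)
  have hzero := hb (fun i => ∑ g, σ g (c * a i)) (fun i => sum_map_mem_polynomialInvariants _) ?_ i₀
  · have := congrArg (eval w) hzero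
    rw [map_sum, map_zero, Finset.sum_eq_single 1] at this
    · rw [hσ, inv_one, map_mul, hc, Pi.single_eq_same, one_mul, map_one] at this
      exact hw this
    · intro g _ hg
      rw [hσ, map_mul, hc, Pi.single_eq_of_ne (inv_ne_one.mpr hg), zero_mul]
    · simp
  · simp_rw [Finset.sum_mul]
    rw [Finset.sum_comm]
    refine Finset.sum_eq_zero fun g _ => ?_
    have h1 := congrArg (σ g) (congrFun ha g⁻¹)
    rw [hLapp, map_sum, Pi.zero_apply, map_zero] at h1
    simp_rw [map_mul, mul_assoc]
    rw [← Finset.mul_sum]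
    convert mul_zero _
    rw [← h1]
    refine Finset.sum_congr rfl fun i _ => ?_
    rw [map_mul]
    congr 1
    simp

/-- **Chevalley's theorem**: for a reflection group the polynomial ring is generated by at most
`|G|` elements as a module over the invariants. -/
theorem exists_card_le_span_polynomialInvariants_eq_top [Fintype G] [CharZero K]
    (hσ : ∀ g f w, eval w (σ g f) = eval (φ g⁻¹ w) f) (hφ : Function.Injective φ)
    (hrefl : Subgroup.closure {g : G |
      Module.finrank K (LinearMap.ker ((φ g).toLinearMap - LinearMap.id)) + 1 = n} = ⊤) :
    ∃ t : Finset (MvPolynomial (Fin n) K), t.card ≤ Fintype.card G ∧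
      Submodule.span (polynomialInvariants σ) (t : Set (MvPolynomial (Fin n) K)) = ⊤ := by
  classical
  have hlin := isHomogeneous_map_X hσ
  have hgen := closure_actsAsReflection_eq_top hσ hrefl
  obtain ⟨κ, a, -, hspan, hind⟩ := exists_linearIndependent' K
    fun m : Fin n →₀ ℕ => Ideal.Quotient.mk (fibreIdeal σ 0) (monomial m 1)
  set b : κ → MvPolynomial (Fin n) K := fun i => monomial (a i) 1 with hb
  have hhom : ∀ i, (b i).IsHomogeneous (a i).degree := fun i => isHomogeneous_monomial _ rfl
  have hbound : ∀ u : Finset κ, u.card ≤ Fintype.card G := by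
    intro u
    rw [← Fintype.card_coe]
    refine card_le_of_independent_over_invariants hσ hφ (b := fun i : u => b i)
      fun s hs hsum i => ?_
    exact eq_zero_of_sum_invariant_mul_eq_zero hlin hgen (b := fun i : u => b i)
      (fun i => hhom i) (hind.comp _ Subtype.val_injective) Finset.univ (fun i _ => hs i) hsum i
      (Finset.mem_univ i)
  have hfin : Finite κ := by
    by_contra h
    rw [not_finite_iff_infinite] at h
    obtain ⟨u, hu⟩ := Infinite.exists_subset_card_eq κ (Fintype.card G + 1)
    have := hbound u
    omega
  have := Fintype.ofFinite κ
  refine ⟨Finset.univ.image b, Finset.card_image_le.trans (hbound _), ?_⟩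
  rw [Finset.coe_image, Finset.coe_univ, Set.image_univ]
  refine span_polynomialInvariants_eq_top hlin hhom ?_
  refine hspan.trans ?_
  have h1 : (fun m : Fin n →₀ ℕ => Ideal.Quotient.mk (fibreIdeal σ 0) (monomial m 1)) =
      (Ideal.Quotient.mkₐ K (fibreIdeal σ 0)).toLinearMap ∘ basisMonomials (Fin n) K := by
    ext m
    simp
  rw [h1, Set.range_comp, ← Submodule.map_span, (basisMonomials (Fin n) K).span_eq,
    Submodule.map_top, LinearMap.range_eq_top]
  exact Ideal.Quotient.mkₐ_surjective K _

/-- The coordinate ring of a fibre is spanned over `K` by module generators over the invariants. -/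
theorem finite_quotient_fibreIdeal_and_finrank_le {t : Finset (MvPolynomial (Fin n) K)}
    (ht : Submodule.span (polynomialInvariants σ) (t : Set (MvPolynomial (Fin n) K)) = ⊤)
    (v : Fin n → K) :
    Module.Finite K (MvPolynomial (Fin n) K ⧸ fibreIdeal σ v) ∧
      Module.finrank K (MvPolynomial (Fin n) K ⧸ fibreIdeal σ v) ≤ t.card := by
  classical
  set q := Ideal.Quotient.mkₐ K (fibreIdeal σ v)
  have hspan : Submodule.span K (t.image q : Set (MvPolynomial (Fin n) K ⧸ fibreIdeal σ v)) = ⊤ := by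
    refine eq_top_iff.mpr fun x _ => ?_
    obtain ⟨f, rfl⟩ := Ideal.Quotient.mkₐ_surjective K (fibreIdeal σ v) x
    have hf : f ∈ Submodule.span (polynomialInvariants σ) (t : Set (MvPolynomial (Fin n) K)) :=
      ht ▸ Submodule.mem_top
    induction hf using Submodule.span_induction with
    | zero => simp
    | add x y _ _ hx hy =>
      rw [map_add]
      exact add_mem (hx trivial) (hy trivial)
    | mem x hx => exact Submodule.subset_span (by simpa using ⟨x, hx, rfl⟩)
    | smul s x _ hx =>
      have h : q (s • x) = eval v (s : MvPolynomial (Fin n) K) • q x := by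
        have hs : q s = q (C (eval v (s : MvPolynomial (Fin n) K))) :=
          Ideal.Quotient.eq.mpr (sub_C_mem_fibreIdeal s.2 v)
        rw [Subalgebra.smul_def, smul_eq_mul, map_mul, hs, ← map_mul, ← smul_eq_C_mul, map_smul]
      change q (s • x) ∈ _
      rw [h]
      exact Submodule.smul_mem _ _ (hx trivial)
  exact ⟨⟨⟨_, hspan⟩⟩, by
    rw [← finrank_top, ← hspan]
    exact (finrank_span_finset_le_card _).trans Finset.card_image_le⟩

end

section

variable {K : Type*} [Field K] {n : ℕ} {G : Type*} [Group G]
  {σ : G →* (MvPolynomial (Fin n) K ≃ₐ[K] MvPolynomial (Fin n) K)}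
  {φ : G →* ((Fin n → K) ≃ₗ[K] (Fin n → K))}

theorem exists_sub_C_pow_mem_stalkAtIdeal_fibreIdeal [Finite G] (v p : Fin n → K)
    (x : MvPolynomial (Fin n) K) :
    ∃ m : ℕ, (x - C (eval p x)) ^ m ∈ stalkAtIdeal K n p (fibreIdeal σ v) := by
  have := Fintype.ofFinite G
  set F : Polynomial (MvPolynomial (Fin n) K) := ∏ g, (Polynomial.X - Polynomial.C (σ g x)) with hF
  have hmonic : F.Monic := Polynomial.monic_prod_of_monic _ _ fun g _ => Polynomial.monic_X_sub_C _
  have hcoeff : ∀ k, F.coeff k ∈ polynomialInvariants σ := by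
    intro k h
    have hmap : F.map (σ h : MvPolynomial (Fin n) K →+* MvPolynomial (Fin n) K) = F := by
      rw [hF, Polynomial.map_prod]
      exact Fintype.prod_equiv (Equiv.mulLeft h) _ _ fun g => by
        simp [map_mul, AlgEquiv.mul_apply]
    conv_rhs => rw [← hmap, Polynomial.coeff_map]
    rfl
  have hroot : F.eval x = 0 := by
    rw [hF, Polynomial.eval_prod]
    exact Finset.prod_eq_zero (Finset.mem_univ 1) (by simp)
  set q := Ideal.Quotient.mk (fibreIdeal σ v)
  set F₀ : Polynomial K := F.map (eval v) with hF₀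
  have hmap : (F₀.map C).map q = F.map q := by
    ext k
    simp only [hF₀, Polynomial.coeff_map]
    exact (Ideal.Quotient.eq.mpr (sub_C_mem_fibreIdeal (hcoeff k) v)).symm
  have hmem : (F₀.map C).eval x ∈ fibreIdeal σ v := by
    rw [← Ideal.Quotient.eq_zero_iff_mem]
    change q _ = 0
    rw [← Polynomial.eval_map_apply, hmap, Polynomial.eval_map_apply, hroot, map_zero]
  obtain ⟨Q, hQ, hndvd⟩ := Polynomial.exists_eq_pow_rootMultiplicity_mul_and_not_dvd F₀
    (hmonic.map _).ne_zero (eval p x)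
  refine ⟨F₀.rootMultiplicity (eval p x), (Q.map C).eval x, ?_, ?_⟩
  · rw [← Polynomial.eval_map_apply, Polynomial.map_map]
    have : (eval p).comp (C (σ := Fin n) (R := K)) = RingHom.id K := by ext; simp
    rwa [this, Polynomial.map_id, ne_eq, ← Polynomial.IsRoot.def, ← Polynomial.dvd_iff_isRoot]
  · rw [hQ] at hmem
    simpa [mul_comm] using hmem

theorem isCoprime_stalkAtIdeal_fibreIdeal [Finite G] (v : Fin n → K) {p q : Fin n → K}
    (hpq : p ≠ q) : IsCoprime (stalkAtIdeal K n p (fibreIdeal σ v))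
      (stalkAtIdeal K n q (fibreIdeal σ v)) := by
  obtain ⟨j, hj⟩ := Function.ne_iff.mp hpq
  obtain ⟨a, ha⟩ := exists_sub_C_pow_mem_stalkAtIdeal_fibreIdeal (σ := σ) v p (X j)
  obtain ⟨b, hb⟩ := exists_sub_C_pow_mem_stalkAtIdeal_fibreIdeal (σ := σ) v q (X j)
  rw [eval_X] at ha hb
  have hcop : IsCoprime (X j - C (p j) : MvPolynomial (Fin n) K) (X j - C (q j)) := by
    refine ⟨-C (p j - q j)⁻¹, C (p j - q j)⁻¹, ?_⟩
    have h1 : -C (p j - q j)⁻¹ * (X j - C (p j)) + C (p j - q j)⁻¹ * (X j - C (q j)) =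
        (C ((p j - q j)⁻¹ * (p j - q j)) : MvPolynomial (Fin n) K) := by
      rw [map_mul, map_sub]; ring
    rw [h1, inv_mul_cancel₀ (sub_ne_zero.mpr hj), map_one]
  obtain ⟨c, d, hcd⟩ := hcop.pow (m := a) (n := b)
  exact Ideal.isCoprime_iff_exists.mpr
    ⟨_, Ideal.mul_mem_left _ c ha, _, Ideal.mul_mem_left _ d hb, hcd⟩

theorem map_mem_stalkAtIdeal_fibreIdeal (hσ : ∀ g f w, eval w (σ g f) = eval (φ g⁻¹ w) f)
    {v p : Fin n → K} (g : G) {f : MvPolynomial (Fin n) K}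
    (hf : f ∈ stalkAtIdeal K n p (fibreIdeal σ v)) :
    σ g f ∈ stalkAtIdeal K n (φ g p) (fibreIdeal σ v) := by
  obtain ⟨t, ht, htf⟩ := hf
  refine ⟨σ g t, ?_, ?_⟩
  · rwa [hσ, ← LinearEquiv.mul_apply, ← map_mul, inv_mul_cancel, map_one, LinearEquiv.coe_one, id]
  · rw [← map_mul]
    exact map_mem_fibreIdeal g htf

theorem stalkAtIdeal_fibreIdeal_eq_map (hσ : ∀ g f w, eval w (σ g f) = eval (φ g⁻¹ w) f)
    (v p : Fin n → K) (g : G) : stalkAtIdeal K n (φ g p) (fibreIdeal σ v) =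
      (stalkAtIdeal K n p (fibreIdeal σ v)).map (σ g : _ →+* MvPolynomial (Fin n) K) := by
  refine le_antisymm (fun f hf => ?_) (Ideal.map_le_iff_le_comap.mpr fun f hf =>
    map_mem_stalkAtIdeal_fibreIdeal hσ g hf)
  have h := map_mem_stalkAtIdeal_fibreIdeal hσ g⁻¹ hf
  rw [← LinearEquiv.mul_apply, ← map_mul, inv_mul_cancel, map_one, LinearEquiv.coe_one, id] at h
  have := Ideal.mem_map_of_mem (σ g : _ →+* MvPolynomial (Fin n) K) h
  simpa using this

theorem le_stalkAtIdeal (v : Fin n → K) (J : Ideal (MvPolynomial (Fin n) K)) :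
    J ≤ stalkAtIdeal K n v J := fun f hf => ⟨1, by simp, by simpa using hf⟩

/-- The local ring of the fibre at `v` has dimension at most `|G_v|` whenever the coordinate ring
of the fibre has dimension at most `|G|`. -/
theorem finrank_quotient_stalkAtIdeal_le [Finite G]
    (hσ : ∀ g f w, eval w (σ g f) = eval (φ g⁻¹ w) f) (v : Fin n → K)
    [Module.Finite K (MvPolynomial (Fin n) K ⧸ fibreIdeal σ v)]
    (hle : Module.finrank K (MvPolynomial (Fin n) K ⧸ fibreIdeal σ v) ≤ Nat.card G) :
    Module.finrank K (MvPolynomial (Fin n) K ⧸ stalkAtIdeal K n v (fibreIdeal σ v)) ≤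
      Nat.card (ptStabilizer φ v) := by
  classical
  have := Fintype.ofFinite (G ⧸ ptStabilizer φ v)
  let p : G ⧸ ptStabilizer φ v → Fin n → K := fun i => φ i.out v
  have hp : Function.Injective p := by
    intro i j hij
    rw [← Quotient.out_eq' i, ← Quotient.out_eq' j]
    refine QuotientGroup.eq.mpr ?_
    change φ (i.out⁻¹ * j.out) v = v
    have hij' : φ j.out v = φ i.out v := hij.symm
    rw [map_mul, LinearEquiv.mul_apply, hij', ← LinearEquiv.mul_apply, ← map_mul, inv_mul_cancel,
      map_one, LinearEquiv.coe_one, id]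
  let J : G ⧸ ptStabilizer φ v → Ideal (MvPolynomial (Fin n) K) :=
    fun i => stalkAtIdeal K n (p i) (fibreIdeal σ v)
  let L : (MvPolynomial (Fin n) K ⧸ fibreIdeal σ v) →ₗ[K] ∀ i, MvPolynomial (Fin n) K ⧸ J i :=
    LinearMap.pi fun i =>
      (Ideal.Quotient.factorₐ K (le_stalkAtIdeal (p i) (fibreIdeal σ v))).toLinearMap
  have hL : Function.Surjective L := by
    intro y
    obtain ⟨r, hr⟩ := Ideal.pi_quotient_surjective (I := J)
      (fun i j hij => isCoprime_stalkAtIdeal_fibreIdeal v (hp.ne hij)) y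
    exact ⟨Ideal.Quotient.mk _ r, funext fun i => hr i⟩
  have hfinJ : ∀ i, Module.Finite K (MvPolynomial (Fin n) K ⧸ J i) := fun i =>
    Module.Finite.of_surjective (LinearMap.proj i ∘ₗ L) ((Function.surjective_eval i).comp hL)
  have hdim : ∀ i, Module.finrank K (MvPolynomial (Fin n) K ⧸ J i) =
      Module.finrank K (MvPolynomial (Fin n) K ⧸ stalkAtIdeal K n v (fibreIdeal σ v)) := fun i =>
    (Ideal.quotientEquivAlg _ _ (σ i.out)
      (stalkAtIdeal_fibreIdeal_eq_map hσ v v i.out)).toLinearEquiv.finrank_eq.symm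
  have h := (LinearMap.finrank_le_finrank_of_surjective hL).trans hle
  rw [Module.finrank_pi_fintype, Finset.sum_congr rfl fun i _ => hdim i, Finset.sum_const,
    Finset.card_univ, smul_eq_mul, ← Nat.card_eq_fintype_card,
    Subgroup.card_eq_card_quotient_mul_card_subgroup (ptStabilizer φ v)] at h
  exact Nat.le_of_mul_le_mul_left h Nat.card_pos

/-- The restriction of the action to the stabiliser of `v`. -/
abbrev stabilizerAction (σ : G →* (MvPolynomial (Fin n) K ≃ₐ[K] MvPolynomial (Fin n) K))
    (φ : G →* ((Fin n → K) ≃ₗ[K] (Fin n → K))) (v : Fin n → K) :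
    ptStabilizer φ v →* (MvPolynomial (Fin n) K ≃ₐ[K] MvPolynomial (Fin n) K) :=
  σ.comp (ptStabilizer φ v).subtype

/-- The stalk ideal at `v` of the fibre of `V → V/G` is contained in the ideal of the fibre of
`V → V/G_v`. -/
theorem stalkAtIdeal_fibreIdeal_le [Finite G]
    (hσ : ∀ g f w, eval w (σ g f) = eval (φ g⁻¹ w) f) (v : Fin n → K) :
    stalkAtIdeal K n v (fibreIdeal σ v) ≤ fibreIdeal (stabilizerAction σ φ v) v := by
  classical
  have := Fintype.ofFinite (ptStabilizer φ v)
  rintro f ⟨t, ht, htf⟩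
  have hsub : fibreIdeal σ v ≤ fibreIdeal (stabilizerAction σ φ v) v :=
    Ideal.span_mono fun x hx => ⟨fun h => hx.1 h, hx.2⟩
  set N := ∏ h, stabilizerAction σ φ v h t with hN
  have hNf : N * f ∈ fibreIdeal (stabilizerAction σ φ v) v := by
    obtain ⟨c, hc⟩ : t ∣ N := by
      have := Finset.dvd_prod_of_mem (fun h => stabilizerAction σ φ v h t) (Finset.mem_univ 1)
      rwa [map_one, AlgEquiv.one_apply] at this
    rw [hc, mul_right_comm]
    exact Ideal.mul_mem_right _ _ (hsub htf)
  have hNinv : N - C (eval v N) ∈ fibreIdeal (stabilizerAction σ φ v) v :=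
    sub_C_mem_fibreIdeal (prod_map_mem_polynomialInvariants t) v
  have hNv : eval v N ≠ 0 := by
    rw [hN, map_prod, Finset.prod_ne_zero_iff]
    intro h _
    have hv : φ (h : G)⁻¹ v = v := (h⁻¹).2
    change eval v (σ h t) ≠ 0
    rwa [hσ, hv]
  have h1 := sub_mem hNf (Ideal.mul_mem_right f _ hNinv)
  rw [← sub_mul, sub_sub_cancel] at h1
  have h2 := Ideal.mul_mem_left _ (C (eval v N)⁻¹) h1
  rwa [← mul_assoc, ← map_mul, inv_mul_cancel₀ hNv, map_one, one_mul] at h2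

/-- Nakayama's lemma for a submodule that spans modulo an ideal. -/
theorem exists_sub_one_mem_and_smul_mem_of_sup_smul_top {A M : Type*} [CommRing A]
    [AddCommGroup M] [Module A M] [Module.Finite A M] (m : Ideal A) (N : Submodule A M)
    (hN : N ⊔ m • ⊤ = ⊤) : ∃ r : A, r - 1 ∈ m ∧ ∀ x : M, r • x ∈ N := by
  obtain ⟨r, hr, hrM⟩ := Submodule.exists_sub_one_mem_and_smul_eq_zero_of_fg_of_le_smul m
    (⊤ : Submodule A (M ⧸ N)) Module.Finite.fg_top (by
      have h := congrArg (Submodule.map N.mkQ) hN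
      rw [Submodule.map_sup, Submodule.map_smul'', Submodule.mkQ_map_self, bot_sup_eq,
        Submodule.map_top, Submodule.range_mkQ] at h
      exact h.ge)
  exact ⟨r, hr, fun x => (Submodule.Quotient.mk_eq_zero N).mp (hrM (N.mkQ x) trivial)⟩

/-- Polynomials that represent all classes on the fibre through `v` generate the polynomial ring
over the invariants up to a nonzero invariant denominator. -/
theorem exists_invariant_mul_mem_span [Module.Finite (polynomialInvariants σ)
    (MvPolynomial (Fin n) K)] (v : Fin n → K) {U : Set (MvPolynomial (Fin n) K)}
    (hU : ∀ f, ∃ u ∈ U, f - u ∈ fibreIdeal σ v) :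
    ∃ r ∈ polynomialInvariants σ, r ≠ 0 ∧
      ∀ f, r * f ∈ Submodule.span (polynomialInvariants σ) U := by
  let m : Ideal (polynomialInvariants σ) :=
    RingHom.ker ((eval v).comp (polynomialInvariants σ).val.toRingHom)
  have hideal : ∀ x ∈ fibreIdeal σ v, ∀ h : MvPolynomial (Fin n) K, h * x ∈
      m • (⊤ : Submodule (polynomialInvariants σ) (MvPolynomial (Fin n) K)) := by
    intro x hx
    induction hx using Submodule.span_induction with
    | zero => simp
    | add x y _ _ hx hy => exact fun h => by rw [mul_add]; exact add_mem (hx h) (hy h)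
    | smul a x _ hx => exact fun h => by rw [smul_eq_mul, ← mul_assoc]; exact hx _
    | mem s hs =>
      intro h
      have hsm : (⟨s, hs.1⟩ : polynomialInvariants σ) ∈ m := hs.2
      have hsh : h * s = (⟨s, hs.1⟩ : polynomialInvariants σ) • h := by
        rw [Subalgebra.smul_def, smul_eq_mul, mul_comm]
      rw [hsh]
      exact Submodule.smul_mem_smul hsm Submodule.mem_top
  obtain ⟨r, hr, hrM⟩ := exists_sub_one_mem_and_smul_mem_of_sup_smul_top m
    (Submodule.span (polynomialInvariants σ) U) (eq_top_iff.mpr fun f _ => by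
      obtain ⟨u, hu, hfu⟩ := hU f
      have hm := hideal _ hfu 1
      rw [one_mul] at hm
      have hsum := Submodule.add_mem_sup
        (Submodule.subset_span (R := polynomialInvariants σ) hu) hm
      rwa [add_sub_cancel] at hsum)
  refine ⟨r, r.2, fun h0 => ?_, fun f => ?_⟩
  swap
  · have hf := hrM f
    rwa [Subalgebra.smul_def, smul_eq_mul] at hf
  have hr' : eval v ((r : MvPolynomial (Fin n) K) - 1) = 0 := hr
  simp [h0] at hr'

/-- The polynomial ring is finite over every subalgebra of invariants that contains one over
which it is finite. -/
theorem finite_polynomialInvariants_of_le {H : Type*} [Group H]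
    {τ : H →* (MvPolynomial (Fin n) K ≃ₐ[K] MvPolynomial (Fin n) K)}
    (hle : polynomialInvariants σ ≤ polynomialInvariants τ)
    {t : Finset (MvPolynomial (Fin n) K)}
    (ht : Submodule.span (polynomialInvariants σ) (t : Set (MvPolynomial (Fin n) K)) = ⊤) :
    Module.Finite (polynomialInvariants τ) (MvPolynomial (Fin n) K) := by
  refine ⟨⟨t, eq_top_iff.mpr fun f _ => ?_⟩⟩
  have hf : f ∈ Submodule.span (polynomialInvariants σ) (t : Set (MvPolynomial (Fin n) K)) :=
    ht ▸ Submodule.mem_top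
  clear ht
  induction hf using Submodule.span_induction with
  | zero => exact zero_mem _
  | mem x hx => exact Submodule.subset_span hx
  | add x y _ _ hx hy => exact add_mem (hx trivial) (hy trivial)
  | smul s x _ hx =>
    have hsx := Submodule.smul_mem _ (⟨s, hle s.2⟩ : polynomialInvariants τ) (hx trivial)
    rw [Subalgebra.smul_def] at hsx ⊢
    exact hsx

/-- A linear map that vanishes on an ideal factors through the quotient. -/
theorem exists_linearMap_quotient_mk_eq {R M : Type*} [CommRing R] [Algebra K R]
    [AddCommGroup M] [Module K M] (J : Ideal R) (p : R →ₗ[K] M) (hp : ∀ f ∈ J, p f = 0) :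
    ∃ q : (R ⧸ J) →ₗ[K] M, ∀ f, q (Ideal.Quotient.mk J f) = p f :=
  ⟨(J.restrictScalars K).liftQ p hp ∘ₗ
    (Submodule.Quotient.restrictScalarsEquiv K J).symm.toLinearMap, fun _ => rfl⟩

/-- An equivariant projection with kernel a stable ideal. -/
theorem exists_equivariant_projection {H : Type*} [Group H] [Finite H] [CharZero K]
    (τ : H →* (MvPolynomial (Fin n) K ≃ₐ[K] MvPolynomial (Fin n) K))
    {J : Ideal (MvPolynomial (Fin n) K)} (hJ : ∀ h, ∀ f ∈ J, τ h f ∈ J) :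
    ∃ p : MvPolynomial (Fin n) K →ₗ[K] MvPolynomial (Fin n) K,
      (∀ f ∈ J, p f = 0) ∧ (∀ f, f - p f ∈ J) ∧ ∀ h f, p (τ h f) = τ h (p f) := by
  have := Fintype.ofFinite H
  obtain ⟨s, hs⟩ := LinearMap.exists_rightInverse_of_surjective
    (Ideal.Quotient.mkₐ K J).toLinearMap
    (LinearMap.range_eq_top.mpr (Ideal.Quotient.mkₐ_surjective K J))
  set p₀ := s ∘ₗ (Ideal.Quotient.mkₐ K J).toLinearMap
  have hp₀ : ∀ f, f - p₀ f ∈ J := fun f =>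
    Ideal.Quotient.eq.mp (LinearMap.congr_fun hs (Ideal.Quotient.mk J f)).symm
  have hp₀J : ∀ f ∈ J, p₀ f = 0 := fun f hf => by
    change s (Ideal.Quotient.mk J f) = 0
    rw [Ideal.Quotient.eq_zero_iff_mem.mpr hf, map_zero]
  have hcard : (Fintype.card H : K) ≠ 0 := Nat.cast_ne_zero.mpr Fintype.card_ne_zero
  let p : MvPolynomial (Fin n) K →ₗ[K] MvPolynomial (Fin n) K :=
    (Fintype.card H : K)⁻¹ • ∑ h, (τ h).toLinearMap ∘ₗ p₀ ∘ₗ (τ h⁻¹).toLinearMap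
  have hp : ∀ f, p f = (Fintype.card H : K)⁻¹ • ∑ h, τ h (p₀ (τ h⁻¹ f)) := fun f => by
    simp only [p, LinearMap.smul_apply, LinearMap.sum_apply]
    rfl
  refine ⟨p, fun f hf => ?_, fun f => ?_, fun h f => ?_⟩
  · rw [hp, Finset.sum_eq_zero, smul_zero]
    intro h _
    rw [hp₀J _ (hJ _ f hf), map_zero]
  · have h1 : f - p f = (Fintype.card H : K)⁻¹ • ∑ h, τ h (τ h⁻¹ f - p₀ (τ h⁻¹ f)) := by
      have h2 : ∀ h, τ h (τ h⁻¹ f) = f := fun h => by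
        simp
      simp_rw [map_sub, h2, Finset.sum_sub_distrib, smul_sub, Finset.sum_const, Finset.card_univ,
        ← Nat.cast_smul_eq_nsmul K, smul_smul]
      rw [inv_mul_cancel₀ hcard, one_smul, hp]
    rw [h1, smul_eq_C_mul]
    exact Ideal.mul_mem_left _ _ (sum_mem fun h _ => hJ h _ (hp₀ _))
  · rw [hp, hp, map_smul, map_sum]
    congr 1
    refine (Fintype.sum_equiv (Equiv.mulLeft h) _ _ fun k => ?_).symm
    rw [Equiv.coe_mulLeft, map_mul, AlgEquiv.mul_apply, mul_inv_rev, map_mul, AlgEquiv.mul_apply,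
      map_inv_apply_map_apply]

end

section

variable {K : Type*} [Field K] {n : ℕ} {G : Type*} [Group G]
  {σ : G →* (MvPolynomial (Fin n) K ≃ₐ[K] MvPolynomial (Fin n) K)}
  {φ : G →* ((Fin n → K) ≃ₗ[K] (Fin n → K))}

/-- Restriction to a free orbit maps any set of module generators, up to an invariant denominator,
onto a spanning set of the functions on the orbit. -/
theorem surjective_eval_orbit_of_invariant_mul_mem_span [Finite G]
    (hσ : ∀ g f w, eval w (σ g f) = eval (φ g⁻¹ w) f) {w : Fin n → K}
    (hw : Function.Injective fun g => φ g w)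
    (p : MvPolynomial (Fin n) K →ₗ[K] MvPolynomial (Fin n) K)
    {r : MvPolynomial (Fin n) K} (hr : r ∈ polynomialInvariants σ) (hrw : eval w r ≠ 0)
    (hspan : ∀ f, r * f ∈ Submodule.span (polynomialInvariants σ) (Set.range p)) (c : G → K) :
    ∃ f, ∀ g, eval (φ g w) (p f) = c g := by
  have hconst : ∀ s ∈ polynomialInvariants σ, ∀ g, eval (φ g w) s = eval w s := fun s hs g => by
    have := hσ g⁻¹ s w
    rw [hs g⁻¹, inv_inv] at this
    exact this.symm
  have hmem : ∀ x ∈ Submodule.span (polynomialInvariants σ) (Set.range p),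
      ∃ f, ∀ g, eval (φ g w) (p f) = eval (φ g w) x := by
    intro x hx
    induction hx using Submodule.span_induction with
    | zero => exact ⟨0, by simp⟩
    | mem x hx =>
      obtain ⟨f, rfl⟩ := hx
      exact ⟨f, fun g => rfl⟩
    | add x y _ _ hx hy =>
      obtain ⟨f, hf⟩ := hx
      obtain ⟨f', hf'⟩ := hy
      exact ⟨f + f', fun g => by simp [hf, hf']⟩
    | smul s x _ hx =>
      obtain ⟨f, hf⟩ := hx
      refine ⟨eval w (s : MvPolynomial (Fin n) K) • f, fun g => ?_⟩
      rw [Subalgebra.smul_def, smul_eq_mul, map_mul, hconst s s.2, map_smul, smul_eval, hf]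
  obtain ⟨y, hy⟩ := exists_eval_eq_of_injective hw c
  obtain ⟨f, hf⟩ := hmem _ (hspan y)
  refine ⟨(eval w r)⁻¹ • f, fun g => ?_⟩
  rw [map_smul, smul_eval, hf, map_mul, hconst r hr, hy, inv_mul_cancel_left₀ hrw]

end

/-!
STATEMENT 3: let `G ≤ GL(V)` be a finite reflection group (a finite group acting
faithfully and linearly on `V = Kⁿ`, generated by elements whose fixed space is a
hyperplane), over an algebraically closed field `K` of characteristic zero.  For `v ∈ V`
let `η = π⁻¹(π(v))` be the scheme-theoretic fibre of the quotient morphism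
`π : V → V/G`, cut out by the ideal `I` generated by the `G`-invariant polynomials
vanishing at `v`.  Then the stalk `O_{η,v}` (the quotient of `K[x₁,…,xₙ]` by the stalk
ideal of `I` at `v`) is isomorphic, as a representation of the stabiliser `G_v`, to the
regular representation `K⟨G_v⟩` (realised as the functions `G_v → K` with the regular
action).  Here `σ` is the induced action of `G` on the polynomial ring, determined by
`(σ g f)(w) = f(φ(g⁻¹) w)`.
-/
theorem stalk_of_quotient_fibre_regular_rep
    {K : Type*} [Field K] [IsAlgClosed K] [CharZero K] (nn : ℕ)
    {G : Type*} [Group G] [Finite G]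
    (φ : G →* ((Fin nn → K) ≃ₗ[K] (Fin nn → K)))
    (hfaithful : Function.Injective φ)
    -- `G` is a reflection group: it is generated by its reflections
    (hrefl : Subgroup.closure {g : G |
      Module.finrank K ↥(LinearMap.ker ((φ g).toLinearMap - LinearMap.id)) + 1 = nn} = ⊤)
    -- the action of `G` on the polynomial functions on `V`
    (σ : G →* (MvPolynomial (Fin nn) K ≃ₐ[K] MvPolynomial (Fin nn) K))
    (hσ : ∀ (g : G) (f : MvPolynomial (Fin nn) K) (w : Fin nn → K),
      eval w (σ g f) = eval (φ g⁻¹ w) f)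
    (v : Fin nn → K) :
    ∃ E : (MvPolynomial (Fin nn) K ⧸
        stalkAtIdeal K nn v
          (Ideal.span {f : MvPolynomial (Fin nn) K |
            (∀ g : G, σ g f = f) ∧ eval v f = 0})) ≃ₗ[K]
      (↥(ptStabilizer φ v) → K),
      ∀ (h : ↥(ptStabilizer φ v)) (f : MvPolynomial (Fin nn) K),
        E (Ideal.Quotient.mk _ (σ (↑h) f)) =
          fun x : ↥(ptStabilizer φ v) => E (Ideal.Quotient.mk _ f) (h⁻¹ * x) := by
  have := Fintype.ofFinite G
  have := Fintype.ofFinite (ptStabilizer φ v)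
  change ∃ E : (MvPolynomial (Fin nn) K ⧸ stalkAtIdeal K nn v (fibreIdeal σ v)) ≃ₗ[K]
      (↥(ptStabilizer φ v) → K), ∀ (h : ↥(ptStabilizer φ v)) (f : MvPolynomial (Fin nn) K),
        E (Ideal.Quotient.mk _ (σ (↑h) f)) =
          fun x : ↥(ptStabilizer φ v) => E (Ideal.Quotient.mk _ f) (h⁻¹ * x)
  set J := stalkAtIdeal K nn v (fibreIdeal σ v)
  set τ := stabilizerAction σ φ v
  obtain ⟨t, htcard, htspan⟩ :=
    exists_card_le_span_polynomialInvariants_eq_top hσ hfaithful hrefl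
  obtain ⟨hfin, hfinrank⟩ := finite_quotient_fibreIdeal_and_finrank_le htspan v
  have hdim : Module.finrank K (MvPolynomial (Fin nn) K ⧸ J) ≤ Nat.card (ptStabilizer φ v) :=
    finrank_quotient_stalkAtIdeal_le hσ v
      (hfinrank.trans (htcard.trans_eq Nat.card_eq_fintype_card.symm))
  have hfinJ : Module.Finite K (MvPolynomial (Fin nn) K ⧸ J) :=
    Module.Finite.of_surjective
      (Ideal.Quotient.factorₐ K (le_stalkAtIdeal v (fibreIdeal σ v))).toLinearMap
      (Ideal.Quotient.factor_surjective (le_stalkAtIdeal v (fibreIdeal σ v)))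
  have hfinτ : Module.Finite (polynomialInvariants τ) (MvPolynomial (Fin nn) K) :=
    finite_polynomialInvariants_of_le (σ := σ) (τ := τ) (fun s hs h => hs h) htspan
  have hJstable : ∀ h, ∀ f ∈ J, τ h f ∈ J := fun h f hf => by
    have := map_mem_stalkAtIdeal_fibreIdeal hσ (h : G) hf
    rwa [show φ (h : G) v = v from h.2] at this
  obtain ⟨p, hpJ, hp, hpτ⟩ := exists_equivariant_projection τ hJstable
  obtain ⟨r, hr, hr0, hrspan⟩ := exists_invariant_mul_mem_span (σ := τ) v (U := Set.range p)
    fun f => ⟨p f, ⟨f, rfl⟩, stalkAtIdeal_fibreIdeal_le hσ v (hp f)⟩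
  obtain ⟨w, hrw, hw⟩ := exists_eval_ne_zero_and_injective hσ hfaithful hr0
  have hsurj := surjective_eval_orbit_of_invariant_mul_mem_span
    (φ := φ.comp (ptStabilizer φ v).subtype) (fun g f w => hσ g f w)
    (hw.comp Subtype.val_injective) p hr hrw hrspan
  obtain ⟨q, hq⟩ := exists_linearMap_quotient_mk_eq J p hpJ
  obtain ⟨E₀, hE₀⟩ : ∃ E₀ : (MvPolynomial (Fin nn) K ⧸ J) →ₗ[K] (ptStabilizer φ v → K),
      ∀ f x, E₀ (Ideal.Quotient.mk J f) x = eval (φ (x : G) w) (p f) := by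
    refine ⟨LinearMap.pi fun x => (aeval (φ x w)).toLinearMap ∘ₗ q, fun f x => ?_⟩
    rw [← hq f, ← coe_aeval_eq_eval]
    rfl
  have hE₀surj : Function.Surjective E₀ := fun c => by
    obtain ⟨f, hf⟩ := hsurj c
    refine ⟨Ideal.Quotient.mk J f, funext fun x => ?_⟩
    rw [hE₀, ← hf x, MonoidHom.comp_apply, Subgroup.subtype_apply]
  have hrank : Module.finrank K (MvPolynomial (Fin nn) K ⧸ J) =
      Module.finrank K (ptStabilizer φ v → K) := by
    refine le_antisymm ?_ (LinearMap.finrank_le_finrank_of_surjective hE₀surj)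
    rwa [Module.finrank_fintype_fun_eq_card, ← Nat.card_eq_fintype_card]
  have hE₀bij : Function.Bijective E₀ :=
    ⟨(LinearMap.injective_iff_surjective_of_finrank_eq_finrank hrank).mpr hE₀surj, hE₀surj⟩
  refine ⟨LinearEquiv.ofBijective E₀ hE₀bij, fun h f => funext fun x => ?_⟩
  rw [LinearEquiv.ofBijective_apply, LinearEquiv.ofBijective_apply, hE₀, hE₀]
  have hτ : p (σ h f) = σ h (p f) := hpτ h f
  rw [hτ, hσ, Subgroup.coe_mul, Subgroup.coe_inv, map_mul, LinearEquiv.mul_apply]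

end
end

section
/- Let G = G(m,e,2) with e odd. Then G has exactly 2d one-dimensional representations, namely χ((xy)^c) and χ(A(xy)^c) for c = 0,…,d−1 with A = x^m − y^m; the character group is generated by χ(xy) of order d and χ(A) of order 2, so it is isomorphic to Z/d × Z/2. Moreover G has exactly (m−1)d/2 isomorphism classes of 2-dimensional irreducible representations and no irreducible representations of dimension greater than 2. -/
noncomputable section

variable {K : Type*} [Field K]

/-- The diagonal matrix `D(a,b) = diag(ζ^a, ζ^b)` as an element of `GL₂(K)`. -/
def Dgl (ζ : K) (hζ0 : ζ ≠ 0) (a b : ℤ) : GL (Fin 2) K :=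
  Matrix.GeneralLinearGroup.mkOfDetNeZero (Matrix.diagonal ![ζ ^ a, ζ ^ b]) (by
    simp only [Matrix.det_diagonal, Fin.prod_univ_two]
    simp only [Matrix.cons_val_zero, Matrix.cons_val_one, Matrix.head_cons]
    exact mul_ne_zero (zpow_ne_zero _ hζ0) (zpow_ne_zero _ hζ0))

/-- The permutation matrix `τ` swapping the two coordinates, as an element of `GL₂(K)`. -/
def tauGL (K : Type*) [Field K] : GL (Fin 2) K :=
  Matrix.GeneralLinearGroup.mkOfDetNeZero !![(0 : K), 1; 1, 0] (by
    norm_num [Matrix.det_fin_two_of])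

/-- The imprimitive reflection group `G(m,e,2) ≤ GL₂(K)`, generated by the diagonal
matrices `D(a,b)` with `a + b ≡ 0 mod e` together with `τ`. -/
def Gme2 (ζ : K) (hζ0 : ζ ≠ 0) (e : ℕ) : Subgroup (GL (Fin 2) K) :=
  Subgroup.closure
    (insert (tauGL K) {A | ∃ a b : ℤ, (e : ℤ) ∣ a + b ∧ A = Dgl ζ hζ0 a b})

/-- `D(a,b)` with `e ∣ a + b`, as an element of `G(m,e,2)`. -/
def DG (ζ : K) (hζ0 : ζ ≠ 0) (e : ℕ) (a b : ℤ) (h : (e : ℤ) ∣ a + b) :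
    ↥(Gme2 ζ hζ0 e) :=
  ⟨Dgl ζ hζ0 a b, Subgroup.subset_closure (Set.mem_insert_of_mem _ ⟨a, b, h, rfl⟩)⟩

/-- `τ` as an element of `G(m,e,2)`. -/
def tauG (ζ : K) (hζ0 : ζ ≠ 0) (e : ℕ) : ↥(Gme2 ζ hζ0 e) :=
  ⟨tauGL K, Subgroup.subset_closure (Set.mem_insert _ _)⟩

end

/-- A representation is irreducible if the space is nonzero and has no proper nonzero
invariant subspace. -/
def IsIrreducibleRep {K : Type*} [Field K] {G : Type*} [Monoid G]
    {V : Type*} [AddCommGroup V] [Module K V] (ρ : Representation K G V) : Prop :=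
  (⊥ : Submodule K V) ≠ ⊤ ∧
    ∀ W : Submodule K V, (∀ g : G, W.map (ρ g) ≤ W) → W = ⊥ ∨ W = ⊤

/-- Two representations on the same space are isomorphic if some linear automorphism
intertwines them. -/
def RepIso {K : Type*} [Field K] {G : Type*} [Monoid G]
    {V : Type*} [AddCommGroup V] [Module K V] (ρ₁ ρ₂ : Representation K G V) : Prop :=
  ∃ T : V ≃ₗ[K] V, ∀ (g : G) (w : V), T (ρ₁ g w) = ρ₂ g (T w)

/-- Generators `s`, `t`, `τ` of a group satisfying the relations of `D(1,-1)`, `D(0,e)` and the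
coordinate swap in `G(de,e,2)`. -/
structure ImprimitiveGenerators {G : Type*} [Group G] (d e : ℕ) (s t τ : G) : Prop where
  s_pow : s ^ (d * e) = 1
  t_pow : t ^ d = 1
  commute : s * t = t * s
  tau_mul_tau : τ * τ = 1
  s_tau_s : s * τ * s = τ
  t_tau : t * τ = τ * (s ^ e * t)
  closure_eq_top : Submonoid.closure {s, t, τ} = ⊤

/-- The pair of scalars `x` is the joint eigenvalue of `(ρ s, ρ t)` on some nonzero vector. -/
def HasJointEigenvalue {K : Type*} [Field K] {G : Type*} [Monoid G]
    {V : Type*} [AddCommGroup V] [Module K V] (ρ : Representation K G V) (s t : G)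
    (x : K × K) : Prop :=
  ∃ v : V, v ≠ 0 ∧ ρ s v = x.1 • v ∧ ρ t v = x.2 • v

/-- Isomorphism classes of irreducible representations of `G` on `V`. -/
abbrev IrreducibleClasses (K G V : Type*) [Field K] [Monoid G] [AddCommGroup V] [Module K V] :
    Type _ :=
  Quot (fun ρ₁ ρ₂ : {ρ : Representation K G V // IsIrreducibleRep ρ} => RepIso ρ₁.1 ρ₂.1)

section LinearAlgebra

variable {K : Type*} [Field K] {V : Type*} [AddCommGroup V] [Module K V]

theorem Module.End.exists_eigenvector_of_pow_eq_one [FiniteDimensional K V] [Nontrivial V]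
    {n : ℕ} (hn : 0 < n) {ω : K} (hω : IsPrimitiveRoot ω n) {f : Module.End K V}
    (hf : f ^ n = 1) : ∃ (μ : K) (v : V), v ≠ 0 ∧ f v = μ • v := by
  have hdvd : minpoly K f ∣ Polynomial.X ^ n - Polynomial.C 1 :=
    minpoly.dvd K f (by simp [hf])
  have hsplits : (minpoly K f).Splits :=
    (Polynomial.X_pow_sub_one_splits hω).of_dvd (Polynomial.X_pow_sub_C_ne_zero hn 1) hdvd
  obtain ⟨μ, hμ⟩ := hsplits.exists_eval_eq_zero
    (minpoly.degree_pos (Algebra.IsIntegral.isIntegral f)).ne'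
  obtain ⟨v, hv⟩ := (Module.End.hasEigenvalue_of_isRoot hμ).exists_hasEigenvector
  exact ⟨μ, v, hv.2, hv.apply_eq_smul⟩

theorem pow_eq_one_of_apply_eq_smul {f : Module.End K V} {n : ℕ} (hf : f ^ n = 1) {v : V}
    (hv : v ≠ 0) {μ : K} (h : f v = μ • v) : μ ^ n = 1 := by
  have hpow : ∀ k : ℕ, (f ^ k) v = μ ^ k • v := by
    intro k
    induction k with
    | zero => simp
    | succ k ih => rw [pow_succ', Module.End.mul_apply, ih, map_smul, h, smul_smul, pow_succ]
  have h1 : (μ ^ n - 1) • v = 0 := by rw [sub_smul, ← hpow, hf]; simp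
  exact sub_eq_zero.mp ((smul_eq_zero.mp h1).resolve_right hv)

end LinearAlgebra

namespace ImprimitiveGenerators

variable {K : Type*} [Field K] {G : Type*} [Group G] {d e : ℕ} {s t τ : G}
  {V : Type*} [AddCommGroup V] [Module K V] {ρ : Representation K G V}

theorem exists_jointEigenvalue (h : ImprimitiveGenerators d e s t τ)
    (hd : 0 < d) (he : 0 < e) {ζ : K}
    (hζ : IsPrimitiveRoot ζ (d * e)) [FiniteDimensional K V] [Nontrivial V] :
    ∃ x : K × K, HasJointEigenvalue ρ s t x := by
  have hm : 0 < d * e := Nat.mul_pos hd he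
  obtain ⟨α, u, hu, hsu⟩ := Module.End.exists_eigenvector_of_pow_eq_one hm hζ
    (f := ρ s) (by rw [← map_pow, h.s_pow, map_one])
  have hmaps : ∀ w ∈ Module.End.eigenspace (ρ s) α, ρ t w ∈ Module.End.eigenspace (ρ s) α := by
    intro w hw
    rw [Module.End.mem_eigenspace_iff] at hw ⊢
    rw [← Module.End.mul_apply, ← map_mul, h.commute, map_mul, Module.End.mul_apply, hw, map_smul]
  have hnt : Nontrivial (Module.End.eigenspace (ρ s) α) :=
    ⟨⟨⟨u, Module.End.mem_eigenspace_iff.mpr hsu⟩, 0, fun h0 => hu (congrArg Subtype.val h0)⟩⟩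
  obtain ⟨β, w, hw, htw⟩ := Module.End.exists_eigenvector_of_pow_eq_one hd
    (hζ.pow hm (Nat.mul_comm d e)) (f := (ρ t).restrict hmaps) (by
      rw [Module.End.pow_restrict]
      ext w
      simp [← map_pow, h.t_pow])
  exact ⟨(α, β), w, fun h0 => hw (Subtype.ext h0), Module.End.mem_eigenspace_iff.mp w.2,
    congrArg Subtype.val htw⟩

theorem map_le_of_generators (h : ImprimitiveGenerators d e s t τ)
    {W : Submodule K V} (hs : ∀ w ∈ W, ρ s w ∈ W)
    (ht : ∀ w ∈ W, ρ t w ∈ W) (hτ : ∀ w ∈ W, ρ τ w ∈ W) (g : G) : W.map (ρ g) ≤ W := by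
  suffices H : ∀ w ∈ W, ρ g w ∈ W from Submodule.map_le_iff_le_comap.mpr H
  induction g using Submonoid.dense_induction _ h.closure_eq_top with
  | mem x hx => rcases hx with rfl | rfl | rfl <;> assumption
  | one => simp
  | mul x y hx hy => exact fun w hw => by simpa using hx _ (hy _ hw)

theorem apply_tau_tau (h : ImprimitiveGenerators d e s t τ)
    (v : V) : ρ τ (ρ τ v) = v := by
  rw [← Module.End.mul_apply, ← map_mul, h.tau_mul_tau]; simp

theorem s_apply_tau (h : ImprimitiveGenerators d e s t τ)
    {v : V} {α : K} (hα : α ≠ 0) (hsv : ρ s v = α • v) :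
    ρ s (ρ τ v) = α⁻¹ • ρ τ v := by
  have h1 : ρ s (ρ τ (ρ s v)) = ρ τ v := by
    simp only [← Module.End.mul_apply, ← map_mul, ← mul_assoc, h.s_tau_s]
  rw [hsv, map_smul, map_smul] at h1
  rw [eq_inv_smul_iff₀ hα, h1]

theorem t_apply_tau (h : ImprimitiveGenerators d e s t τ)
    {v : V} {α β : K} (hsv : ρ s v = α • v) (htv : ρ t v = β • v) :
    ρ t (ρ τ v) = (α ^ e * β) • ρ τ v := by
  have hpow : ∀ k : ℕ, ρ (s ^ k) v = α ^ k • v := by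
    intro k
    induction k with
    | zero => simp
    | succ k ih =>
      rw [pow_succ', map_mul, Module.End.mul_apply, ih, map_smul, hsv, smul_smul, pow_succ]
  rw [← Module.End.mul_apply, ← map_mul, h.t_tau, map_mul, map_mul, Module.End.mul_apply,
    Module.End.mul_apply, htv, map_smul, hpow, smul_smul, map_smul, mul_comm]

theorem pow_eq_one_of_hasJointEigenvalue (h : ImprimitiveGenerators d e s t τ)
    {x : K × K} (hx : HasJointEigenvalue ρ s t x) :
    x.1 ^ (d * e) = 1 ∧ x.2 ^ d = 1 := by
  obtain ⟨v, hv, hsv, htv⟩ := hx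
  exact ⟨pow_eq_one_of_apply_eq_smul (by rw [← map_pow, h.s_pow, map_one]) hv hsv,
    pow_eq_one_of_apply_eq_smul (by rw [← map_pow, h.t_pow, map_one]) hv htv⟩

theorem fst_ne_zero_of_hasJointEigenvalue (h : ImprimitiveGenerators d e s t τ)
    (hd : 0 < d) (he : 0 < e) {x : K × K}
    (hx : HasJointEigenvalue ρ s t x) : x.1 ≠ 0 := by
  intro h0
  have h1 := (h.pow_eq_one_of_hasJointEigenvalue hx).1
  rw [h0, zero_pow (Nat.mul_pos hd he).ne'] at h1
  exact zero_ne_one h1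

theorem span_pair_eq_top (h : ImprimitiveGenerators d e s t τ)
    (hρ : IsIrreducibleRep ρ) {v : V} {α β : K} (hv : v ≠ 0) (hα : α ≠ 0)
    (hsv : ρ s v = α • v) (htv : ρ t v = β • v) : Submodule.span K {v, ρ τ v} = ⊤ := by
  have hmem1 : v ∈ Submodule.span K {v, ρ τ v} := Submodule.subset_span (by simp)
  have hmem2 : ρ τ v ∈ Submodule.span K {v, ρ τ v} := Submodule.subset_span (by simp)
  have hstable : ∀ f : Module.End K V, f v ∈ Submodule.span K {v, ρ τ v} →
      f (ρ τ v) ∈ Submodule.span K {v, ρ τ v} →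
      ∀ w ∈ Submodule.span K {v, ρ τ v}, f w ∈ Submodule.span K {v, ρ τ v} := by
    intro f h1 h2 w hw
    obtain ⟨a, b, rfl⟩ := Submodule.mem_span_pair.mp hw
    rw [map_add, map_smul, map_smul]
    exact add_mem (Submodule.smul_mem _ _ h1) (Submodule.smul_mem _ _ h2)
  refine (hρ.2 _ (h.map_le_of_generators (hstable _ ?_ ?_) (hstable _ ?_ ?_)
    (hstable _ hmem2 ?_))).resolve_left fun h0 => hv (by rwa [h0, Submodule.mem_bot] at hmem1)
  · rw [hsv]; exact Submodule.smul_mem _ _ hmem1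
  · rw [h.s_apply_tau hα hsv]; exact Submodule.smul_mem _ _ hmem2
  · rw [htv]; exact Submodule.smul_mem _ _ hmem1
  · rw [h.t_apply_tau hsv htv]; exact Submodule.smul_mem _ _ hmem2
  · rwa [h.apply_tau_tau]

theorem finrank_eq_one_of_stable_line (h : ImprimitiveGenerators d e s t τ)
    (hρ : IsIrreducibleRep ρ) {u : V} (hu : u ≠ 0)
    (hs : ∃ c : K, ρ s u = c • u) (ht : ∃ c : K, ρ t u = c • u) (hτ : ∃ c : K, ρ τ u = c • u) :
    Module.finrank K V = 1 := by
  have hstable : ∀ f : Module.End K V, (∃ c : K, f u = c • u) →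
      ∀ w ∈ Submodule.span K {u}, f w ∈ Submodule.span K {u} := by
    rintro f ⟨c, hc⟩ w hw
    obtain ⟨a, rfl⟩ := Submodule.mem_span_singleton.mp hw
    rw [map_smul, hc]
    exact Submodule.smul_mem _ _ (Submodule.smul_mem _ _ (Submodule.mem_span_singleton_self u))
  have htop : Submodule.span K {u} = ⊤ :=
    (hρ.2 _ (h.map_le_of_generators (hstable _ hs) (hstable _ ht) (hstable _ hτ))).resolve_left
      (by simpa using hu)
  rw [← finrank_top K V, ← htop, finrank_span_singleton hu]

theorem finrank_le_two (h : ImprimitiveGenerators d e s t τ)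
    (hd : 0 < d) (he : 0 < e) {ζ : K} (hζ : IsPrimitiveRoot ζ (d * e))
    [FiniteDimensional K V] (hρ : IsIrreducibleRep ρ) : Module.finrank K V ≤ 2 := by
  have : Nontrivial V := (Submodule.nontrivial_iff K).mp ⟨⟨_, _, hρ.1⟩⟩
  obtain ⟨x, hx⟩ := h.exists_jointEigenvalue (ρ := ρ) hd he hζ
  have hα := h.fst_ne_zero_of_hasJointEigenvalue hd he hx
  obtain ⟨v, hv, hsv, htv⟩ := hx
  classical
  rw [← finrank_top K V, ← h.span_pair_eq_top hρ hv hα hsv htv]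
  refine (finrank_span_le_card _).trans ?_
  rw [Set.toFinset_card]
  simpa using Finset.card_le_two (a := v) (b := ρ τ v)

theorem linearIndependent_pair (h : ImprimitiveGenerators d e s t τ)
    (hρ : IsIrreducibleRep ρ) (hV : Module.finrank K V = 2) {v : V}
    {α β : K} (hv : v ≠ 0) (hsv : ρ s v = α • v) (htv : ρ t v = β • v) :
    LinearIndependent K ![v, ρ τ v] := by
  refine (LinearIndependent.pair_iff' hv).mpr fun c hc => ?_
  have := h.finrank_eq_one_of_stable_line hρ hv ⟨_, hsv⟩ ⟨_, htv⟩ ⟨c, hc.symm⟩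
  omega

theorem fst_ne_one_of_hasJointEigenvalue (h : ImprimitiveGenerators d e s t τ)
    (hρ : IsIrreducibleRep ρ)
    (hV : Module.finrank K V = 2) {x : K × K} (hx : HasJointEigenvalue ρ s t x) : x.1 ≠ 1 := by
  intro h1
  obtain ⟨v, hv, hsv, htv⟩ := hx
  have hsτ := h.s_apply_tau (h1 ▸ one_ne_zero) hsv
  have htτ := h.t_apply_tau hsv htv
  have hli := LinearIndependent.pair_iff.mp (h.linearIndependent_pair hρ hV hv hsv htv)
  have hu : v + ρ τ v ≠ 0 := fun h0 =>
    one_ne_zero (hli 1 1 (by simpa using h0)).1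
  have := h.finrank_eq_one_of_stable_line hρ hu ⟨1, by rw [map_add, hsv, hsτ, h1]; simp⟩
    ⟨x.2, by rw [map_add, htv, htτ, h1]; simp⟩
    ⟨1, by rw [map_add, h.apply_tau_tau, one_smul, add_comm]⟩
  omega

theorem hasJointEigenvalue_swap (h : ImprimitiveGenerators d e s t τ)
    (hd : 0 < d) (he : 0 < e) {x : K × K}
    (hx : HasJointEigenvalue ρ s t x) : HasJointEigenvalue ρ s t (x.1⁻¹, x.1 ^ e * x.2) := by
  have hα := h.fst_ne_zero_of_hasJointEigenvalue hd he hx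
  obtain ⟨v, hv, hsv, htv⟩ := hx
  refine ⟨ρ τ v, fun h0 => hv ?_, h.s_apply_tau hα hsv, h.t_apply_tau hsv htv⟩
  rw [← h.apply_tau_tau (ρ := ρ) v, h0, map_zero]

theorem eq_or_eq_swap_of_hasJointEigenvalue (h : ImprimitiveGenerators d e s t τ)
    (hd : 0 < d) (he : 0 < e) (hρ : IsIrreducibleRep ρ)
    (hV : Module.finrank K V = 2) {x y : K × K} (hx : HasJointEigenvalue ρ s t x)
    (hy : HasJointEigenvalue ρ s t y) : y = x ∨ y = (x.1⁻¹, x.1 ^ e * x.2) := by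
  have hα := h.fst_ne_zero_of_hasJointEigenvalue hd he hx
  obtain ⟨v, hv, hsv, htv⟩ := hx
  obtain ⟨w, hw, hsw, htw⟩ := hy
  have hsτ := h.s_apply_tau hα hsv
  have htτ := h.t_apply_tau hsv htv
  have hli := LinearIndependent.pair_iff.mp (h.linearIndependent_pair hρ hV hv hsv htv)
  have hmem : w ∈ Submodule.span K {v, ρ τ v} :=
    h.span_pair_eq_top hρ hv hα hsv htv ▸ Submodule.mem_top
  obtain ⟨a, b, rfl⟩ := Submodule.mem_span_pair.mp hmem
  have h1 := hli (a * (x.1 - y.1)) (b * (x.1⁻¹ - y.1)) (by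
    rw [map_add, map_smul, map_smul, hsv, hsτ] at hsw
    rw [← sub_eq_zero] at hsw
    rw [← hsw]
    module)
  have h2 := hli (a * (x.2 - y.2)) (b * (x.1 ^ e * x.2 - y.2)) (by
    rw [map_add, map_smul, map_smul, htv, htτ] at htw
    rw [← sub_eq_zero] at htw
    rw [← htw]
    module)
  by_cases ha : a = 0
  · have hb : b ≠ 0 := fun hb => hw (by simp [ha, hb])
    right
    have e1 := (mul_eq_zero.mp h1.2).resolve_left hb
    have e2 := (mul_eq_zero.mp h2.2).resolve_left hb
    exact Prod.ext (sub_eq_zero.mp e1).symm (sub_eq_zero.mp e2).symm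
  · left
    have e1 := (mul_eq_zero.mp h1.1).resolve_left ha
    have e2 := (mul_eq_zero.mp h2.1).resolve_left ha
    exact Prod.ext (sub_eq_zero.mp e1).symm (sub_eq_zero.mp e2).symm

theorem repIso_of_hasJointEigenvalue (h : ImprimitiveGenerators d e s t τ)
    (hd : 0 < d) (he : 0 < e) {ρ' : Representation K G V}
    (hρ : IsIrreducibleRep ρ) (hρ' : IsIrreducibleRep ρ') (hV : Module.finrank K V = 2)
    {x : K × K} (hx : HasJointEigenvalue ρ s t x) (hx' : HasJointEigenvalue ρ' s t x) :
    RepIso ρ ρ' := by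
  have hα := h.fst_ne_zero_of_hasJointEigenvalue hd he hx
  obtain ⟨v, hv, hsv, htv⟩ := hx
  obtain ⟨v', hv', hsv', htv'⟩ := hx'
  let b := basisOfLinearIndependentOfCardEqFinrank
    (h.linearIndependent_pair hρ hV hv hsv htv) (by simp [hV])
  let b' := basisOfLinearIndependentOfCardEqFinrank
    (h.linearIndependent_pair hρ' hV hv' hsv' htv') (by simp [hV])
  let T := b.equiv b' (Equiv.refl _)
  have hb0 : b 0 = v := by simp [b]
  have hb1 : b 1 = ρ τ v := by simp [b]
  have hT0 : T v = v' := by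
    rw [← hb0, Module.Basis.equiv_apply]; simp [b']
  have hT1 : T (ρ τ v) = ρ' τ v' := by
    rw [← hb1, Module.Basis.equiv_apply]; simp [b']
  have hgen : ∀ g : G, T (ρ g v) = ρ' g (T v) → T (ρ g (ρ τ v)) = ρ' g (T (ρ τ v)) →
      ∀ w, T (ρ g w) = ρ' g (T w) := by
    intro g h0 h1 w
    have : T.toLinearMap ∘ₗ ρ g = ρ' g ∘ₗ T.toLinearMap := by
      refine b.ext fun i => ?_
      fin_cases i
      · simpa [hb0] using h0
      · simpa [hb1] using h1
    exact LinearMap.congr_fun this w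
  refine ⟨T, fun g => ?_⟩
  induction g using Submonoid.dense_induction _ h.closure_eq_top with
  | mem g hg =>
    rcases hg with rfl | rfl | rfl
    · apply hgen
      · rw [hsv, map_smul, hT0, hsv']
      · rw [h.s_apply_tau hα hsv, map_smul, hT1, h.s_apply_tau hα hsv']
    · apply hgen
      · rw [htv, map_smul, hT0, htv']
      · rw [h.t_apply_tau hsv htv, map_smul, hT1, h.t_apply_tau hsv' htv']
    · apply hgen
      · rw [hT1, hT0]
      · rw [h.apply_tau_tau, hT1, hT0, h.apply_tau_tau]
  | one => simp
  | mul x y hx hy => intro w; simp [hx, hy]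

theorem _root_.RepIso.hasJointEigenvalue {ρ' : Representation K G V} (hiso : RepIso ρ ρ')
    {x : K × K} (hx : HasJointEigenvalue ρ s t x) : HasJointEigenvalue ρ' s t x := by
  obtain ⟨T, hT⟩ := hiso
  obtain ⟨v, hv, hsv, htv⟩ := hx
  exact ⟨T v, by simpa using hv, by rw [← hT, hsv, map_smul], by rw [← hT, htv, map_smul]⟩

theorem card_irreducible_quot (h : ImprimitiveGenerators d e s t τ) (hd : 0 < d) (he : 0 < e)
    (hodd : Odd e) {ζ : K} (hζ : IsPrimitiveRoot ζ (d * e)) (hV : Module.finrank K V = 2)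
    (hex : ∀ x : K × K, x.1 ^ (d * e) = 1 → x.2 ^ d = 1 → x.1 ≠ 1 →
      ∃ ρ : Representation K G V, IsIrreducibleRep ρ ∧ HasJointEigenvalue ρ s t x) :
    Nat.card (IrreducibleClasses K G V) = (d * e - 1) * d / 2 := by
  classical
  have hm : 0 < d * e := Nat.mul_pos hd he
  have : FiniteDimensional K V := Module.finite_of_finrank_eq_succ hV
  have : Nontrivial V := Module.nontrivial_of_finrank_eq_succ hV
  let X : Finset (K × K) :=
    (Polynomial.nthRootsFinset (d * e) 1).erase 1 ×ˢ Polynomial.nthRootsFinset d 1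
  have hXmem : ∀ x : K × K, x ∈ X ↔ x.1 ≠ 1 ∧ x.1 ^ (d * e) = 1 ∧ x.2 ^ d = 1 := by
    intro x
    simp [X, Finset.mem_product, Polynomial.mem_nthRootsFinset hm,
      Polynomial.mem_nthRootsFinset hd, and_assoc]
  have hXcard : X.card = (d * e - 1) * d := by
    rw [Finset.card_product, Finset.card_erase_of_mem
      (by simp [Polynomial.mem_nthRootsFinset hm]), hζ.card_nthRootsFinset,
      (hζ.pow hm (Nat.mul_comm d e)).card_nthRootsFinset]
  let E : IrreducibleClasses K G V → K × K → Prop := Quot.lift (fun ρ x => HasJointEigenvalue ρ.1 s t x) (by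
    rintro ρ₁ ρ₂ ⟨T, hT⟩
    funext x
    refine propext ⟨RepIso.hasJointEigenvalue ⟨T, hT⟩,
      RepIso.hasJointEigenvalue ⟨T.symm, fun g w => ?_⟩⟩
    apply T.injective
    rw [hT]
    simp)
  have hE : ∀ q x, E q x → x ∈ X := by
    rintro ⟨ρ⟩ x hx
    exact (hXmem x).mpr ⟨h.fst_ne_one_of_hasJointEigenvalue ρ.2 hV hx,
      h.pow_eq_one_of_hasJointEigenvalue hx⟩
  have hEuniq : ∀ q q' x, E q x → E q' x → q = q' := by
    rintro ⟨ρ⟩ ⟨ρ'⟩ x hx hx'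
    exact Quot.sound (h.repIso_of_hasJointEigenvalue hd he ρ.2 ρ'.2 hV hx hx')
  have hEex : ∀ x ∈ X, ∃ q, E q x := by
    intro x hx
    obtain ⟨h1, h2, h3⟩ := (hXmem x).mp hx
    obtain ⟨ρ, hρ, hρx⟩ := hex x h2 h3 h1
    exact ⟨Quot.mk _ ⟨ρ, hρ⟩, hρx⟩
  have hEcard : ∀ q, ({x ∈ X | E q x} : Finset (K × K)).card = 2 := by
    rintro ⟨ρ⟩
    obtain ⟨x, hx⟩ := h.exists_jointEigenvalue (ρ := ρ.1) hd he hζ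
    rw [Finset.card_eq_two]
    refine ⟨x, (x.1⁻¹, x.1 ^ e * x.2), fun heq => ?_, ?_⟩
    · have hα := h.fst_ne_zero_of_hasJointEigenvalue hd he hx
      have hxX := (hXmem x).mp (hE (Quot.mk _ ρ) x hx)
      have hβ : x.2 ≠ 0 := by
        intro h0
        have h1 := hxX.2.2
        rw [h0, zero_pow hd.ne'] at h1
        exact zero_ne_one h1
      have h1 : x.1 ^ 2 = 1 := by
        have h1 : x.1 = x.1⁻¹ := congrArg Prod.fst heq
        rw [pow_two]
        nth_rewrite 2 [h1]
        exact mul_inv_cancel₀ hα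
      have h2 : x.1 ^ e = 1 := by
        have h2 : x.2 = x.1 ^ e * x.2 := congrArg Prod.snd heq
        exact (mul_eq_right₀ hβ).mp h2.symm
      obtain ⟨k, hk⟩ := hodd
      rw [hk, pow_add, pow_mul, h1, one_pow, one_mul, pow_one] at h2
      exact hxX.1 h2
    · ext y
      simp only [Finset.mem_filter, Finset.mem_insert, Finset.mem_singleton]
      constructor
      · rintro ⟨-, hy⟩
        exact h.eq_or_eq_swap_of_hasJointEigenvalue hd he ρ.2 hV hx hy
      · intro hy
        have : E (Quot.mk _ ρ) y := by
          rcases hy with rfl | rfl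
          · exact hx
          · exact h.hasJointEigenvalue_swap hd he hx
        exact ⟨hE (Quot.mk _ ρ) y this, this⟩
  choose F hF using fun x : X => hEex x.1 x.2
  have hFsurj : Function.Surjective F := by
    intro q
    obtain ⟨x, hx⟩ := Finset.card_pos.mp (by rw [hEcard q]; norm_num)
    obtain ⟨hxX, hqx⟩ := Finset.mem_filter.mp hx
    exact ⟨⟨x, hxX⟩, hEuniq _ _ x (hF _) hqx⟩
  have : Finite (IrreducibleClasses K G V) := Finite.of_surjective F hFsurj
  have : Fintype (IrreducibleClasses K G V) := Fintype.ofFinite (IrreducibleClasses K G V)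
  have hcount : (d * e - 1) * d = 2 * Nat.card (IrreducibleClasses K G V) := by
    have hunion : X = Finset.univ.biUnion fun q : IrreducibleClasses K G V => {x ∈ X | E q x} := by
      ext x
      simp only [Finset.mem_biUnion, Finset.mem_univ, true_and, Finset.mem_filter]
      exact ⟨fun hx => (hEex x hx).imp fun q hq => ⟨hx, hq⟩, fun ⟨_, hx, _⟩ => hx⟩
    rw [← hXcard, hunion, Finset.card_biUnion, Finset.sum_congr rfl fun q _ => hEcard q]
    · simp [mul_comm]
    · intro q _ q' _ hne
      refine Finset.disjoint_left.mpr fun x hx hx' => hne ?_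
      exact hEuniq q q' x (Finset.mem_filter.mp hx).2 (Finset.mem_filter.mp hx').2
  rw [hcount, Nat.mul_div_cancel_left _ (by norm_num)]

end ImprimitiveGenerators

section Concrete

variable {K : Type*} [Field K] {ζ : K} {hζ0 : ζ ≠ 0}

theorem Dgl_val (a b : ℤ) :
    (Dgl ζ hζ0 a b : Matrix (Fin 2) (Fin 2) K) = !![ζ ^ a, 0; 0, ζ ^ b] := by
  ext i j
  fin_cases i <;> fin_cases j <;> simp [Dgl, Matrix.GeneralLinearGroup.mkOfDetNeZero]

theorem tauGL_val : (tauGL K : Matrix (Fin 2) (Fin 2) K) = !![0, 1; 1, 0] := rfl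

theorem Dgl_mul (a b a' b' : ℤ) :
    Dgl ζ hζ0 a b * Dgl ζ hζ0 a' b' = Dgl ζ hζ0 (a + a') (b + b') := by
  apply Units.ext
  rw [Units.val_mul, Dgl_val, Dgl_val, Dgl_val]
  simp [zpow_add₀ hζ0]

theorem Dgl_zero : Dgl ζ hζ0 0 0 = 1 := by
  apply Units.ext
  rw [Dgl_val, Units.val_one, Matrix.one_fin_two]
  simp

theorem Dgl_inv (a b : ℤ) : (Dgl ζ hζ0 a b)⁻¹ = Dgl ζ hζ0 (-a) (-b) := by
  rw [inv_eq_iff_mul_eq_one, Dgl_mul, add_neg_cancel, add_neg_cancel, Dgl_zero]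

theorem Dgl_pow (a b : ℤ) (n : ℕ) : Dgl ζ hζ0 a b ^ n = Dgl ζ hζ0 (n * a) (n * b) := by
  induction n with
  | zero => simp [Dgl_zero]
  | succ n ih => rw [pow_succ, ih, Dgl_mul]; push_cast; ring_nf

theorem tauGL_mul_tauGL : tauGL K * tauGL K = 1 := by
  apply Units.ext
  rw [Units.val_mul, tauGL_val, Units.val_one, Matrix.one_fin_two]
  simp

theorem tauGL_mul_Dgl (a b : ℤ) : tauGL K * Dgl ζ hζ0 a b = Dgl ζ hζ0 b a * tauGL K := by
  apply Units.ext
  rw [Units.val_mul, Units.val_mul, tauGL_val, Dgl_val, Dgl_val]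
  simp

theorem Dgl_eq_of_dvd {m : ℕ} (hζ : IsPrimitiveRoot ζ m) {a b a' b' : ℤ}
    (ha : (m : ℤ) ∣ a - a') (hb : (m : ℤ) ∣ b - b') : Dgl ζ hζ0 a b = Dgl ζ hζ0 a' b' := by
  have key : ∀ {c c' : ℤ}, (m : ℤ) ∣ c - c' → ζ ^ c = ζ ^ c' := by
    intro c c' hc
    rw [← sub_add_cancel c c', zpow_add₀ hζ0, (hζ.zpow_eq_one_iff_dvd _).mpr hc, one_mul]
  apply Units.ext
  rw [Dgl_val, Dgl_val, key ha, key hb]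

theorem exists_Dgl_of_mem_Gme2 {e : ℕ} {g : GL (Fin 2) K} (hg : g ∈ Gme2 ζ hζ0 e) :
    ∃ a b : ℤ, (e : ℤ) ∣ a + b ∧ (g = Dgl ζ hζ0 a b ∨ g = Dgl ζ hζ0 a b * tauGL K) := by
  have hinv : (tauGL K)⁻¹ = tauGL K := inv_eq_iff_mul_eq_one.mpr tauGL_mul_tauGL
  induction hg using Subgroup.closure_induction with
  | mem x hx =>
    rcases hx with rfl | ⟨a, b, h, rfl⟩
    · exact ⟨0, 0, by simp, Or.inr (by rw [Dgl_zero, one_mul])⟩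
    · exact ⟨a, b, h, Or.inl rfl⟩
  | one => exact ⟨0, 0, by simp, Or.inl Dgl_zero.symm⟩
  | mul x y _ _ hx hy =>
    obtain ⟨a, b, h, hx⟩ := hx
    obtain ⟨a', b', h', hy⟩ := hy
    have h1 : (e : ℤ) ∣ (a + a') + (b + b') := by
      simpa [add_add_add_comm] using dvd_add h h'
    have h2 : (e : ℤ) ∣ (a + b') + (b + a') := by
      simpa [add_add_add_comm, add_comm b' a'] using dvd_add h h'
    rcases hx with rfl | rfl <;> rcases hy with rfl | rfl
    · exact ⟨_, _, h1, Or.inl (Dgl_mul _ _ _ _)⟩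
    · exact ⟨_, _, h1, Or.inr (by rw [← mul_assoc, Dgl_mul])⟩
    · exact ⟨_, _, h2, Or.inr (by rw [mul_assoc, tauGL_mul_Dgl, ← mul_assoc, Dgl_mul])⟩
    · refine ⟨_, _, h2, Or.inl ?_⟩
      rw [mul_assoc, ← mul_assoc (tauGL K), tauGL_mul_Dgl, mul_assoc, tauGL_mul_tauGL, mul_one,
        Dgl_mul]
  | inv x _ hx =>
    obtain ⟨a, b, h, rfl | rfl⟩ := hx
    · exact ⟨-a, -b, by rw [← neg_add]; exact h.neg_right, Or.inl (Dgl_inv _ _)⟩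
    · exact ⟨-b, -a, by rw [← neg_add, add_comm]; exact h.neg_right,
        Or.inr (by rw [mul_inv_rev, hinv, Dgl_inv, tauGL_mul_Dgl])⟩

theorem Gme2_imprimitiveGenerators {d e : ℕ} (hd : 0 < d) (he : 0 < e)
    (hζ : IsPrimitiveRoot ζ (d * e)) :
    ImprimitiveGenerators d e (DG ζ hζ0 e 1 (-1) (by simp)) (DG ζ hζ0 e 0 e (by simp))
      (tauG ζ hζ0 e) where
  s_pow := by
    apply Subtype.ext
    change Dgl ζ hζ0 1 (-1) ^ (d * e) = 1
    rw [Dgl_pow, ← Dgl_zero (hζ0 := hζ0)]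
    exact Dgl_eq_of_dvd hζ (by simp) (by simp)
  t_pow := by
    apply Subtype.ext
    change Dgl ζ hζ0 0 e ^ d = 1
    rw [Dgl_pow, ← Dgl_zero (hζ0 := hζ0)]
    exact Dgl_eq_of_dvd hζ (by simp) (by simp)
  commute := by
    apply Subtype.ext
    change Dgl ζ hζ0 1 (-1) * Dgl ζ hζ0 0 e = Dgl ζ hζ0 0 e * Dgl ζ hζ0 1 (-1)
    simp [Dgl_mul, add_comm]
  tau_mul_tau := Subtype.ext tauGL_mul_tauGL
  s_tau_s := by
    apply Subtype.ext
    change Dgl ζ hζ0 1 (-1) * tauGL K * Dgl ζ hζ0 1 (-1) = tauGL K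
    rw [mul_assoc, tauGL_mul_Dgl, ← mul_assoc, Dgl_mul]
    simp [Dgl_zero]
  t_tau := by
    apply Subtype.ext
    change Dgl ζ hζ0 0 e * tauGL K = tauGL K * (Dgl ζ hζ0 1 (-1) ^ e * Dgl ζ hζ0 0 e)
    rw [Dgl_pow, Dgl_mul, tauGL_mul_Dgl]
    simp
  closure_eq_top := by
    rw [eq_top_iff]
    rintro ⟨g, hg⟩ -
    set M := Submonoid.closure
      {DG ζ hζ0 e 1 (-1) (by simp), DG ζ hζ0 e 0 e (by simp), tauG ζ hζ0 e}
    have hs : DG ζ hζ0 e 1 (-1) (by simp) ∈ M := Submonoid.subset_closure (by simp)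
    have ht : DG ζ hζ0 e 0 e (by simp) ∈ M := Submonoid.subset_closure (by simp)
    have hτ : tauG ζ hζ0 e ∈ M := Submonoid.subset_closure (by simp)
    have hD : ∀ (a b : ℤ) (h : (e : ℤ) ∣ a + b), DG ζ hζ0 e a b h ∈ M := by
      intro a b h
      obtain ⟨k, hk⟩ := h
      have hm : 0 < d * e := Nat.mul_pos hd he
      obtain ⟨i, hi⟩ := Int.eq_ofNat_of_zero_le
        (Int.emod_nonneg a (b := ((d * e : ℕ) : ℤ)) (by exact_mod_cast hm.ne'))
      obtain ⟨j, hj⟩ := Int.eq_ofNat_of_zero_le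
        (Int.emod_nonneg k (b := (d : ℤ)) (by exact_mod_cast hd.ne'))
      have hi' : ((d * e : ℕ) : ℤ) ∣ a - i := hi ▸ Int.dvd_self_sub_emod
      have hj' : (d : ℤ) ∣ k - j := hj ▸ Int.dvd_self_sub_emod
      have heq : DG ζ hζ0 e a b ⟨k, hk⟩ =
          DG ζ hζ0 e 1 (-1) (by simp) ^ i * DG ζ hζ0 e 0 e (by simp) ^ j := by
        apply Subtype.ext
        change Dgl ζ hζ0 a b = Dgl ζ hζ0 1 (-1) ^ i * Dgl ζ hζ0 0 e ^ j
        rw [Dgl_pow, Dgl_pow, Dgl_mul]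
        refine Dgl_eq_of_dvd hζ (by simpa using hi') ?_
        have h1 : ((d * e : ℕ) : ℤ) ∣ (k - j) * e := by
          push_cast; exact mul_dvd_mul_right hj' _
        have h2 : b - ((i : ℤ) * -1 + j * e) = (k - j) * e - (a - i) := by
          linear_combination hk
        rw [h2]
        exact dvd_sub h1 hi'
      rw [heq]
      exact mul_mem (pow_mem hs i) (pow_mem ht j)
    obtain ⟨a, b, h, rfl | rfl⟩ := exists_Dgl_of_mem_Gme2 hg
    · exact hD a b h
    · exact mul_mem (hD a b h) hτ

/-- The matrix by which a monomial matrix acts on the span of `x^p y^q` and `x^q y^p`. -/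
def monomialPow (p q : ℕ) (A : Matrix (Fin 2) (Fin 2) K) : Matrix (Fin 2) (Fin 2) K :=
  !![A 0 0 ^ p * A 1 1 ^ q, A 0 1 ^ p * A 1 0 ^ q; A 1 0 ^ p * A 0 1 ^ q, A 1 1 ^ p * A 0 0 ^ q]

theorem monomialPow_mul {p : ℕ} (hp : p ≠ 0) (q : ℕ) {A B : Matrix (Fin 2) (Fin 2) K}
    (hA : (A 0 1 = 0 ∧ A 1 0 = 0) ∨ (A 0 0 = 0 ∧ A 1 1 = 0))
    (hB : (B 0 1 = 0 ∧ B 1 0 = 0) ∨ (B 0 0 = 0 ∧ B 1 1 = 0)) :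
    monomialPow p q (A * B) = monomialPow p q A * monomialPow p q B := by
  rcases hA with ⟨h1, h2⟩ | ⟨h1, h2⟩ <;> rcases hB with ⟨h3, h4⟩ | ⟨h3, h4⟩ <;>
  · ext i j
    fin_cases i <;> fin_cases j <;>
      simp [monomialPow, Matrix.mul_apply, Fin.sum_univ_two, h1, h2, h3, h4, hp] <;> ring

theorem isMonomial_of_mem_Gme2 {e : ℕ} {g : GL (Fin 2) K} (hg : g ∈ Gme2 ζ hζ0 e) :
    (g.1 0 1 = 0 ∧ g.1 1 0 = 0) ∨ (g.1 0 0 = 0 ∧ g.1 1 1 = 0) := by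
  obtain ⟨a, b, -, rfl | rfl⟩ := exists_Dgl_of_mem_Gme2 hg
  · left; simp [Dgl_val]
  · right; simp [Dgl_val, tauGL_val]

/-- The representation of `G(m,e,2)` on the span of `x^p y^q` and `x^q y^p`. -/
noncomputable def monomialRep (ζ : K) (hζ0 : ζ ≠ 0) (e : ℕ) {p : ℕ} (hp : p ≠ 0) (q : ℕ) :
    Representation K ↥(Gme2 ζ hζ0 e) (Fin 2 → K) where
  toFun g := Matrix.toLin' (monomialPow p q g.1.1)
  map_one' := by
    have : monomialPow p q (1 : Matrix (Fin 2) (Fin 2) K) = 1 := by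
      simp [monomialPow, hp, Matrix.one_fin_two]
    simp [this, Module.End.one_eq_id]
  map_mul' g g' := by
    rw [Module.End.mul_eq_comp, ← Matrix.toLin'_mul, ← monomialPow_mul hp q
      (isMonomial_of_mem_Gme2 g.2) (isMonomial_of_mem_Gme2 g'.2)]
    simp

theorem monomialRep_DG {e p : ℕ} (hp : p ≠ 0) (q : ℕ) (a b : ℤ) (h : (e : ℤ) ∣ a + b)
    (w : Fin 2 → K) : monomialRep ζ hζ0 e hp q (DG ζ hζ0 e a b h) w =
      ![(ζ ^ a) ^ p * (ζ ^ b) ^ q * w 0, (ζ ^ b) ^ p * (ζ ^ a) ^ q * w 1] := by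
  change Matrix.toLin' (monomialPow p q (Dgl ζ hζ0 a b).1) w = _
  ext i
  fin_cases i <;> simp [monomialPow, Dgl_val, hp, Matrix.mulVec, dotProduct]

theorem monomialRep_tauG {e p : ℕ} (hp : p ≠ 0) (q : ℕ) (w : Fin 2 → K) :
    monomialRep ζ hζ0 e hp q (tauG ζ hζ0 e) w = ![w 1, w 0] := by
  change Matrix.toLin' (monomialPow p q (tauGL K).1) w = _
  ext i
  fin_cases i <;> simp [monomialPow, tauGL_val, hp, Matrix.mulVec, dotProduct]

theorem isIrreducibleRep_of_swap_of_diagonal {G : Type*} [Monoid G]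
    {ρ : Representation K G (Fin 2 → K)} {g τ : G} {a b : K} (hab : a ≠ b)
    (hg : ∀ w, ρ g w = ![a * w 0, b * w 1]) (hτ : ∀ w, ρ τ w = ![w 1, w 0]) :
    IsIrreducibleRep ρ := by
  refine ⟨bot_ne_top, fun W hW => ?_⟩
  rw [or_iff_not_imp_left]
  intro hbot
  have hmem : ∀ g, ∀ w ∈ W, ρ g w ∈ W := fun g w hw => hW g (Submodule.mem_map_of_mem hw)
  obtain ⟨w, hw, hw0⟩ := Submodule.exists_mem_ne_zero_of_ne_bot hbot
  have hsub : a - b ≠ 0 := sub_ne_zero.mpr hab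
  have hfst : ![w 0, 0] ∈ W := by
    have : ![w 0, 0] = (a - b)⁻¹ • (ρ g w - b • w) := by
      rw [eq_inv_smul_iff₀ hsub, hg]
      ext i
      fin_cases i <;> simp [sub_mul]
    rw [this]
    exact W.smul_mem _ (W.sub_mem (hmem g w hw) (W.smul_mem _ hw))
  have hsnd : ![0, w 1] ∈ W := by
    have : ![0, w 1] = w - ![w 0, 0] := by
      ext i
      fin_cases i <;> simp
    rw [this]
    exact W.sub_mem hw hfst
  have hswap : ∀ c d : K, ![c, d] ∈ W → ![d, c] ∈ W := by
    intro c d hcd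
    simpa [hτ] using hmem τ _ hcd
  have hline : ∃ c : K, c ≠ 0 ∧ ![c, 0] ∈ W := by
    by_cases h0 : w 0 = 0
    · refine ⟨w 1, fun h1 => hw0 ?_, hswap _ _ hsnd⟩
      ext i
      fin_cases i <;> simp [h0, h1]
    · exact ⟨w 0, h0, hfst⟩
  obtain ⟨c, hc, hcW⟩ := hline
  rw [eq_top_iff]
  intro u _
  have : u = (u 0 * c⁻¹) • ![c, 0] + (u 1 * c⁻¹) • ![0, c] := by
    ext i
    fin_cases i <;> simp [hc]
  rw [this]
  exact W.add_mem (W.smul_mem _ hcW) (W.smul_mem _ (hswap _ _ hcW))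

theorem exists_irreducible_hasJointEigenvalue {d e : ℕ} (hd : 0 < d) (he : 0 < e)
    (hodd : Odd e) (hζ : IsPrimitiveRoot ζ (d * e)) (x : K × K) (hx1 : x.1 ^ (d * e) = 1)
    (hx2 : x.2 ^ d = 1) (hx : x.1 ≠ 1) :
    ∃ ρ : Representation K ↥(Gme2 ζ hζ0 e) (Fin 2 → K), IsIrreducibleRep ρ ∧
      HasJointEigenvalue ρ (DG ζ hζ0 e 1 (-1) (by simp)) (DG ζ hζ0 e 0 e (by simp)) x := by
  have hm : 0 < d * e := Nat.mul_pos hd he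
  have : NeZero (d * e) := ⟨hm.ne'⟩
  have : NeZero d := ⟨hd.ne'⟩
  obtain ⟨α, β⟩ := x
  obtain ⟨i, -, rfl⟩ := hζ.eq_pow_of_pow_eq_one hx1
  obtain ⟨j, -, rfl⟩ := (hζ.pow hm (Nat.mul_comm d e)).eq_pow_of_pow_eq_one hx2
  have hi : i ≠ 0 := by
    rintro rfl
    simp at hx
  have hp : i + j ≠ 0 := by omega
  have hs : ∀ w, monomialRep ζ hζ0 e hp j (DG ζ hζ0 e 1 (-1) (by simp)) w =
      ![ζ ^ i * w 0, (ζ ^ i)⁻¹ * w 1] := by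
    intro w
    rw [monomialRep_DG]
    congr 2
    · simp only [zpow_one, zpow_neg, pow_add, inv_pow]
      field_simp
    · simp only [zpow_one, zpow_neg, pow_add, inv_pow]
      field_simp
  have ht : ∀ w, monomialRep ζ hζ0 e hp j (DG ζ hζ0 e 0 e (by simp)) w =
      ![(ζ ^ e) ^ j * w 0, (ζ ^ e) ^ (i + j) * w 1] := by
    intro w
    rw [monomialRep_DG]
    simp
  refine ⟨monomialRep ζ hζ0 e hp j, ?_, ![1, 0], fun h0 => one_ne_zero (congrFun h0 0), ?_, ?_⟩
  · by_cases hsq : ζ ^ i = (ζ ^ i)⁻¹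
    · refine isIrreducibleRep_of_swap_of_diagonal (fun heq => hx ?_) ht (monomialRep_tauG hp j)
      have h1 : (ζ ^ i) ^ 2 = 1 := by
        rw [pow_two]
        nth_rewrite 2 [hsq]
        exact mul_inv_cancel₀ (pow_ne_zero _ hζ0)
      have h2 : (ζ ^ i) ^ e = 1 := by
        rw [pow_add] at heq
        rw [pow_right_comm]
        exact (mul_eq_right₀ (pow_ne_zero _ (pow_ne_zero _ hζ0))).mp heq.symm
      obtain ⟨k, hk⟩ := hodd
      rwa [hk, pow_add, pow_mul, h1, one_pow, one_mul, pow_one] at h2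
    · exact isIrreducibleRep_of_swap_of_diagonal hsq hs (monomialRep_tauG hp j)
  · rw [hs]
    ext i
    fin_cases i <;> simp
  · rw [ht]
    ext i
    fin_cases i <;> simp

end Concrete

theorem ImprimitiveGenerators.map_s_eq_one {G H : Type*} [Group G] [CommGroup H] {d e : ℕ}
    {s t τ : G} (h : ImprimitiveGenerators d e s t τ) (hodd : Odd e) (χ : G →* H) :
    χ s = 1 := by
  have h1 : χ s ^ 2 = 1 := by
    have := congrArg χ h.s_tau_s
    rw [map_mul, map_mul, mul_right_comm, ← pow_two] at this
    exact mul_eq_right.mp this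
  have h2 : χ s ^ e = 1 := by
    have := congrArg χ h.t_tau
    rw [map_mul, map_mul, map_mul, map_pow, mul_comm, mul_right_inj] at this
    exact mul_eq_right.mp this.symm
  obtain ⟨k, hk⟩ := hodd
  rwa [hk, pow_add, pow_mul, h1, one_pow, one_mul, pow_one] at h2

/-!
STATEMENT 12: the irreducible representations of `G = G(m,e,2)` for `e` odd.
`G` has exactly `2d` one-dimensional representations: the character group of `G` is
generated by `χ(xy)` (of order `d`) and `χ(A)` (of order `2`), so has order `2d`.
Moreover `G` has exactly `(m-1)d/2` isomorphism classes of `2`-dimensional irreducible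
representations, and no irreducible representations of dimension greater than `2`.
Here `χ(xy)` is the character with `D(a,b) ↦ ζ^{a+b}`, `τ ↦ 1`, and `χ(A)` is the
character with `D(a,b) ↦ 1`, `τ ↦ -1` (the action on `A = x^m - y^m`).
-/
theorem irreducibles_Gme2_odd
    {K : Type*} [Field K] [CharZero K] (m d e : ℕ) (hd : 0 < d) (he : 0 < e)
    (hm : m = d * e) (hodd : Odd e)
    (ζ : K) (hζ : IsPrimitiveRoot ζ m) (hζ0 : ζ ≠ 0)
    (χxy χA : ↥(Gme2 ζ hζ0 e) →* Kˣ)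
    (hχxyD : ∀ (a b : ℤ) (h : (e : ℤ) ∣ a + b),
      ((χxy (DG ζ hζ0 e a b h) : Kˣ) : K) = ζ ^ (a + b))
    (hχxyτ : χxy (tauG ζ hζ0 e) = 1)
    (hχAD : ∀ (a b : ℤ) (h : (e : ℤ) ∣ a + b), χA (DG ζ hζ0 e a b h) = 1)
    (hχAτ : ((χA (tauG ζ hζ0 e) : Kˣ) : K) = -1) :
    orderOf χxy = d ∧
    orderOf χA = 2 ∧
    (∀ χ : ↥(Gme2 ζ hζ0 e) →* Kˣ, ∃ i j : ℕ, χ = χxy ^ i * χA ^ j) ∧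
    Nat.card (↥(Gme2 ζ hζ0 e) →* Kˣ) = 2 * d ∧
    Nat.card (Quot (fun ρ₁ ρ₂ :
        {ρ : Representation K ↥(Gme2 ζ hζ0 e) (Fin 2 → K) // IsIrreducibleRep ρ} =>
          RepIso ρ₁.1 ρ₂.1)) = (m - 1) * d / 2 ∧
    (∀ (V : Type) [AddCommGroup V] [Module K V] [FiniteDimensional K V]
        (ρ : Representation K ↥(Gme2 ζ hζ0 e) V),
      IsIrreducibleRep ρ → Module.finrank K V ≤ 2) := by
  subst hm
  have hm : 0 < d * e := Nat.mul_pos hd he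
  have h := Gme2_imprimitiveGenerators (hζ0 := hζ0) hd he hζ
  have hω : IsPrimitiveRoot (ζ ^ e) d := hζ.pow hm (Nat.mul_comm d e)
  set s := DG ζ hζ0 e 1 (-1) (by simp) with hs
  set t := DG ζ hζ0 e 0 e (by simp) with ht
  set τ := tauG ζ hζ0 e with hτ
  have hχxyt : ((χxy t : Kˣ) : K) = ζ ^ e := by rw [ht, hχxyD]; simp
  have hχAt : χA t = 1 := hχAD _ _ _
  have hext : ∀ χ χ' : ↥(Gme2 ζ hζ0 e) →* Kˣ, χ t = χ' t → χ τ = χ' τ → χ = χ' := by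
    intro χ χ' h1 h2
    refine MonoidHom.eq_of_eqOn_denseM h.closure_eq_top ?_
    rintro g (rfl | rfl | rfl)
    · rw [h.map_s_eq_one hodd, h.map_s_eq_one hodd]
    · exact h1
    · exact h2
  have hχxy : orderOf χxy = d := by
    rw [hω.eq_orderOf]
    refine orderOf_eq_orderOf_iff.mpr fun n => ?_
    rw [← hχxyt, ← Units.val_pow_eq_pow_val, Units.val_eq_one]
    refine ⟨fun h1 => ?_, fun h1 => hext _ _ (by simpa using h1) (by simp [hχxyτ])⟩
    rw [← MonoidHom.pow_apply, h1, MonoidHom.one_apply]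
  have hχA : orderOf χA = 2 := by
    refine orderOf_eq_prime (hext _ _ (by simp [hχAt]) (Units.ext (by simp [hχAτ]))) ?_
    rintro rfl
    rw [MonoidHom.one_apply, Units.val_one] at hχAτ
    norm_num at hχAτ
  have hgen : ∀ χ : ↥(Gme2 ζ hζ0 e) →* Kˣ, ∃ i < d, ∃ j < 2, χ = χxy ^ i * χA ^ j := by
    intro χ
    have : NeZero d := ⟨hd.ne'⟩
    have h1 : ((χ t : Kˣ) : K) ^ d = 1 := by
      rw [← Units.val_pow_eq_pow_val, ← map_pow, h.t_pow, map_one, Units.val_one]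
    obtain ⟨i, hid, hi⟩ := hω.eq_pow_of_pow_eq_one h1
    have h2 : ((χ τ : Kˣ) : K) * (χ τ : Kˣ) = 1 := by
      rw [← Units.val_mul, ← map_mul, h.tau_mul_tau, map_one, Units.val_one]
    have ht' : ∀ j : ℕ, χ t = (χxy ^ i * χA ^ j) t := fun j =>
      Units.ext (by simp [hχAt, hχxyt, hi])
    rcases mul_self_eq_one_iff.mp h2 with h3 | h3
    · exact ⟨i, hid, 0, by norm_num, hext _ _ (ht' 0) (Units.ext (by simp [hχxyτ, h3]))⟩
    · exact ⟨i, hid, 1, by norm_num, hext _ _ (ht' 1) (Units.ext (by simp [hχxyτ, hχAτ, h3]))⟩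
  refine ⟨hχxy, hχA, fun χ => ?_, ?_, ?_, ?_⟩
  · obtain ⟨i, -, j, -, hij⟩ := hgen χ
    exact ⟨i, j, hij⟩
  · have hbij : Function.Bijective fun x : Fin d × Fin 2 => χxy ^ (x.1 : ℕ) * χA ^ (x.2 : ℕ) := by
      constructor
      · rintro ⟨i, j⟩ ⟨i', j'⟩ heq
        have h1 := congrArg (fun χ : ↥(Gme2 ζ hζ0 e) →* Kˣ => ((χ t : Kˣ) : K)) heq
        have h2 := congrArg (fun χ : ↥(Gme2 ζ hζ0 e) →* Kˣ => ((χ τ : Kˣ) : K)) heq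
        simp only [MonoidHom.mul_apply, MonoidHom.pow_apply, hχAt, one_pow, mul_one,
          Units.val_pow_eq_pow_val, hχxyt] at h1
        simp only [MonoidHom.mul_apply, MonoidHom.pow_apply, hχxyτ, one_pow, one_mul,
          Units.val_pow_eq_pow_val, hχAτ] at h2
        refine Prod.ext (Fin.ext (hω.pow_inj i.2 i'.2 h1)) (Fin.ext ?_)
        exact (IsPrimitiveRoot.neg_one 0 (by norm_num)).pow_inj j.2 j'.2 h2
      · intro χ
        obtain ⟨i, hi, j, hj, hij⟩ := hgen χ
        exact ⟨(⟨i, hi⟩, ⟨j, hj⟩), hij.symm⟩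
    rw [← Nat.card_eq_of_bijective _ hbij]
    simp [mul_comm]
  · exact h.card_irreducible_quot hd he hodd hζ (by simp)
      (exists_irreducible_hasJointEigenvalue hd he hodd hζ)
  · intro V _ _ _ ρ hρ
    exact h.finrank_le_two hd he hζ hρ
end

section
/- Let G = G(m,e,2) with e even, n = m/2. Then G has exactly 4d one-dimensional representations, namely χ((xy)^c), χ(A(xy)^c), χ(N⁺(xy)^c), χ(N⁻(xy)^c) for c = 0,…,d−1, where A = x^m − y^m, N⁺ = x^n + y^n, N⁻ = x^n − y^n; the character group is generated by χ(xy) of order d and χ(A), χ(N⁺) of order 2. Moreover G has exactly (n−1)d isomorphism classes of 2-dimensional irreducible representations, represented by ρ(x^a (xy)^b) with 0 < a < n and 0 ≤ b < d, and no irreducibles of dimension greater than 2. -/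
section Group

variable {K : Type*} [Field K] {ζ : K} {hζ0 : ζ ≠ 0} {e : ℕ}

theorem DG_mul (a b a' b' : ℤ) (h : (e : ℤ) ∣ a + b) (h' : (e : ℤ) ∣ a' + b')
    (h'' : (e : ℤ) ∣ (a + a') + (b + b')) :
    DG ζ hζ0 e a b h * DG ζ hζ0 e a' b' h' = DG ζ hζ0 e (a + a') (b + b') h'' := by
  apply Subtype.ext
  apply Units.ext
  ext i j
  fin_cases i <;> fin_cases j <;>
    simp [DG, Dgl, Matrix.GeneralLinearGroup.mkOfDetNeZero, zpow_add₀ hζ0]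

theorem DG_congr {a b a' b' : ℤ} (h : (e : ℤ) ∣ a + b) (h' : (e : ℤ) ∣ a' + b')
    (ha : a = a') (hb : b = b') : DG ζ hζ0 e a b h = DG ζ hζ0 e a' b' h' := by
  subst ha hb
  rfl

theorem DG_eq_one {a b : ℤ} (h : (e : ℤ) ∣ a + b) (ha : ζ ^ a = 1) (hb : ζ ^ b = 1) :
    DG ζ hζ0 e a b h = 1 := by
  apply Subtype.ext
  apply Units.ext
  ext i j
  fin_cases i <;> fin_cases j <;>
    simp [DG, Dgl, Matrix.GeneralLinearGroup.mkOfDetNeZero, ha, hb]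

theorem tauG_mul_DG (a b : ℤ) (h : (e : ℤ) ∣ a + b) (h' : (e : ℤ) ∣ b + a) :
    tauG ζ hζ0 e * DG ζ hζ0 e a b h = DG ζ hζ0 e b a h' * tauG ζ hζ0 e := by
  apply Subtype.ext
  apply Units.ext
  ext i j
  fin_cases i <;> fin_cases j <;>
    simp [DG, Dgl, tauG, tauGL, Matrix.GeneralLinearGroup.mkOfDetNeZero, Matrix.mul_apply]

theorem tauG_mul_self : tauG ζ hζ0 e * tauG ζ hζ0 e = 1 := by
  apply Subtype.ext
  apply Units.ext
  ext i j
  fin_cases i <;> fin_cases j <;>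
    simp [tauG, tauGL, Matrix.GeneralLinearGroup.mkOfDetNeZero, Matrix.mul_apply]

theorem DG_inv (a b : ℤ) (h : (e : ℤ) ∣ a + b) (h' : (e : ℤ) ∣ -a + -b) :
    (DG ζ hζ0 e a b h)⁻¹ = DG ζ hζ0 e (-a) (-b) h' := by
  rw [inv_eq_iff_mul_eq_one, DG_mul _ _ _ _ _ _ (by simp)]
  exact DG_eq_one _ (by simp) (by simp)

theorem DG_pow (a b : ℤ) (h : (e : ℤ) ∣ a + b) (k : ℕ) (h' : (e : ℤ) ∣ k * a + k * b) :
    DG ζ hζ0 e a b h ^ k = DG ζ hζ0 e (k * a) (k * b) h' := by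
  induction k with
  | zero => exact (DG_eq_one _ (by simp) (by simp)).symm
  | succ k ih =>
    have hk : (e : ℤ) ∣ k * a + k * b := by
      rw [← mul_add]
      exact h.mul_left _
    rw [pow_succ, ih hk, DG_mul _ _ _ _ _ _ (by convert h' using 1; push_cast; ring)]
    exact DG_congr _ _ (by push_cast; ring) (by push_cast; ring)

theorem DG_zpow (a b : ℤ) (h : (e : ℤ) ∣ a + b) (k : ℤ) (h' : (e : ℤ) ∣ k * a + k * b) :
    DG ζ hζ0 e a b h ^ k = DG ζ hζ0 e (k * a) (k * b) h' := by
  obtain ⟨k, rfl | rfl⟩ := k.eq_nat_or_neg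
  · rw [zpow_natCast, DG_pow _ _ _ _ h']
  · have hk : (e : ℤ) ∣ k * a + k * b := by
      rw [← mul_add]
      exact h.mul_left _
    rw [zpow_neg, zpow_natCast, DG_pow _ _ _ _ hk,
      DG_inv _ _ _ (by convert h' using 1; ring)]
    exact DG_congr _ _ (by ring) (by ring)

/-- Every diagonal element is a product of powers of `D(1,-1)` and `D(e,0)`. -/
theorem DG_eq_zpow_mul_zpow (a b k : ℤ) (h : (e : ℤ) ∣ a + b) (hk : a + b = e * k) :
    DG ζ hζ0 e a b h =
      DG ζ hζ0 e 1 (-1) (by simp) ^ (-b) * DG ζ hζ0 e e 0 (by simp) ^ k := by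
  rw [DG_zpow _ _ _ _ (by simp), DG_zpow _ _ _ _ (by simp), DG_mul _ _ _ _ _ _ (by simp)]
  exact DG_congr _ _ (by linarith) (by ring)

/-- Every element of `G(m,e,2)` is `D(a,b)` or `D(a,b)τ`. -/
theorem exists_eq_DG_or_eq_DG_mul_tauG (g : ↥(Gme2 ζ hζ0 e)) :
    ∃ (a b : ℤ) (h : (e : ℤ) ∣ a + b),
      g = DG ζ hζ0 e a b h ∨ g = DG ζ hζ0 e a b h * tauG ζ hζ0 e := by
  obtain ⟨g, hg⟩ := g
  have hone : (1 : ↥(Gme2 ζ hζ0 e)) = DG ζ hζ0 e 0 0 (by simp) :=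
    (DG_eq_one _ (by simp) (by simp)).symm
  induction hg using Subgroup.closure_induction with
  | mem x hx =>
    rcases hx with rfl | ⟨a, b, h, rfl⟩
    · refine ⟨0, 0, by simp, Or.inr ?_⟩
      rw [← hone, one_mul]
      rfl
    · exact ⟨a, b, h, Or.inl rfl⟩
  | one => exact ⟨0, 0, by simp, Or.inl hone⟩
  | mul x y hx hy ihx ihy =>
    obtain ⟨a, b, h, hx'⟩ := ihx
    obtain ⟨a', b', h', hy'⟩ := ihy
    have hxy : (⟨x * y, mul_mem hx hy⟩ : ↥(Gme2 ζ hζ0 e)) = ⟨x, hx⟩ * ⟨y, hy⟩ := rfl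
    have h₁ : (e : ℤ) ∣ (a + a') + (b + b') := by
      rw [add_add_add_comm]
      exact dvd_add h h'
    have h₂ : (e : ℤ) ∣ (a + b') + (b + a') := by
      rw [add_add_add_comm, add_comm b']
      exact dvd_add h h'
    have h₃ : (e : ℤ) ∣ b' + a' := by rwa [add_comm]
    rcases hx' with hx' | hx' <;> rcases hy' with hy' | hy'
    · exact ⟨_, _, h₁, Or.inl (by rw [hxy, hx', hy', DG_mul])⟩
    · exact ⟨_, _, h₁, Or.inr (by rw [hxy, hx', hy', ← mul_assoc, DG_mul])⟩
    · refine ⟨_, _, h₂, Or.inr ?_⟩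
      rw [hxy, hx', hy', mul_assoc, tauG_mul_DG _ _ _ h₃, ← mul_assoc, DG_mul]
    · refine ⟨_, _, h₂, Or.inl ?_⟩
      rw [hxy, hx', hy', mul_assoc, ← mul_assoc (tauG ζ hζ0 e), tauG_mul_DG _ _ _ h₃,
        mul_assoc, tauG_mul_self, mul_one, DG_mul]
  | inv x hx ihx =>
    obtain ⟨a, b, h, hx'⟩ := ihx
    have hxi : (⟨x⁻¹, inv_mem hx⟩ : ↥(Gme2 ζ hζ0 e)) = ⟨x, hx⟩⁻¹ := rfl
    have h₁ : (e : ℤ) ∣ -a + -b := by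
      rw [← neg_add]
      exact h.neg_right
    have h₂ : (e : ℤ) ∣ -b + -a := by rwa [add_comm]
    rcases hx' with hx' | hx'
    · exact ⟨_, _, h₁, Or.inl (by rw [hxi, hx', DG_inv _ _ _ h₁])⟩
    · refine ⟨_, _, h₂, Or.inr ?_⟩
      rw [hxi, hx', mul_inv_rev, DG_inv _ _ _ h₁, inv_eq_of_mul_eq_one_right tauG_mul_self,
        tauG_mul_DG _ _ _ h₂]

theorem monoidHom_Gme2_ext {M : Type*} [Group M] {χ ψ : ↥(Gme2 ζ hζ0 e) →* M}
    (hs : χ (DG ζ hζ0 e 1 (-1) (by simp)) = ψ (DG ζ hζ0 e 1 (-1) (by simp)))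
    (hr : χ (DG ζ hζ0 e e 0 (by simp)) = ψ (DG ζ hζ0 e e 0 (by simp)))
    (ht : χ (tauG ζ hζ0 e) = ψ (tauG ζ hζ0 e)) : χ = ψ := by
  have hD : ∀ (a b : ℤ) (h : (e : ℤ) ∣ a + b),
      χ (DG ζ hζ0 e a b h) = ψ (DG ζ hζ0 e a b h) := by
    intro a b h
    obtain ⟨k, hk⟩ := id h
    rw [DG_eq_zpow_mul_zpow a b k h hk]
    simp only [map_mul, map_zpow, hs, hr]
  ext1 g
  obtain ⟨a, b, h, rfl | rfl⟩ := exists_eq_DG_or_eq_DG_mul_tauG g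
  · exact hD a b h
  · rw [map_mul, map_mul, hD, ht]

end Group

section Irreducible

variable {K : Type*} [Field K] {V : Type*} [AddCommGroup V] [Module K V]

theorem Module.End.exists_apply_eq_smul_of_pow_eq_one [FiniteDimensional K V] [Nontrivial V]
    {ω : K} {k : ℕ} [NeZero k] (hω : IsPrimitiveRoot ω k) (T : Module.End K V)
    (hT : T ^ k = 1) : ∃ (i : ℕ) (v : V), v ≠ 0 ∧ T v = ω ^ i • v := by
  have hdvd : minpoly K T ∣ Polynomial.X ^ k - 1 := by
    apply minpoly.dvd
    simp [hT]
  have hne : (Polynomial.X ^ k - 1 : Polynomial K) ≠ 0 :=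
    Polynomial.X_pow_sub_C_ne_zero (NeZero.pos k) 1
  have hsplit : (minpoly K T).Splits :=
    (Polynomial.X_pow_sub_one_splits hω).of_dvd hne hdvd
  obtain ⟨μ, hμ⟩ := hsplit.exists_eval_eq_zero
    (minpoly.degree_pos (Algebra.IsIntegral.isIntegral T)).ne'
  have hμk : μ ^ k = 1 := by
    obtain ⟨q, hq⟩ := hdvd
    have := congrArg (Polynomial.eval μ) hq
    simpa [hμ, sub_eq_zero] using this
  obtain ⟨i, -, rfl⟩ := hω.eq_pow_of_pow_eq_one hμk
  obtain ⟨v, hv⟩ := (Module.End.hasEigenvalue_of_isRoot hμ).exists_hasEigenvector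
  exact ⟨i, v, hv.2, hv.apply_eq_smul⟩

theorem Module.End.exists_common_eigenvector_of_pow_eq_one [FiniteDimensional K V]
    [Nontrivial V] {ω ω' : K} {k k' : ℕ} [NeZero k] [NeZero k'] (hω : IsPrimitiveRoot ω k)
    (hω' : IsPrimitiveRoot ω' k') {S T : Module.End K V} (hS : S ^ k = 1) (hT : T ^ k' = 1)
    (hST : Commute S T) :
    ∃ (i j : ℕ) (v : V), v ≠ 0 ∧ S v = ω ^ i • v ∧ T v = ω' ^ j • v := by
  obtain ⟨i, v, hv, hSv⟩ := Module.End.exists_apply_eq_smul_of_pow_eq_one hω S hS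
  let W := Module.End.eigenspace S (ω ^ i)
  have hmaps : ∀ w ∈ W, T w ∈ W := by
    intro w hw
    rw [Module.End.mem_eigenspace_iff] at hw ⊢
    rw [← Module.End.mul_apply, hST.eq, Module.End.mul_apply, hw, map_smul]
  have : Nontrivial W :=
    ⟨⟨⟨v, Module.End.mem_eigenspace_iff.2 hSv⟩, 0, fun h => hv (congrArg Subtype.val h)⟩⟩
  have hpow : (T.restrict hmaps) ^ k' = 1 := by
    rw [Module.End.pow_restrict k' hmaps]
    ext w
    simp [hT]
  obtain ⟨j, w, hw, hTw⟩ := Module.End.exists_apply_eq_smul_of_pow_eq_one hω' _ hpow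
  exact ⟨i, j, w, fun h => hw (Subtype.ext h), Module.End.mem_eigenspace_iff.1 w.2,
    congrArg Subtype.val hTw⟩

theorem repIso_equivalence {G : Type*} [Monoid G] :
    Equivalence (RepIso : Representation K G V → Representation K G V → Prop) where
  refl _ := ⟨LinearEquiv.refl K V, fun _ _ => rfl⟩
  symm := fun ⟨T, hT⟩ => ⟨T.symm, fun g w => T.injective (by simp [hT])⟩
  trans := fun ⟨T, hT⟩ ⟨U, hU⟩ => ⟨T.trans U, fun g w => by simp [hT, hU]⟩

end Irreducible

section Weight

variable {K : Type*} [Field K] {ζ : K} {hζ0 : ζ ≠ 0} {e : ℕ}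
  {V : Type*} [AddCommGroup V] [Module K V] {ρ : Representation K ↥(Gme2 ζ hζ0 e) V}

/-- `v` spans a copy of `χ_H(x^{σ+β} y^β) = χ_H(x^σ (xy)^β)` for the diagonal subgroup `H`. -/
def IsWeightVector (ρ : Representation K ↥(Gme2 ζ hζ0 e) V) (σ β : ℤ) (v : V) : Prop :=
  ∀ (a b : ℤ) (h : (e : ℤ) ∣ a + b),
    ρ (DG ζ hζ0 e a b h) v = ζ ^ (σ * a + β * (a + b)) • v

theorem Representation.apply_zpow_smul_of_apply_smul {G : Type*} [Group G]
    (ρ : Representation K G V) {g : G} {v : V} {c : K} (hc : c ≠ 0) (h : ρ g v = c • v)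
    (k : ℤ) : ρ (g ^ k) v = c ^ k • v := by
  have hnat : ∀ k : ℕ, ρ (g ^ k) v = c ^ k • v := by
    intro k
    induction k with
    | zero => simp
    | succ k ih => rw [pow_succ, map_mul, Module.End.mul_apply, h, map_smul, ih, smul_smul,
        pow_succ']
  obtain ⟨k, rfl | rfl⟩ := k.eq_nat_or_neg
  · simpa using hnat k
  · have := congrArg (ρ (g ^ (-(k : ℤ)))) (hnat k)
    rw [← Module.End.mul_apply, ← map_mul, map_smul] at this
    simp only [zpow_neg, zpow_natCast, inv_mul_cancel, map_one, Module.End.one_apply] at this ⊢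
    rw [this, smul_smul, inv_mul_cancel₀ (pow_ne_zero _ hc), one_smul, ← this]

theorem isWeightVector_of_apply_eq {σ α : ℤ} {v : V}
    (hs : ρ (DG ζ hζ0 e 1 (-1) (by simp)) v = ζ ^ σ • v)
    (hr : ρ (DG ζ hζ0 e e 0 (by simp)) v = ζ ^ (e * α) • v) :
    IsWeightVector ρ σ (α - σ) v := by
  intro a b h
  obtain ⟨k, hk⟩ := id h
  rw [DG_eq_zpow_mul_zpow a b k h hk, map_mul, Module.End.mul_apply,
    ρ.apply_zpow_smul_of_apply_smul (zpow_ne_zero _ hζ0) hr, map_smul,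
    ρ.apply_zpow_smul_of_apply_smul (zpow_ne_zero _ hζ0) hs, smul_smul, ← zpow_mul, ← zpow_mul,
    ← zpow_add₀ hζ0]
  congr 2
  linear_combination -α * hk

theorem IsWeightVector.tauG_apply {σ β : ℤ} {v : V} (hv : IsWeightVector ρ σ β v) :
    IsWeightVector ρ (-σ) (β + σ) (ρ (tauG ζ hζ0 e) v) := by
  intro a b h
  have h' : (e : ℤ) ∣ b + a := by rwa [add_comm]
  rw [← Module.End.mul_apply, ← map_mul, ← tauG_mul_DG _ _ h', map_mul, Module.End.mul_apply,
    hv, map_smul]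
  congr 2
  ring

theorem IsWeightVector.congr {m d : ℕ} (hm : m = d * e) (hζ : ζ ^ m = 1) {σ β σ' β' : ℤ}
    {v : V} (hv : IsWeightVector ρ σ β v) (hσ : (m : ℤ) ∣ σ - σ') (hβ : (d : ℤ) ∣ β - β') :
    IsWeightVector ρ σ' β' v := by
  intro a b h
  rw [hv]
  obtain ⟨x, hx⟩ := hσ
  obtain ⟨y, hy⟩ := hβ
  obtain ⟨z, hz⟩ := h
  have hexp : σ * a + β * (a + b) = (σ' * a + β' * (a + b)) + m * (x * a + y * z) := by
    have hm' : (m : ℤ) = d * e := by exact_mod_cast hm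
    linear_combination a * hx + (a + b) * hy + d * y * hz - y * z * hm'
  rw [hexp, zpow_add₀ hζ0, zpow_mul, zpow_natCast, hζ, one_zpow, mul_one]

theorem tauG_apply_tauG_apply (v : V) : ρ (tauG ζ hζ0 e) (ρ (tauG ζ hζ0 e) v) = v := by
  rw [← Module.End.mul_apply, ← map_mul, tauG_mul_self, map_one, Module.End.one_apply]

theorem invariant_of_DG_of_tauG {W : Submodule K V}
    (hD : ∀ (a b : ℤ) (h : (e : ℤ) ∣ a + b), ∀ w ∈ W, ρ (DG ζ hζ0 e a b h) w ∈ W)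
    (ht : ∀ w ∈ W, ρ (tauG ζ hζ0 e) w ∈ W) (g : ↥(Gme2 ζ hζ0 e)) : W.map (ρ g) ≤ W := by
  rw [Submodule.map_le_iff_le_comap]
  intro w hw
  obtain ⟨a, b, h, rfl | rfl⟩ := exists_eq_DG_or_eq_DG_mul_tauG g
  · exact hD a b h w hw
  · rw [Submodule.mem_comap, map_mul]
    exact hD a b h _ (ht w hw)

theorem IsWeightVector.span_eq_top (hρ : IsIrreducibleRep ρ) {σ β : ℤ} {v : V}
    (hv : IsWeightVector ρ σ β v) (hv0 : v ≠ 0) :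
    Submodule.span K {v, ρ (tauG ζ hζ0 e) v} = ⊤ := by
  refine (hρ.2 _ (invariant_of_DG_of_tauG ?_ ?_)).resolve_left ?_
  · intro a b h w hw
    obtain ⟨x, y, rfl⟩ := Submodule.mem_span_pair.1 hw
    refine Submodule.mem_span_pair.2 ⟨x * ζ ^ (σ * a + β * (a + b)),
      y * ζ ^ (-σ * a + (β + σ) * (a + b)), ?_⟩
    rw [map_add, map_smul, map_smul, hv, hv.tauG_apply, smul_smul, smul_smul]
  · intro w hw
    obtain ⟨x, y, rfl⟩ := Submodule.mem_span_pair.1 hw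
    refine Submodule.mem_span_pair.2 ⟨y, x, ?_⟩
    rw [map_add, map_smul, map_smul, tauG_apply_tauG_apply, add_comm]
  · intro h
    exact hv0 ((Submodule.mem_bot K).1 (h ▸ Submodule.subset_span (by simp)))

theorem IsWeightVector.finrank_le_two (hρ : IsIrreducibleRep ρ) {σ β : ℤ} {v : V}
    (hv : IsWeightVector ρ σ β v) (hv0 : v ≠ 0) : Module.finrank K V ≤ 2 := by
  classical
  rw [← finrank_top K V, ← hv.span_eq_top hρ hv0]
  have := finrank_span_finset_le_card (R := K) ({v, ρ (tauG ζ hζ0 e) v} : Finset V)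
  rw [Finset.coe_pair] at this
  exact this.trans Finset.card_le_two

theorem exists_isWeightVector [FiniteDimensional K V] {m d : ℕ} (hd : 0 < d) (he : 0 < e)
    (hm : m = d * e) (hζ : IsPrimitiveRoot ζ m) (hρ : IsIrreducibleRep ρ) :
    ∃ (σ β : ℤ) (v : V), v ≠ 0 ∧ IsWeightVector ρ σ β v := by
  have : Nontrivial V := by
    rw [← Submodule.nontrivial_iff K]
    exact ⟨_, _, hρ.1⟩
  have : NeZero d := ⟨hd.ne'⟩
  have hm0 : 0 < m := hm ▸ Nat.mul_pos hd he
  have : NeZero m := ⟨hm0.ne'⟩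
  have hζe : IsPrimitiveRoot (ζ ^ e) d := hζ.pow hm0 (by rw [hm, mul_comm])
  have hζm := hζ.pow_eq_one
  obtain ⟨i, j, v, hv0, hs, hr⟩ := Module.End.exists_common_eigenvector_of_pow_eq_one hζ hζe
    (S := ρ (DG ζ hζ0 e 1 (-1) (by simp))) (T := ρ (DG ζ hζ0 e e 0 (by simp)))
    (by
      rw [← map_pow, DG_pow _ _ _ _ (by simp), DG_eq_one _ (by simpa using hζm)
        (by simpa using hζm), map_one])
    (by
      rw [← map_pow, DG_pow _ _ _ _ (by simp), DG_eq_one _ ?_ (by simp), map_one]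
      rw [← hζm, hm]
      exact_mod_cast rfl)
    (by
      rw [Commute, SemiconjBy, ← map_mul, ← map_mul, DG_mul _ _ _ _ _ _ (by simp),
        DG_mul _ _ _ _ _ _ (by simp)]
      congr 1
      exact DG_congr _ _ (by ring) (by ring))
  refine ⟨i, j - i, v, hv0, isWeightVector_of_apply_eq (by simpa using hs) ?_⟩
  rw [hr, zpow_mul]
  simp

/-- A line stable under the diagonal matrices and `τ` contradicts irreducibility in dimension
at least `2`. -/
theorem IsIrreducibleRep.eq_zero_of_stable_line (hρ : IsIrreducibleRep ρ)
    (hV : 2 ≤ Module.finrank K V) {x : V}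
    (hD : ∀ (a b : ℤ) (h : (e : ℤ) ∣ a + b), ∃ c : K, ρ (DG ζ hζ0 e a b h) x = c • x)
    (ht : ∃ c : K, ρ (tauG ζ hζ0 e) x = c • x) : x = 0 := by
  by_contra hx
  have htop : Submodule.span K {x} = ⊤ := by
    refine (hρ.2 _ (invariant_of_DG_of_tauG ?_ ?_)).resolve_left
      (by simpa using hx)
    · intro a b h w hw
      obtain ⟨y, rfl⟩ := Submodule.mem_span_singleton.1 hw
      obtain ⟨c, hc⟩ := hD a b h
      exact Submodule.mem_span_singleton.2 ⟨y * c, by rw [map_smul, hc, smul_smul]⟩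
    · intro w hw
      obtain ⟨y, rfl⟩ := Submodule.mem_span_singleton.1 hw
      obtain ⟨c, hc⟩ := ht
      exact Submodule.mem_span_singleton.2 ⟨y * c, by rw [map_smul, hc, smul_smul]⟩
  have h1 := finrank_span_singleton (K := K) hx
  rw [htop, finrank_top] at h1
  omega

/-- In an irreducible representation of dimension at least `2`, the restriction of a weight
to the diagonal subgroup is not fixed by `τ`. -/
theorem IsWeightVector.not_dvd {m d n : ℕ} (hm : m = d * e) (hn : m = 2 * n) (he2 : 2 ∣ e)
    (hζ : ζ ^ m = 1) (hρ : IsIrreducibleRep ρ) (hV : 2 ≤ Module.finrank K V) {σ β : ℤ} {v : V}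
    (hv : IsWeightVector ρ σ β v) (hv0 : v ≠ 0) : ¬ (n : ℤ) ∣ σ := by
  rintro ⟨x, rfl⟩
  obtain ⟨f, rfl⟩ := he2
  have hn' : (n : ℤ) = d * f := by
    have : n = d * f := by
      apply Nat.eq_of_mul_eq_mul_left two_pos
      rw [← hn, hm]
      ring
    exact_mod_cast this
  have hw : IsWeightVector ρ (n * x) β (ρ (tauG ζ hζ0 (2 * f)) v) := by
    refine hv.tauG_apply.congr hm hζ ⟨-x, ?_⟩ ⟨f * x, ?_⟩
    · rw [hn]
      push_cast
      ring
    · rw [hn']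
      ring
  have hsum : v + ρ (tauG ζ hζ0 (2 * f)) v = 0 := by
    refine hρ.eq_zero_of_stable_line hV (fun a b h => ⟨ζ ^ (n * x * a + β * (a + b)), ?_⟩) ⟨1, ?_⟩
    · rw [map_add, hv, hw, ← smul_add]
    · rw [map_add, tauG_apply_tauG_apply, one_smul, add_comm]
  refine hv0 (hρ.eq_zero_of_stable_line hV (fun a b h => ⟨_, hv a b h⟩) ⟨-1, ?_⟩)
  rw [neg_one_smul]
  exact (neg_eq_of_add_eq_zero_right hsum).symm

/-- An irreducible representation of dimension at least `2` has a weight in the fundamental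
domain `0 < a < n`, `0 ≤ b < d`. -/
theorem exists_isWeightVector_fundamental [FiniteDimensional K V] {m d n : ℕ} (hd : 0 < d)
    (he : 0 < e) (hm : m = d * e) (hn : m = 2 * n) (he2 : 2 ∣ e) (hζ : IsPrimitiveRoot ζ m)
    (hρ : IsIrreducibleRep ρ) (hV : 2 ≤ Module.finrank K V) :
    ∃ (a b : ℕ) (v : V), 0 < a ∧ a < n ∧ b < d ∧ v ≠ 0 ∧ IsWeightVector ρ a b v := by
  have hm0 : 0 < m := hm ▸ Nat.mul_pos hd he
  have key : ∀ (σ β : ℤ) (v : V), v ≠ 0 → IsWeightVector ρ σ β v → σ % m < n →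
      ∃ (a b : ℕ) (v : V), 0 < a ∧ a < n ∧ b < d ∧ v ≠ 0 ∧ IsWeightVector ρ a b v := by
    intro σ β v hv0 hv hlt
    have hnd := hv.not_dvd hm hn he2 hζ.pow_eq_one hρ hV hv0
    have hσ0 : 0 ≤ σ % m := Int.emod_nonneg _ (by omega)
    have hβ0 : 0 ≤ β % d := Int.emod_nonneg _ (by omega)
    have hβd : β % d < d := Int.emod_lt_of_pos _ (by omega)
    have hσne : σ % m ≠ 0 := by
      intro h
      refine hnd (dvd_trans ⟨2, ?_⟩ (Int.dvd_of_emod_eq_zero h))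
      rw [hn]
      push_cast
      ring
    refine ⟨(σ % m).toNat, (β % d).toNat, v, by omega, by omega, by omega, hv0,
      hv.congr hm hζ.pow_eq_one ?_ ?_⟩
    · rw [Int.toNat_of_nonneg hσ0]
      exact Int.dvd_self_sub_emod
    · rw [Int.toNat_of_nonneg hβ0]
      exact Int.dvd_self_sub_emod
  obtain ⟨σ, β, v, hv0, hv⟩ := exists_isWeightVector hd he hm hζ hρ
  have hnd := hv.not_dvd hm hn he2 hζ.pow_eq_one hρ hV hv0
  by_cases hlt : σ % m < n
  · exact key σ β v hv0 hv hlt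
  · have hτ0 : ρ (tauG ζ hζ0 e) v ≠ 0 := by
      intro h
      apply hv0
      rw [← tauG_apply_tauG_apply (ρ := ρ) v, h, map_zero]
    refine key _ _ _ hτ0 hv.tauG_apply ?_
    have hσm : σ % m < m := Int.emod_lt_of_pos _ (by omega)
    have hdecomp := Int.emod_add_mul_ediv σ m
    have hne : σ % m ≠ n := by
      intro h
      refine hnd ⟨1 + 2 * (σ / m), ?_⟩
      rw [h] at hdecomp
      have hn' : (m : ℤ) = 2 * n := by exact_mod_cast hn
      linear_combination -hdecomp + (σ / m) * hn'
    have hneg : (-σ) % m = m - σ % m := by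
      rw [show -σ = (m - σ % m) + m * (-(σ / m) - 1) by linear_combination hdecomp,
        Int.add_mul_emod_self_left]
      exact Int.emod_eq_of_lt (by omega) (by omega)
    rw [hneg]
    omega

end Weight

section Model

variable {K : Type*} [Field K] {ζ : K} {hζ0 : ζ ≠ 0} {e : ℕ}

/-- A representation on `K²` spanned by a weight vector and its image under `τ` is isomorphic
to the monomial representation with the same weight. -/
theorem IsWeightVector.repIso {ρ π : Representation K ↥(Gme2 ζ hζ0 e) (Fin 2 → K)}
    (hρ : IsIrreducibleRep ρ) {σ β : ℤ} {v : Fin 2 → K} (hv : IsWeightVector ρ σ β v)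
    (hv0 : v ≠ 0)
    (hπD : ∀ (a b : ℤ) (h : (e : ℤ) ∣ a + b) (w : Fin 2 → K),
      π (DG ζ hζ0 e a b h) w =
        ![ζ ^ ((σ + β) * a + β * b) * w 0, ζ ^ ((σ + β) * b + β * a) * w 1])
    (hπτ : ∀ w : Fin 2 → K, π (tauG ζ hζ0 e) w = ![w 1, w 0]) : RepIso ρ π := by
  let U : (Fin 2 → K) →ₗ[K] (Fin 2 → K) :=
    (LinearMap.proj 0).smulRight v + (LinearMap.proj 1).smulRight (ρ (tauG ζ hζ0 e) v)
  have hU : ∀ w, U w = w 0 • v + w 1 • ρ (tauG ζ hζ0 e) v := fun w => rfl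
  have hsurj : Function.Surjective U := by
    intro x
    have hx : x ∈ Submodule.span K {v, ρ (tauG ζ hζ0 e) v} := by
      rw [hv.span_eq_top hρ hv0]
      trivial
    obtain ⟨y, z, rfl⟩ := Submodule.mem_span_pair.1 hx
    exact ⟨![y, z], by simp [hU]⟩
  have hinj : Function.Injective U := LinearMap.injective_iff_surjective.2 hsurj
  have hUD : ∀ (a b : ℤ) (h : (e : ℤ) ∣ a + b) (w : Fin 2 → K),
      U (π (DG ζ hζ0 e a b h) w) = ρ (DG ζ hζ0 e a b h) (U w) := by
    intro a b h w
    rw [hπD, hU, hU, map_add, map_smul, map_smul, hv, hv.tauG_apply, smul_smul, smul_smul]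
    simp only [Matrix.cons_val_zero, Matrix.cons_val_one]
    rw [mul_comm _ (w 0), mul_comm _ (w 1)]
    congr 4 <;> ring
  have hUτ : ∀ w, U (π (tauG ζ hζ0 e) w) = ρ (tauG ζ hζ0 e) (U w) := by
    intro w
    rw [hπτ, hU, hU, map_add, map_smul, map_smul, tauG_apply_tauG_apply, add_comm]
    simp
  refine repIso_equivalence.symm ⟨LinearEquiv.ofBijective U ⟨hinj, hsurj⟩, fun g w => ?_⟩
  change U (π g w) = ρ g (U w)
  obtain ⟨a, b, h, rfl | rfl⟩ := exists_eq_DG_or_eq_DG_mul_tauG g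
  · exact hUD a b h w
  · rw [map_mul, map_mul, Module.End.mul_apply, Module.End.mul_apply, hUD, hUτ]

theorem isIrreducibleRep_of_apply_DG {π : Representation K ↥(Gme2 ζ hζ0 e) (Fin 2 → K)}
    {c c' : K} (hc : c ≠ c')
    (hπs : ∀ w : Fin 2 → K, π (DG ζ hζ0 e 1 (-1) (by simp)) w = ![c * w 0, c' * w 1])
    (hπτ : ∀ w : Fin 2 → K, π (tauG ζ hζ0 e) w = ![w 1, w 0]) : IsIrreducibleRep π := by
  refine ⟨bot_ne_top, fun W hW => or_iff_not_imp_left.2 fun hne => ?_⟩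
  have hmem : ∀ g, ∀ w ∈ W, π g w ∈ W := fun g w hw => hW g (Submodule.mem_map_of_mem hw)
  have key : ∀ w ∈ W, w 0 ≠ 0 → W = ⊤ := by
    intro w hw hw0
    have h0 : (![1, 0] : Fin 2 → K) ∈ W := by
      have := W.smul_mem ((c - c') * w 0)⁻¹
        (W.sub_mem (hmem (DG ζ hζ0 e 1 (-1) (by simp)) w hw) (W.smul_mem c' hw))
      convert this using 1
      have hcc := sub_ne_zero.2 hc
      rw [hπs]
      ext i
      fin_cases i
      · change 1 = ((c - c') * w 0)⁻¹ * (c * w 0 - c' * w 0)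
        field_simp
      · change 0 = ((c - c') * w 0)⁻¹ * (c' * w 1 - c' * w 1)
        simp
    have h1 : (![0, 1] : Fin 2 → K) ∈ W := by
      simpa [hπτ] using hmem (tauG ζ hζ0 e) _ h0
    rw [eq_top_iff]
    intro x _
    convert W.add_mem (W.smul_mem (x 0) h0) (W.smul_mem (x 1) h1) using 1
    ext i
    fin_cases i <;> simp
  obtain ⟨w, hw, hw0⟩ := Submodule.exists_mem_ne_zero_of_ne_bot hne
  by_cases h : w 0 = 0
  · refine key _ (hmem (tauG ζ hζ0 e) w hw) ?_
    rw [hπτ]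
    intro h1
    apply hw0
    ext i
    fin_cases i
    · exact h
    · simpa using h1
  · exact key w hw h

theorem eigenvalues_eq_of_repIso {π π' : Representation K ↥(Gme2 ζ hζ0 e) (Fin 2 → K)}
    {g h : ↥(Gme2 ζ hζ0 e)} {x x' y y' u u' v v' : K}
    (hg : ∀ w : Fin 2 → K, π g w = ![x * w 0, x' * w 1])
    (hh : ∀ w : Fin 2 → K, π h w = ![y * w 0, y' * w 1])
    (hg' : ∀ w : Fin 2 → K, π' g w = ![u * w 0, u' * w 1])
    (hh' : ∀ w : Fin 2 → K, π' h w = ![v * w 0, v' * w 1])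
    (hiso : RepIso π π') : (x = u ∧ y = v) ∨ x = u' := by
  obtain ⟨T, hT⟩ := hiso
  set z := T ![1, 0] with hz
  have hz0 : z ≠ 0 := by
    rw [hz, Ne, LinearEquiv.map_eq_zero_iff]
    intro h
    simpa using congrFun h 0
  have hgz : ![u * z 0, u' * z 1] = x • z := by
    rw [← hg', hz, ← hT, ← map_smul, hg]
    simp
  have hhz : ![v * z 0, v' * z 1] = y • z := by
    rw [← hh', hz, ← hT, ← map_smul, hh]
    simp
  have hg0 : u * z 0 = x * z 0 := congrFun hgz 0
  have hg1 : u' * z 1 = x * z 1 := congrFun hgz 1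
  have hh0 : v * z 0 = y * z 0 := congrFun hhz 0
  by_cases h1 : z 1 = 0
  · have h0 : z 0 ≠ 0 := by
      intro h0
      apply hz0
      ext i
      fin_cases i
      · exact h0
      · exact h1
    exact Or.inl ⟨(mul_right_cancel₀ h0 hg0).symm, (mul_right_cancel₀ h0 hh0).symm⟩
  · exact Or.inr (mul_right_cancel₀ h1 hg1).symm

end Model

/-!
STATEMENT 13: the irreducible representations of `G = G(m,e,2)` for `e` even, `n = m/2`.
`G` has exactly `4d` one-dimensional representations: its character group is generated by
`χ(xy)` (order `d`) and `χ(A)`, `χ(N⁺)` (order `2`), so has order `4d`.  Moreover `G` has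
exactly `(n-1)d` isomorphism classes of `2`-dimensional irreducible representations,
represented (uniquely) by `ρ(x^a (xy)^b) = ρ(x^{a+b} y^b)` with `0 < a < n`, `0 ≤ b < d`
(the family `P` is the standard induced model of these), and there are no irreducibles of
dimension greater than `2`.  Here `χ(xy) : D(a,b) ↦ ζ^{a+b}, τ ↦ 1`;
`χ(A) : D(a,b) ↦ 1, τ ↦ -1`; `χ(N⁺) : D(a,b) ↦ ζ^{na}, τ ↦ 1`.
-/
theorem irreducibles_Gme2_even
    {K : Type*} [Field K] [CharZero K] (m d e n : ℕ) (hd : 0 < d) (he : 0 < e)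
    (hm : m = d * e) (hn : m = 2 * n)
    (ζ : K) (hζ : IsPrimitiveRoot ζ m) (hζ0 : ζ ≠ 0)
    (χxy χA χNp : ↥(Gme2 ζ hζ0 e) →* Kˣ)
    (hχxyD : ∀ (a b : ℤ) (h : (e : ℤ) ∣ a + b),
      ((χxy (DG ζ hζ0 e a b h) : Kˣ) : K) = ζ ^ (a + b))
    (hχxyτ : χxy (tauG ζ hζ0 e) = 1)
    (hχAD : ∀ (a b : ℤ) (h : (e : ℤ) ∣ a + b), χA (DG ζ hζ0 e a b h) = 1)
    (hχAτ : ((χA (tauG ζ hζ0 e) : Kˣ) : K) = -1)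
    (hχNpD : ∀ (a b : ℤ) (h : (e : ℤ) ∣ a + b),
      ((χNp (DG ζ hζ0 e a b h) : Kˣ) : K) = ζ ^ ((n : ℤ) * a))
    (hχNpτ : χNp (tauG ζ hζ0 e) = 1)
    -- the standard model `P α β` of `ρ(x^α y^β) = Ind_H^G χ_H(x^α y^β)`
    (P : ℤ → ℤ → Representation K ↥(Gme2 ζ hζ0 e) (Fin 2 → K))
    (hPD : ∀ (α β a' b' : ℤ) (h : (e : ℤ) ∣ a' + b') (w : Fin 2 → K),
      P α β (DG ζ hζ0 e a' b' h) w =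
        ![ζ ^ (α * a' + β * b') * w 0, ζ ^ (α * b' + β * a') * w 1])
    (hPτ : ∀ (α β : ℤ) (w : Fin 2 → K), P α β (tauG ζ hζ0 e) w = ![w 1, w 0]) :
    orderOf χxy = d ∧
    orderOf χA = 2 ∧
    orderOf χNp = 2 ∧
    (∀ χ : ↥(Gme2 ζ hζ0 e) →* Kˣ, ∃ i j k : ℕ, χ = χxy ^ i * χA ^ j * χNp ^ k) ∧
    Nat.card (↥(Gme2 ζ hζ0 e) →* Kˣ) = 4 * d ∧
    -- the representatives `ρ(x^a (xy)^b)`, `0 < a < n`, `0 ≤ b < d`, are irreducible,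
    (∀ a b : ℕ, 0 < a → a < n → b < d →
      IsIrreducibleRep (P ((a : ℤ) + b) (b : ℤ))) ∧
    -- pairwise non-isomorphic,
    (∀ a b a' b' : ℕ, 0 < a → a < n → b < d → 0 < a' → a' < n → b' < d →
      RepIso (P ((a : ℤ) + b) (b : ℤ)) (P ((a' : ℤ) + b') (b' : ℤ)) → a = a' ∧ b = b') ∧
    -- and exhaust the `2`-dimensional irreducibles,
    (∀ ρ : Representation K ↥(Gme2 ζ hζ0 e) (Fin 2 → K), IsIrreducibleRep ρ →
      ∃ a b : ℕ, 0 < a ∧ a < n ∧ b < d ∧ RepIso ρ (P ((a : ℤ) + b) (b : ℤ))) ∧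
    -- so there are exactly `(n-1)d` isomorphism classes of `2`-dimensional irreducibles,
    Nat.card (Quot (fun ρ₁ ρ₂ :
        {ρ : Representation K ↥(Gme2 ζ hζ0 e) (Fin 2 → K) // IsIrreducibleRep ρ} =>
          RepIso ρ₁.1 ρ₂.1)) = (n - 1) * d ∧
    -- and no irreducible representations of dimension greater than `2`.
    (∀ (V : Type) [AddCommGroup V] [Module K V] [FiniteDimensional K V]
        (ρ : Representation K ↥(Gme2 ζ hζ0 e) V),
      IsIrreducibleRep ρ → Module.finrank K V ≤ 2) := by
  have hm0 : 0 < m := hm ▸ Nat.mul_pos hd he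
  have hn0 : 0 < n := by omega
  have hζe : IsPrimitiveRoot (ζ ^ e) d := hζ.pow hm0 (by rw [hm, mul_comm])
  have hζn : ζ ^ n = -1 := (hζ.pow hm0 (by rw [hn, mul_comm])).eq_neg_one_of_two_right
  have h11 : (e : ℤ) ∣ 1 + -1 := by simp
  have he0 : (e : ℤ) ∣ e + 0 := by simp
  have h0e : (e : ℤ) ∣ 0 + e := by simp
  have conj : ∀ (χ : ↥(Gme2 ζ hζ0 e) →* Kˣ) (a b : ℤ) (h : (e : ℤ) ∣ a + b)
      (h' : (e : ℤ) ∣ b + a), χ (DG ζ hζ0 e a b h) = χ (DG ζ hζ0 e b a h') := by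
    intro χ a b h h'
    have := congrArg χ (tauG_mul_DG (ζ := ζ) (hζ0 := hζ0) a b h h')
    rw [map_mul, map_mul, mul_comm] at this
    exact mul_right_cancel this
  have hne : ζ ^ (n * e) = 1 := by
    have := congrArg Units.val (conj χNp e 0 he0 h0e)
    rw [hχNpD, hχNpD] at this
    rw [mul_zero, zpow_zero] at this
    exact_mod_cast this
  have he2 : 2 ∣ e := by
    have hdvd : 2 * n ∣ n * e := hn ▸ (hζ.pow_eq_one_iff_dvd _).1 hne
    rw [mul_comm n e] at hdvd
    exact Nat.dvd_of_mul_dvd_mul_right hn0 hdvd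
  -- values on the generators `D(1,-1)`, `D(e,0)`, `τ`
  have xyS : χxy (DG ζ hζ0 e 1 (-1) h11) = 1 := Units.ext (by simp [hχxyD])
  have xyR : ((χxy (DG ζ hζ0 e e 0 he0) : Kˣ) : K) = ζ ^ e := by simp [hχxyD]
  have NpS : χNp (DG ζ hζ0 e 1 (-1) h11) = -1 := Units.ext (by simp [hχNpD, hζn])
  have NpR : χNp (DG ζ hζ0 e e 0 he0) = 1 :=
    Units.ext (by rw [hχNpD, Units.val_one, ← hne]; exact_mod_cast rfl)
  have Aτ : χA (tauG ζ hζ0 e) = -1 := Units.ext (by simp [hχAτ])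
  have hneg : orderOf (-1 : Kˣ) = 2 :=
    orderOf_eq_prime (by simp) (fun h => by
      have := congrArg Units.val h
      simp at this
      norm_num [neg_eq_iff_add_eq_zero] at this)
  have xyR_order : orderOf (χxy (DG ζ hζ0 e e 0 he0)) = d := by
    rw [← orderOf_units, xyR, ← hζe.eq_orderOf]
  have ord_xy : orderOf χxy = d := by
    apply Nat.dvd_antisymm
    · apply orderOf_dvd_of_pow_eq_one
      apply monoidHom_Gme2_ext
      · simp [xyS]
      · rw [MonoidHom.pow_apply, ← xyR_order, pow_orderOf_eq_one, MonoidHom.one_apply]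
      · simp [hχxyτ]
    · rw [← xyR_order]
      exact orderOf_map_dvd (MonoidHom.eval (DG ζ hζ0 e e 0 he0)) χxy
  have ord_A : orderOf χA = 2 := by
    apply Nat.dvd_antisymm
    · apply orderOf_dvd_of_pow_eq_one
      apply monoidHom_Gme2_ext
      · simp [hχAD]
      · simp [hχAD]
      · simp [Aτ]
    · have := orderOf_map_dvd (MonoidHom.eval (tauG ζ hζ0 e)) χA
      rwa [MonoidHom.eval_apply_apply, Aτ, hneg] at this
  have ord_Np : orderOf χNp = 2 := by
    apply Nat.dvd_antisymm
    · apply orderOf_dvd_of_pow_eq_one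
      apply monoidHom_Gme2_ext
      · simp [NpS]
      · simp [NpR]
      · simp [hχNpτ]
    · have := orderOf_map_dvd (MonoidHom.eval (DG ζ hζ0 e 1 (-1) h11)) χNp
      rwa [MonoidHom.eval_apply_apply, NpS, hneg] at this
  have valS : ∀ i j k : ℕ, (χxy ^ i * χA ^ j * χNp ^ k) (DG ζ hζ0 e 1 (-1) h11) = (-1) ^ k := by
    intro i j k
    simp [xyS, hχAD, NpS]
  have valR : ∀ i j k : ℕ, (χxy ^ i * χA ^ j * χNp ^ k) (DG ζ hζ0 e e 0 he0) =
      χxy (DG ζ hζ0 e e 0 he0) ^ i := by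
    intro i j k
    simp [hχAD, NpR]
  have valτ : ∀ i j k : ℕ, (χxy ^ i * χA ^ j * χNp ^ k) (tauG ζ hζ0 e) = (-1) ^ j := by
    intro i j k
    simp [hχxyτ, hχNpτ, Aτ]
  have sign : ∀ u : Kˣ, u * u = 1 → ∃ j < 2, u = (-1) ^ j := by
    intro u hu
    have : (u : K) * u = 1 := by rw [← Units.val_mul, hu, Units.val_one]
    rcases mul_self_eq_one_iff.1 this with h | h
    · exact ⟨0, by norm_num, Units.ext (by simpa using h)⟩
    · exact ⟨1, by norm_num, Units.ext (by simpa using h)⟩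
  have gen : ∀ χ : ↥(Gme2 ζ hζ0 e) →* Kˣ, ∃ i < d, ∃ j < 2, ∃ k < 2,
      χ = χxy ^ i * χA ^ j * χNp ^ k := by
    intro χ
    obtain ⟨j, hj, hχτ⟩ := sign (χ (tauG ζ hζ0 e)) (by rw [← map_mul, tauG_mul_self, map_one])
    obtain ⟨k, hk, hχS⟩ := sign (χ (DG ζ hζ0 e 1 (-1) h11)) (by
      nth_rewrite 2 [conj χ 1 (-1) h11 (by simp)]
      rw [← map_mul, DG_mul _ _ _ _ _ _ (by simp), DG_eq_one _ (by simp) (by simp), map_one])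
    have hχR : (χ (DG ζ hζ0 e e 0 he0) : K) ^ d = 1 := by
      rw [← Units.val_pow_eq_pow_val, ← map_pow, DG_pow _ _ _ _ (by simp),
        DG_eq_one _ ?_ (by simp), map_one, Units.val_one]
      rw [← hζ.pow_eq_one, hm]
      exact_mod_cast rfl
    have : NeZero d := ⟨hd.ne'⟩
    obtain ⟨i, hi, hχRi⟩ := hζe.eq_pow_of_pow_eq_one hχR
    refine ⟨i, hi, j, hj, k, hk, monoidHom_Gme2_ext ?_ ?_ ?_⟩
    · rw [valS, hχS]
    · rw [valR]
      exact Units.ext (by rw [← hχRi, Units.val_pow_eq_pow_val, xyR])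
    · rw [valτ, hχτ]
  have card_char : Nat.card (↥(Gme2 ζ hζ0 e) →* Kˣ) = 4 * d := by
    have hbij : Function.Bijective (fun p : Fin d × Fin 2 × Fin 2 =>
        χxy ^ (p.1 : ℕ) * χA ^ (p.2.1 : ℕ) * χNp ^ (p.2.2 : ℕ)) := by
      constructor
      · rintro ⟨i, j, k⟩ ⟨i', j', k'⟩ h
        have hS := DFunLike.congr_fun h (DG ζ hζ0 e 1 (-1) h11)
        have hR := DFunLike.congr_fun h (DG ζ hζ0 e e 0 he0)
        have hτ := DFunLike.congr_fun h (tauG ζ hζ0 e)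
        simp only [valS, valR, valτ] at hS hR hτ
        refine Prod.ext (Fin.ext ?_) (Prod.ext (Fin.ext ?_) (Fin.ext ?_))
        · exact pow_injOn_Iio_orderOf (by simp [xyR_order]) (by simp [xyR_order]) hR
        · exact pow_injOn_Iio_orderOf (j.2.trans_eq hneg.symm) (j'.2.trans_eq hneg.symm) hτ
        · exact pow_injOn_Iio_orderOf (k.2.trans_eq hneg.symm) (k'.2.trans_eq hneg.symm) hS
      · intro χ
        obtain ⟨i, hi, j, hj, k, hk, rfl⟩ := gen χ
        exact ⟨(⟨i, hi⟩, ⟨j, hj⟩, ⟨k, hk⟩), rfl⟩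
    rw [← Nat.card_eq_of_bijective _ hbij]
    simp
    ring
  have hPs : ∀ (a b : ℕ) (w : Fin 2 → K), P ((a : ℤ) + b) b (DG ζ hζ0 e 1 (-1) h11) w =
      ![ζ ^ (a : ℤ) * w 0, ζ ^ (-(a : ℤ)) * w 1] := by
    intro a b w
    rw [hPD]
    congr 3 <;> ring_nf
  have hPr : ∀ (a b : ℕ) (w : Fin 2 → K), P ((a : ℤ) + b) b (DG ζ hζ0 e e 0 he0) w =
      ![(ζ ^ e) ^ (a + b) * w 0, (ζ ^ e) ^ b * w 1] := by
    intro a b w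
    have h₁ : ζ ^ (((a : ℤ) + b) * e + b * 0) = (ζ ^ e) ^ (a + b) := by
      rw [← pow_mul, ← zpow_natCast]
      push_cast
      ring_nf
    have h₂ : ζ ^ (((a : ℤ) + b) * 0 + b * e) = (ζ ^ e) ^ b := by
      rw [← pow_mul, ← zpow_natCast]
      push_cast
      ring_nf
    rw [hPD, h₁, h₂]
  have zpow_ne : ∀ a a' : ℕ, 0 < a → a < n → 0 < a' → a' < n →
      ζ ^ (a : ℤ) ≠ ζ ^ (-(a' : ℤ)) := by
    intro a a' ha han ha' han' h
    have h1 : ζ ^ (a + a') = 1 := by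
      rw [← zpow_natCast, Nat.cast_add, zpow_add₀ hζ0, h, ← zpow_add₀ hζ0]
      simp
    have := Nat.le_of_dvd (by omega) ((hζ.pow_eq_one_iff_dvd _).1 h1)
    omega
  have irr : ∀ a b : ℕ, 0 < a → a < n → b < d → IsIrreducibleRep (P ((a : ℤ) + b) (b : ℤ)) :=
    fun a b ha han _ => isIrreducibleRep_of_apply_DG (zpow_ne a a ha han ha han) (hPs a b)
      (hPτ _ _)
  have inj : ∀ a b a' b' : ℕ, 0 < a → a < n → b < d → 0 < a' → a' < n → b' < d →
      RepIso (P ((a : ℤ) + b) (b : ℤ)) (P ((a' : ℤ) + b') (b' : ℤ)) → a = a' ∧ b = b' := by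
    intro a b a' b' ha han hb ha' han' hb' hiso
    rcases eigenvalues_eq_of_repIso (hPs a b) (hPr a b) (hPs a' b') (hPr a' b') hiso with
      ⟨h₁, h₂⟩ | h
    · rw [zpow_natCast, zpow_natCast] at h₁
      obtain rfl := hζ.pow_inj (by omega) (by omega) h₁
      rw [pow_add, pow_add] at h₂
      exact ⟨rfl, hζe.pow_inj hb hb'
        (mul_left_cancel₀ (pow_ne_zero _ (pow_ne_zero _ hζ0)) h₂)⟩
    · exact absurd h (zpow_ne a a' ha han ha' han')
  have surj : ∀ ρ : Representation K ↥(Gme2 ζ hζ0 e) (Fin 2 → K), IsIrreducibleRep ρ →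
      ∃ a b : ℕ, 0 < a ∧ a < n ∧ b < d ∧ RepIso ρ (P ((a : ℤ) + b) (b : ℤ)) := by
    intro ρ hρ
    obtain ⟨a, b, v, ha, han, hb, hv0, hv⟩ :=
      exists_isWeightVector_fundamental hd he hm hn he2 hζ hρ (by simp)
    exact ⟨a, b, ha, han, hb, hv.repIso hρ hv0 (hPD _ _) (hPτ _ _)⟩
  refine ⟨ord_xy, ord_A, ord_Np, fun χ => ?_, card_char, irr, inj, surj, ?_, ?_⟩
  · obtain ⟨i, -, j, -, k, -, h⟩ := gen χ
    exact ⟨i, j, k, h⟩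
  · have hequiv : Equivalence (fun ρ₁ ρ₂ :
        {ρ : Representation K ↥(Gme2 ζ hζ0 e) (Fin 2 → K) // IsIrreducibleRep ρ} =>
          RepIso ρ₁.1 ρ₂.1) := repIso_equivalence.comap Subtype.val
    have hbij : Function.Bijective (fun p : Fin (n - 1) × Fin d =>
        Quot.mk (fun ρ₁ ρ₂ :
          {ρ : Representation K ↥(Gme2 ζ hζ0 e) (Fin 2 → K) // IsIrreducibleRep ρ} =>
            RepIso ρ₁.1 ρ₂.1)
          ⟨P (((p.1 + 1 : ℕ) : ℤ) + (p.2 : ℕ)) (p.2 : ℕ),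
            irr (p.1 + 1) p.2 (by omega) (by omega) p.2.2⟩) := by
      constructor
      · rintro ⟨i, j⟩ ⟨i', j'⟩ h
        have hiso := hequiv.eqvGen_iff.1 (Quot.eqvGen_exact h)
        obtain ⟨h₁, h₂⟩ := inj (i + 1) j (i' + 1) j' (by omega) (by omega) j.2 (by omega)
          (by omega) j'.2 hiso
        exact Prod.ext (Fin.ext (by simpa using h₁)) (Fin.ext h₂)
      · intro q
        induction q using Quot.ind with
        | mk ρ =>
          obtain ⟨a, b, ha, han, hb, hiso⟩ := surj ρ.1 ρ.2
          obtain ⟨a, rfl⟩ := Nat.exists_eq_succ_of_ne_zero ha.ne'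
          exact ⟨(⟨a, by omega⟩, ⟨b, hb⟩), Quot.sound (repIso_equivalence.symm hiso)⟩
    rw [← Nat.card_eq_of_bijective _ hbij]
    simp
  · intro V _ _ _ ρ hρ
    obtain ⟨σ, β, v, hv0, hv⟩ := exists_isWeightVector hd he hm hζ hρ
    exact hv.finrank_le_two hρ hv0
end

section
/- Let a finite group G act linearly on V = K² (char K = 0) and let U, W be finite-dimensional G-representations. Then for the G-equivariant skyscraper sheaves at the origin: Ext^0_G(O_0 ⊗ U, O_0 ⊗ W) ≅ Hom_G(U,W), Ext^1_G(O_0 ⊗ U, O_0 ⊗ W) ≅ Hom_G(U ⊗ V^∨, W), and Ext^2_G(O_0 ⊗ U, O_0 ⊗ W) ≅ Hom_G(U ⊗ det(V^∨), W). In particular, if U and W are irreducible then O_0 ⊗ U and O_0 ⊗ W are orthogonal in degree 0 unless U ≅ W, Ext^1 has dimension equal to the multiplicity of W in U ⊗ V^∨, and Ext^2 is one-dimensional iff W ≅ U ⊗ det(V^∨) and zero otherwise. -/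
noncomputable section

/-- The space of `G`-equivariant homomorphisms of `R`-modules `P → W`, where
`R = K[x,y]`, `P` carries a semilinear `G`-action `ρP` and `W` is the skyscraper
`G`-module at the origin (so `R` acts on `W` through evaluation at `0`). -/
def skyHom {K : Type*} [Field K] {G : Type*} [Group G]
    {P : Type*} [AddCommGroup P] [Module K P] [Module (MvPolynomial (Fin 2) K) P]
    {W : Type*} [AddCommGroup W] [Module K W]
    (ρP : Representation K G P) (ρW : Representation K G W) :
    Submodule K (P →ₗ[K] W) where
  carrier := {ψ | (∀ (r : MvPolynomial (Fin 2) K) (p : P),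
      ψ (r • p) = (MvPolynomial.eval (0 : Fin 2 → K) r) • ψ p) ∧
    ∀ (g : G) (p : P), ψ (ρP g p) = ρW g (ψ p)}
  zero_mem' := by constructor <;> intro _ _ <;> simp
  add_mem' := by
    rintro ψ₁ ψ₂ ⟨h1, h1'⟩ ⟨h2, h2'⟩
    constructor
    · intro r p
      simp only [LinearMap.add_apply, h1 r p, h2 r p, smul_add]
    · intro g p
      simp only [LinearMap.add_apply, h1' g p, h2' g p, map_add]
  smul_mem' := by
    rintro c ψ ⟨h, h'⟩
    constructor
    · intro r p
      simp only [LinearMap.smul_apply, h r p]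
      rw [smul_comm]
    · intro g p
      simp only [LinearMap.smul_apply, h' g p, map_smul]

/-- The space `Hom_G(U, W)` of equivariant maps between two representations. -/
def equivariantHoms {K : Type*} [Field K] {G : Type*} [Group G]
    {U : Type*} [AddCommGroup U] [Module K U]
    {W : Type*} [AddCommGroup W] [Module K W]
    (ρU : Representation K G U) (ρW : Representation K G W) :
    Submodule K (U →ₗ[K] W) where
  carrier := {ψ | ∀ (g : G) (u : U), ψ (ρU g u) = ρW g (ψ u)}
  zero_mem' := by intro _ _; simp
  add_mem' := by
    intro ψ₁ ψ₂ h1 h2 g u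
    simp only [LinearMap.add_apply, h1 g u, h2 g u, map_add]
  smul_mem' := by
    intro c ψ h g u
    simp only [LinearMap.smul_apply, h g u, map_smul]

/-- The space `Hom_G(U ⊗ V^∨, W)`, where `V = K²` with the linear `G`-action `φ`:
a `G`-equivariant map `U ⊗ V^∨ → W` is a pair `q = (q 0, q 1)` of linear maps
`U → W` (`q i = Φ(- ⊗ xᵢ)`) satisfying the indicated intertwining relation. -/
def ext1Target {K : Type*} [Field K] {G : Type*} [Group G]
    (φ : G →* ((Fin 2 → K) ≃ₗ[K] (Fin 2 → K)))
    {U : Type*} [AddCommGroup U] [Module K U]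
    {W : Type*} [AddCommGroup W] [Module K W]
    (ρU : Representation K G U) (ρW : Representation K G W) :
    Submodule K (Fin 2 → (U →ₗ[K] W)) where
  carrier := {q | ∀ (g : G) (i : Fin 2) (u : U),
    ρW g (q i u) = ∑ j : Fin 2, ((φ g⁻¹) (Pi.single j (1 : K)) i) • q j (ρU g u)}
  zero_mem' := by intro _ _ _; simp
  add_mem' := by
    intro q q' h h' g i u
    simp only [Pi.add_apply, LinearMap.add_apply, map_add, h g i u, h' g i u, smul_add,
      Finset.sum_add_distrib]
  smul_mem' := by
    intro c q h g i u
    simp only [Pi.smul_apply, LinearMap.smul_apply, map_smul, h g i u, Finset.smul_sum]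
    congr 1
    ext j
    rw [smul_comm]

/-- The space `Hom_G(U ⊗ det V^∨, W)`: linear maps `U → W` intertwining the actions up
to the determinant character `g ↦ det(φ g⁻¹)`. -/
def ext2Target {K : Type*} [Field K] {G : Type*} [Group G]
    (φ : G →* ((Fin 2 → K) ≃ₗ[K] (Fin 2 → K)))
    {U : Type*} [AddCommGroup U] [Module K U]
    {W : Type*} [AddCommGroup W] [Module K W]
    (ρU : Representation K G U) (ρW : Representation K G W) :
    Submodule K (U →ₗ[K] W) where
  carrier := {ψ | ∀ (g : G) (u : U),
    ρW g (ψ u) = (LinearMap.det ((φ g⁻¹ : (Fin 2 → K) ≃ₗ[K] (Fin 2 → K)) :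
      (Fin 2 → K) →ₗ[K] (Fin 2 → K))) • ψ (ρU g u)}
  zero_mem' := by intro _ _; simp
  add_mem' := by
    intro ψ₁ ψ₂ h1 h2 g u
    simp only [LinearMap.add_apply, map_add, h1 g u, h2 g u, smul_add]
  smul_mem' := by
    intro c ψ h g u
    simp only [LinearMap.smul_apply, map_smul, h g u]
    rw [smul_comm]

namespace EquivariantSkyscraper

open MvPolynomial

section LinearAlgebra

variable {K A B C : Type*} [Field K] [AddCommGroup A] [Module K A] [AddCommGroup B] [Module K B]
  [AddCommGroup C] [Module K C]

/-- A linear map that vanishes on the kernel of `f` factors through `f`. -/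
lemma exists_comp_eq_of_ker_le (f : A →ₗ[K] B) (ψ : A →ₗ[K] C) (h : f.ker ≤ ψ.ker) :
    ∃ χ : B →ₗ[K] C, χ ∘ₗ f = ψ := by
  obtain ⟨χ, hχ⟩ := (f.ker.liftQ ψ h ∘ₗ f.quotKerEquivRange.symm.toLinearMap).exists_extend
  refine ⟨χ, LinearMap.ext fun a ↦ ?_⟩
  have := LinearMap.congr_fun hχ (f.quotKerEquivRange (f.ker.mkQ a))
  simpa using this

/-- A linear map with values in the range of `f` lifts along `f`. -/
lemma exists_lift_of_forall_mem_range (f : A →ₗ[K] B) (g : C →ₗ[K] B) (h : ∀ c, g c ∈ f.range) :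
    ∃ t : C →ₗ[K] A, ∀ c, f (t c) = g c := by
  obtain ⟨s, hs⟩ := f.rangeRestrict.exists_rightInverse_of_surjective f.range_rangeRestrict
  refine ⟨s ∘ₗ g.codRestrict f.range h, fun c ↦ ?_⟩
  exact congrArg Subtype.val (LinearMap.congr_fun hs (g.codRestrict f.range h c))

/-- A linear map `Φ` carrying `S` onto `T` whose zeros on `S` lie exactly in `N` identifies
`S / (S ∩ N)` with `T`. -/
lemma nonempty_quotient_comap_equiv (Φ : A →ₗ[K] B) (S N : Submodule K A) (T : Submodule K B)
    (hT : ∀ a ∈ S, Φ a ∈ T) (hker : ∀ a ∈ S, Φ a = 0 ↔ a ∈ N)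
    (hsurj : ∀ b ∈ T, ∃ a ∈ S, Φ a = b) :
    Nonempty ((↥S ⧸ N.comap S.subtype) ≃ₗ[K] ↥T) := by
  let Ψ : ↥S →ₗ[K] ↥T := Φ.restrict hT
  have hΨ : N.comap S.subtype = Ψ.ker := by
    ext a
    simp [Ψ, LinearMap.mem_ker, Subtype.ext_iff, hker a.1 a.2]
  have hΨsurj : Function.Surjective Ψ := fun b ↦ by
    obtain ⟨a, ha, hab⟩ := hsurj b.1 b.2
    exact ⟨⟨a, ha⟩, Subtype.ext hab⟩
  exact ⟨(Submodule.quotEquivOfEq _ _ hΨ).trans (Ψ.quotKerEquivOfSurjective hΨsurj)⟩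

end LinearAlgebra

section Polynomial

variable {K P W : Type*} [Field K] [AddCommGroup P] [Module (MvPolynomial (Fin 2) K) P]

/-- The coordinates form a regular sequence on every projective module. -/
lemma exists_eq_X_smul_of_X_smul_eq [Module.Projective (MvPolynomial (Fin 2) K) P] {v w : P}
    (h : (X 0 : MvPolynomial (Fin 2) K) • v = (X 1 : MvPolynomial (Fin 2) K) • w) :
    ∃ a : P, w = (X 0 : MvPolynomial (Fin 2) K) • a ∧ v = (X 1 : MvPolynomial (Fin 2) K) • a := by
  obtain ⟨s, hs⟩ := Module.projective_def.mp ‹Module.Projective (MvPolynomial (Fin 2) K) P›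
  have hcoord (k : P) : X 0 * s v k = X 1 * s w k := by
    simpa using DFunLike.congr_fun (congrArg s h) k
  have hdvd (k : P) : X 0 ∣ s w k := by
    have : (X 0 : MvPolynomial (Fin 2) K) ∣ X 1 * s w k := ⟨_, (hcoord k).symm⟩
    simpa [X_dvd_mul_iff, X_dvd_X] using this
  choose q hq using hdvd
  let a : P →₀ MvPolynomial (Fin 2) K := Finsupp.onFinset (s w).support q fun k hk ↦ by
    rw [Finsupp.mem_support_iff, hq k]
    exact mul_ne_zero (X_ne_zero 0) hk
  have hw : s w = (X 0 : MvPolynomial (Fin 2) K) • a := Finsupp.ext fun k ↦ by simp [a, hq k]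
  have hv : s v = (X 1 : MvPolynomial (Fin 2) K) • a := Finsupp.ext fun k ↦ by
    refine mul_left_cancel₀ (X_ne_zero (R := K) (0 : Fin 2)) ?_
    rw [hcoord k, hq k]
    simp [a]
    ring
  refine ⟨Finsupp.linearCombination _ id a, ?_, ?_⟩
  · rw [← map_smul, ← hw, hs]
  · rw [← map_smul, ← hv, hs]

variable [Module K P] [IsScalarTower K (MvPolynomial (Fin 2) K) P] [AddCommGroup W] [Module K W]

/-- A `K`-linear map killing the multiples of the coordinates is linear over `K[x, y]`,
acting on the target through evaluation at the origin. -/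
lemma map_smul_of_map_X_smul_eq_zero (ψ : P →ₗ[K] W)
    (h : ∀ (i : Fin 2) (p : P), ψ ((X i : MvPolynomial (Fin 2) K) • p) = 0)
    (r : MvPolynomial (Fin 2) K) (p : P) : ψ (r • p) = eval (0 : Fin 2 → K) r • ψ p := by
  induction r using MvPolynomial.induction_on with
  | C c => rw [← algebraMap_eq, algebraMap_smul]; simp
  | add r s hr hs => simp [add_smul, hr, hs]
  | mul_X r i _ => rw [mul_comm, mul_smul, h]; simp

/-- On a projective module, the operators `p ↦ f (xᵢ p)` of a `K`-linear map `f` may be prescribed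
to be arbitrary maps that are linear along evaluation at the origin. -/
lemma exists_map_X_smul_eq [Module.Projective (MvPolynomial (Fin 2) K) P]
    (q : Fin 2 → P →ₗ[K] W)
    (hq : ∀ i (r : MvPolynomial (Fin 2) K) (p : P),
      q i (r • p) = eval (0 : Fin 2 → K) r • q i p) :
    ∃ f : P →ₗ[K] W, ∀ (i : Fin 2) (p : P),
      f ((X i : MvPolynomial (Fin 2) K) • p) = q i p := by
  obtain ⟨s, hs⟩ := Module.projective_def.mp ‹Module.Projective (MvPolynomial (Fin 2) K) P›
  let F : (P →₀ MvPolynomial (Fin 2) K) →ₗ[K] W := Finsupp.lsum K fun k ↦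
    ∑ i, (lcoeff K (Finsupp.single i 1)).smulRight (q i k)
  have hF (i : Fin 2) (v : P →₀ MvPolynomial (Fin 2) K) :
      F ((X i : MvPolynomial (Fin 2) K) • v) = q i (Finsupp.linearCombination _ id v) := by
    induction v using Finsupp.induction_linear with
    | zero => simp
    | add v w hv hw => simp only [smul_add, map_add, hv, hw]
    | single k r =>
      rw [Finsupp.linearCombination_single, id, hq, eval_zero, constantCoeff_eq,
        Finsupp.smul_single, smul_eq_mul, Finsupp.lsum_single]
      have (e : Fin 2) : coeff (Finsupp.single e 1) (X i * r) = if e = i then coeff 0 r else 0 := by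
        simp only [coeff_X_mul', Finsupp.mem_support_iff, Finsupp.single_apply]
        split_ifs with h <;> simp_all
      simp [LinearMap.sum_apply, this, -Fin.sum_univ_two]
  exact ⟨F ∘ₗ s.restrictScalars K, fun i p ↦ by simp [hF, hs p]⟩

end Polynomial

section Equivariant

variable {K G : Type*} [Field K] [CharZero K] [Group G]
  {φ : G →* ((Fin 2 → K) ≃ₗ[K] (Fin 2 → K))}
  {σ : G →* (MvPolynomial (Fin 2) K ≃ₐ[K] MvPolynomial (Fin 2) K)}

lemma apply_X_eq_sum
    (hσ : ∀ (g : G) (f : MvPolynomial (Fin 2) K) (w : Fin 2 → K),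
      eval w (σ g f) = eval (φ g⁻¹ w) f)
    (g : G) (i : Fin 2) :
    σ g (X i) = ∑ j, C (φ g⁻¹ (Pi.single j 1) i) * X j := by
  refine MvPolynomial.funext fun w ↦ ?_
  rw [hσ, eval_X]
  conv_lhs => rw [← Finset.univ_sum_single w]
  simp only [map_sum, Finset.sum_apply, map_mul, eval_C, eval_X]
  refine Finset.sum_congr rfl fun j _ ↦ ?_
  rw [← mul_one (w j), ← smul_eq_mul, Pi.single_smul, map_smul]
  simp [mul_comm]

variable [Finite G] {P Q W : Type*}
  [AddCommGroup P] [Module K P] [Module (MvPolynomial (Fin 2) K) P]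
  [IsScalarTower K (MvPolynomial (Fin 2) K) P]
  [AddCommGroup Q] [Module K Q] [Module (MvPolynomial (Fin 2) K) Q]
  [IsScalarTower K (MvPolynomial (Fin 2) K) Q]
  [AddCommGroup W] [Module K W]
  {ρP : Representation K G P} {ρQ : Representation K G Q} {ρW : Representation K G W}

/-- Averaging over `G` turns a map that is linear along evaluation at the origin into an
equivariant one, without changing it at points where all its conjugates agree. -/
lemma exists_mem_skyHom_average
    (hσ : ∀ (g : G) (f : MvPolynomial (Fin 2) K) (w : Fin 2 → K),
      eval w (σ g f) = eval (φ g⁻¹ w) f)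
    (hsemi : ∀ (g : G) (r : MvPolynomial (Fin 2) K) (p : P), ρP g (r • p) = σ g r • ρP g p)
    (ψ : P →ₗ[K] W)
    (hψ : ∀ (r : MvPolynomial (Fin 2) K) (p : P), ψ (r • p) = eval (0 : Fin 2 → K) r • ψ p) :
    ∃ χ ∈ skyHom ρP ρW, ∀ (p : P) (w : W), (∀ g, ρW g (ψ (ρP g⁻¹ p)) = w) → χ p = w := by
  have := Fintype.ofFinite G
  have hcard : (Fintype.card G : K) ≠ 0 := by simp
  let χ : P →ₗ[K] W := (Fintype.card G : K)⁻¹ • ∑ g : G, ρW g ∘ₗ ψ ∘ₗ ρP g⁻¹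
  have hχ (p : P) : χ p = (Fintype.card G : K)⁻¹ • ∑ g : G, ρW g (ψ (ρP g⁻¹ p)) := by simp [χ]
  have hconst (p : P) (w : W) (h : ∀ g, ρW g (ψ (ρP g⁻¹ p)) = w) : χ p = w := by
    simp [hχ, h, ← Nat.cast_smul_eq_nsmul K, smul_smul, hcard]
  refine ⟨χ, ⟨map_smul_of_map_X_smul_eq_zero χ fun i p ↦ hconst _ _ fun g ↦ ?_, fun h p ↦ ?_⟩,
    hconst⟩
  · rw [hsemi, hψ, hσ]
    simp
  · rw [hχ, hχ, map_smul, map_sum, ← Equiv.sum_comp (Equiv.mulLeft h)]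
    simp [← Module.End.mul_apply, ← map_mul, mul_assoc]

/-- An equivariant map on `P` that vanishes wherever `d` takes values in the multiples of the
coordinates extends equivariantly along `d`. -/
lemma exists_mem_skyHom_comp_eq
    (hσ : ∀ (g : G) (f : MvPolynomial (Fin 2) K) (w : Fin 2 → K),
      eval w (σ g f) = eval (φ g⁻¹ w) f)
    (hsemi : ∀ (g : G) (r : MvPolynomial (Fin 2) K) (q : Q), ρQ g (r • q) = σ g r • ρQ g q)
    (d : P →ₗ[MvPolynomial (Fin 2) K] Q) (hd : ∀ (g : G) (p : P), d (ρP g p) = ρQ g (d p))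
    (ψ : P →ₗ[K] W) (hψ : ψ ∈ skyHom ρP ρW)
    (hzero : ∀ (p : P) (a b : Q), d p = (X 0 : MvPolynomial (Fin 2) K) • a +
      (X 1 : MvPolynomial (Fin 2) K) • b → ψ p = 0) :
    ∃ χ ∈ skyHom ρQ ρW, ∀ p, χ (d p) = ψ p := by
  let m : Q × Q →ₗ[K] Q :=
    ((LinearMap.lsmul (MvPolynomial (Fin 2) K) Q (X 0)).restrictScalars K).coprod
      ((LinearMap.lsmul (MvPolynomial (Fin 2) K) Q (X 1)).restrictScalars K)
  obtain ⟨χ, hχ⟩ := exists_comp_eq_of_ker_le (m.range.mkQ ∘ₗ d.restrictScalars K) ψ fun p hp ↦ by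
    obtain ⟨⟨a, b⟩, hab⟩ := (Submodule.Quotient.mk_eq_zero _).mp (LinearMap.mem_ker.mp hp)
    exact hzero p a b (by simpa [m] using hab.symm)
  have hχd (p : P) : χ (m.range.mkQ (d p)) = ψ p := LinearMap.congr_fun hχ p
  have hX (i : Fin 2) (q : Q) : m.range.mkQ ((X i : MvPolynomial (Fin 2) K) • q) = 0 := by
    refine (Submodule.Quotient.mk_eq_zero _).mpr ?_
    fin_cases i
    · exact ⟨(q, 0), by simp [m]⟩
    · exact ⟨(0, q), by simp [m]⟩
  obtain ⟨χ', hχ', hval⟩ := exists_mem_skyHom_average (ρW := ρW) hσ hsemi (χ ∘ₗ m.range.mkQ)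
    (map_smul_of_map_X_smul_eq_zero _ fun i q ↦ by simp only [LinearMap.comp_apply, hX, map_zero])
  refine ⟨χ', hχ', fun p ↦ hval _ _ fun g ↦ ?_⟩
  rw [← hd, LinearMap.comp_apply, hχd, ← hψ.2]
  simp [← Module.End.mul_apply, ← map_mul]

end Equivariant

section Cocycle

variable {K P0 P1 P2 P3 U W : Type*} [Field K]
  [AddCommGroup P0] [Module K P0] [Module (MvPolynomial (Fin 2) K) P0]
  [AddCommGroup P1] [Module K P1] [Module (MvPolynomial (Fin 2) K) P1]
  [AddCommGroup P2] [Module (MvPolynomial (Fin 2) K) P2]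
  [AddCommGroup P3] [Module (MvPolynomial (Fin 2) K) P3]
  [AddCommGroup U] [Module K U] [AddCommGroup W] [Module K W]
  {d1 : P1 →ₗ[MvPolynomial (Fin 2) K] P0} {d2 : P2 →ₗ[MvPolynomial (Fin 2) K] P1}
  {d3 : P3 →ₗ[MvPolynomial (Fin 2) K] P2} {ε : P0 →ₗ[K] U} {s : U →ₗ[K] P0}
  {t : Fin 2 → U →ₗ[K] P1}

/-- A degree one cocycle is determined by its values on lifts of the elements `xᵢ s(u)`. -/
lemma cocycle_one_apply (hex0 : ∀ a, ε a = 0 → ∃ y, d1 y = a)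
    (hex1 : ∀ b, d1 b = 0 → ∃ z, d2 z = b) (hs : ∀ u, ε (s u) = u)
    (ht : ∀ i u, d1 (t i u) = (X i : MvPolynomial (Fin 2) K) • s u)
    {ψ : P1 →ₗ[K] W}
    (hψ : ∀ (r : MvPolynomial (Fin 2) K) (p : P1), ψ (r • p) = eval (0 : Fin 2 → K) r • ψ p)
    (hψd : ∀ z, ψ (d2 z) = 0) {b : P1} {a : Fin 2 → P0}
    (hb : d1 b = ∑ j, (X j : MvPolynomial (Fin 2) K) • a j) :
    ψ b = ∑ j, ψ (t j (ε (a j))) := by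
  choose y hy using fun j ↦ hex0 (a j - s (ε (a j))) (by simp [hs])
  obtain ⟨z, hz⟩ := hex1
    (b - ∑ j, (t j (ε (a j)) + (X j : MvPolynomial (Fin 2) K) • y j)) (by
      simp [hb, ht, hy, smul_sub])
  have := hψd z
  rw [hz] at this
  simpa [hψ, sub_eq_zero] using this

variable [Module K P2] {c : U →ₗ[K] P2}

/-- A degree two cocycle is determined by its values on lifts of the Koszul relations
`x₀ t₁(u) - x₁ t₀(u)`; a linear change of coordinates `m` scales these by `det m`. -/
lemma cocycle_two_apply (hex0 : ∀ a, ε a = 0 → ∃ y, d1 y = a)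
    (hex1 : ∀ b, d1 b = 0 → ∃ z, d2 z = b) (hex2 : ∀ b, d2 b = 0 → ∃ z, d3 z = b)
    (hs : ∀ u, ε (s u) = u)
    (ht : ∀ i u, d1 (t i u) = (X i : MvPolynomial (Fin 2) K) • s u)
    (hc : ∀ u, d2 (c u) = (X 0 : MvPolynomial (Fin 2) K) • t 1 u -
      (X 1 : MvPolynomial (Fin 2) K) • t 0 u)
    {ψ : P2 →ₗ[K] W}
    (hψ : ∀ (r : MvPolynomial (Fin 2) K) (p : P2), ψ (r • p) = eval (0 : Fin 2 → K) r • ψ p)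
    (hψd : ∀ z, ψ (d3 z) = 0) (m : Matrix (Fin 2) (Fin 2) K) {c' : P2} {b : Fin 2 → P1} {a : P0}
    (hb : ∀ i, d1 (b i) = (∑ j, C (m i j) * X j : MvPolynomial (Fin 2) K) • a)
    (hc' : d2 c' = (∑ j, C (m 0 j) * X j : MvPolynomial (Fin 2) K) • b 1 -
      (∑ j, C (m 1 j) * X j : MvPolynomial (Fin 2) K) • b 0) :
    ψ c' = m.det • ψ (c (ε a)) := by
  obtain ⟨y, hy⟩ := hex0 (a - s (ε a)) (by simp [hs])
  choose z hz using fun i ↦ hex1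
    (b i - ∑ j, (C (m i j) : MvPolynomial (Fin 2) K) • t j (ε a) -
      (∑ j, C (m i j) * X j : MvPolynomial (Fin 2) K) • y) (by
      simp only [map_sub, map_add, map_smul, hb, ht, hy, Fin.sum_univ_two]
      module)
  obtain ⟨w, hw⟩ := hex2
    (c' - (C m.det : MvPolynomial (Fin 2) K) • c (ε a) -
      ((∑ j, C (m 0 j) * X j : MvPolynomial (Fin 2) K) • z 1 -
      (∑ j, C (m 1 j) * X j : MvPolynomial (Fin 2) K) • z 0)) (by
      simp only [map_sub, map_smul, hc, hc', hz, Fin.sum_univ_two, Matrix.det_fin_two, map_mul]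
      module)
  have := hψd w
  rw [hw] at this
  simpa [hψ, sub_eq_zero] using this

end Cocycle

end EquivariantSkyscraper


/-!
STATEMENT 19: equivariant `Ext` groups between twisted skyscraper sheaves at the origin
of `V = K²` (char `K = 0`).  A finite group `G` acts linearly on `V` via `φ`, hence on
`R = K[x,y]` via `σ`; `U`, `W` are finite-dimensional `G`-representations and `O₀ ⊗ U`,
`O₀ ⊗ W` are the corresponding equivariant skyscraper modules at the `G`-fixed origin
(`R` acting through evaluation at `0`).  `Ext^i_G(O₀ ⊗ U, O₀ ⊗ W)` is computed from any
`G`-equivariant resolution `⋯ → P₂ → P₁ → P₀ → O₀ ⊗ U → 0` by projective `R`-modules as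
the `i`-th cohomology of the complex of equivariant `R`-module maps `Pᵢ → O₀ ⊗ W`.  The
claims: `Ext⁰ ≅ Hom_G(U, W)`, `Ext¹ ≅ Hom_G(U ⊗ V^∨, W)` and
`Ext² ≅ Hom_G(U ⊗ det(V^∨), W)`.
-/
open MvPolynomial EquivariantSkyscraper in
theorem ext_equivariant_skyscrapers
    {K : Type*} [Field K] [CharZero K]
    {G : Type*} [Group G] [Finite G]
    (φ : G →* ((Fin 2 → K) ≃ₗ[K] (Fin 2 → K)))
    (σ : G →* (MvPolynomial (Fin 2) K ≃ₐ[K] MvPolynomial (Fin 2) K))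
    (hσ : ∀ (g : G) (f : MvPolynomial (Fin 2) K) (w : Fin 2 → K),
      MvPolynomial.eval w (σ g f) = MvPolynomial.eval (φ g⁻¹ w) f)
    {U : Type*} [AddCommGroup U] [Module K U] [FiniteDimensional K U]
    {W : Type*} [AddCommGroup W] [Module K W] [FiniteDimensional K W]
    (ρU : Representation K G U) (ρW : Representation K G W)
    -- a `G`-equivariant projective resolution `P₃ → P₂ → P₁ → P₀ → O₀ ⊗ U → 0`:
    {P0 P1 P2 P3 : Type*}
    [AddCommGroup P0] [Module K P0] [Module (MvPolynomial (Fin 2) K) P0]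
    [IsScalarTower K (MvPolynomial (Fin 2) K) P0]
    [Module.Projective (MvPolynomial (Fin 2) K) P0]
    [AddCommGroup P1] [Module K P1] [Module (MvPolynomial (Fin 2) K) P1]
    [IsScalarTower K (MvPolynomial (Fin 2) K) P1]
    [Module.Projective (MvPolynomial (Fin 2) K) P1]
    [AddCommGroup P2] [Module K P2] [Module (MvPolynomial (Fin 2) K) P2]
    [IsScalarTower K (MvPolynomial (Fin 2) K) P2]
    [Module.Projective (MvPolynomial (Fin 2) K) P2]
    [AddCommGroup P3] [Module K P3] [Module (MvPolynomial (Fin 2) K) P3]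
    [IsScalarTower K (MvPolynomial (Fin 2) K) P3]
    [Module.Projective (MvPolynomial (Fin 2) K) P3]
    (ρ0 : Representation K G P0) (ρ1 : Representation K G P1)
    (ρ2 : Representation K G P2) (ρ3 : Representation K G P3)
    (hsemi0 : ∀ (g : G) (r : MvPolynomial (Fin 2) K) (p : P0),
      ρ0 g (r • p) = (σ g r) • ρ0 g p)
    (hsemi1 : ∀ (g : G) (r : MvPolynomial (Fin 2) K) (p : P1),
      ρ1 g (r • p) = (σ g r) • ρ1 g p)
    (hsemi2 : ∀ (g : G) (r : MvPolynomial (Fin 2) K) (p : P2),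
      ρ2 g (r • p) = (σ g r) • ρ2 g p)
    (hsemi3 : ∀ (g : G) (r : MvPolynomial (Fin 2) K) (p : P3),
      ρ3 g (r • p) = (σ g r) • ρ3 g p)
    (d1 : P1 →ₗ[MvPolynomial (Fin 2) K] P0)
    (d2 : P2 →ₗ[MvPolynomial (Fin 2) K] P1)
    (d3 : P3 →ₗ[MvPolynomial (Fin 2) K] P2)
    (hd1equiv : ∀ (g : G) (p : P1), d1 (ρ1 g p) = ρ0 g (d1 p))
    (hd2equiv : ∀ (g : G) (p : P2), d2 (ρ2 g p) = ρ1 g (d2 p))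
    (hd3equiv : ∀ (g : G) (p : P3), d3 (ρ3 g p) = ρ2 g (d3 p))
    (ε : P0 →ₗ[K] U)
    (hεsemi : ∀ (r : MvPolynomial (Fin 2) K) (p : P0),
      ε (r • p) = (MvPolynomial.eval (0 : Fin 2 → K) r) • ε p)
    (hεequiv : ∀ (g : G) (p : P0), ε (ρ0 g p) = ρU g (ε p))
    (hεsurj : Function.Surjective ε)
    (hex0 : (LinearMap.ker ε : Set P0) = (LinearMap.range d1 : Set P0))
    (hex1 : LinearMap.ker d1 = LinearMap.range d2)
    (hex2 : LinearMap.ker d2 = LinearMap.range d3) :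
    -- `Ext⁰_G(O₀ ⊗ U, O₀ ⊗ W) ≅ Hom_G(U, W)`
    Nonempty
      ((↥(skyHom ρ0 ρW ⊓
          LinearMap.ker (LinearMap.lcomp K W (d1.restrictScalars K)))) ≃ₗ[K]
        ↥(equivariantHoms ρU ρW)) ∧
    -- `Ext¹_G(O₀ ⊗ U, O₀ ⊗ W) ≅ Hom_G(U ⊗ V^∨, W)`
    Nonempty
      ((↥(skyHom ρ1 ρW ⊓
            LinearMap.ker (LinearMap.lcomp K W (d2.restrictScalars K))) ⧸
          Submodule.comap
            (skyHom ρ1 ρW ⊓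
              LinearMap.ker (LinearMap.lcomp K W (d2.restrictScalars K))).subtype
            (Submodule.map (LinearMap.lcomp K W (d1.restrictScalars K))
              (skyHom ρ0 ρW))) ≃ₗ[K]
        ↥(ext1Target φ ρU ρW)) ∧
    -- `Ext²_G(O₀ ⊗ U, O₀ ⊗ W) ≅ Hom_G(U ⊗ det(V^∨), W)`
    Nonempty
      ((↥(skyHom ρ2 ρW ⊓
            LinearMap.ker (LinearMap.lcomp K W (d3.restrictScalars K))) ⧸
          Submodule.comap
            (skyHom ρ2 ρW ⊓
              LinearMap.ker (LinearMap.lcomp K W (d3.restrictScalars K))).subtype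
            (Submodule.map (LinearMap.lcomp K W (d2.restrictScalars K))
              (skyHom ρ1 ρW))) ≃ₗ[K]
        ↥(ext2Target φ ρU ρW)) := by
  have hker0 (a : P0) (ha : ε a = 0) : ∃ y, d1 y = a :=
    hex0.subset (show a ∈ (LinearMap.ker ε : Set P0) from ha)
  have hεd1 (y : P1) : ε (d1 y) = 0 :=
    hex0.superset (show d1 y ∈ (LinearMap.range d1 : Set P0) from ⟨y, rfl⟩)
  have hker1 (b : P1) (hb : d1 b = 0) : ∃ z, d2 z = b := hex1.le hb
  have hd1d2 (z : P2) : d1 (d2 z) = 0 := hex1.ge ⟨z, rfl⟩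
  have hker2 (b : P2) (hb : d2 b = 0) : ∃ z, d3 z = b := hex2.le hb
  have hd2d3 (z : P3) : d2 (d3 z) = 0 := hex2.ge ⟨z, rfl⟩
  obtain ⟨s, hs⟩ := exists_lift_of_forall_mem_range ε LinearMap.id fun u ↦ hεsurj u
  have hs (u : U) : ε (s u) = u := hs u
  have hlift1 (i : Fin 2) :
      ∃ t : U →ₗ[K] P1, ∀ u, d1 (t u) = (X i : MvPolynomial (Fin 2) K) • s u :=
    exists_lift_of_forall_mem_range (d1.restrictScalars K)
      ((LinearMap.lsmul (MvPolynomial (Fin 2) K) P0 (X i)).restrictScalars K ∘ₗ s)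
      fun u ↦ hker0 _ (by simp [hεsemi])
  choose t ht using hlift1
  obtain ⟨c, hc⟩ : ∃ c : U →ₗ[K] P2, ∀ u, d2 (c u) =
      (X 0 : MvPolynomial (Fin 2) K) • t 1 u - (X 1 : MvPolynomial (Fin 2) K) • t 0 u :=
    exists_lift_of_forall_mem_range (d2.restrictScalars K)
      ((LinearMap.lsmul (MvPolynomial (Fin 2) K) P1 (X 0)).restrictScalars K ∘ₗ t 1 -
        (LinearMap.lsmul (MvPolynomial (Fin 2) K) P1 (X 1)).restrictScalars K ∘ₗ t 0)
      fun u ↦ hker1 _ (by simp [ht, smul_smul, mul_comm])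
  refine ⟨?_, ?_, ?_⟩
  · let Φ : ↥(equivariantHoms ρU ρW) →ₗ[K] ↥(skyHom ρ0 ρW ⊓
        LinearMap.ker (LinearMap.lcomp K W (d1.restrictScalars K))) :=
      (LinearMap.lcomp K W ε).restrict fun θ hθ ↦
        ⟨⟨fun r p ↦ by simp [hεsemi], fun g p ↦ by simpa [hεequiv] using hθ g (ε p)⟩,
          LinearMap.ext fun p ↦ by simp [hεd1]⟩
    refine ⟨(LinearEquiv.ofBijective Φ ⟨fun θ θ' h ↦ ?_, fun ψ ↦ ?_⟩).symm⟩
    · refine Subtype.ext (LinearMap.ext fun u ↦ ?_)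
      rw [← hs u]
      exact LinearMap.congr_fun (congrArg Subtype.val h) (s u)
    · obtain ⟨ψ, hψ, hψd⟩ := ψ
      obtain ⟨θ, hθ⟩ := exists_comp_eq_of_ker_le ε ψ fun p hp ↦ by
        obtain ⟨y, rfl⟩ := hker0 p hp
        exact LinearMap.congr_fun hψd y
      have hθε (p : P0) : θ (ε p) = ψ p := LinearMap.congr_fun hθ p
      refine ⟨⟨θ, fun g u ↦ ?_⟩, Subtype.ext hθ⟩
      rw [← hs u, ← hεequiv, hθε, hθε, hψ.2]
  · have hval {ψ : P1 →ₗ[K] W}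
        (hψ : ∀ (r : MvPolynomial (Fin 2) K) p, ψ (r • p) = eval (0 : Fin 2 → K) r • ψ p)
        (hψd : ∀ z, ψ (d2 z) = 0) (g : G) (i : Fin 2) (u : U) :
        ψ (ρ1 g (t i u)) = ∑ j, φ g⁻¹ (Pi.single j 1) i • ψ (t j (ρU g u)) := by
      rw [cocycle_one_apply hker0 hker1 hs ht hψ hψd
        (a := fun j ↦ (C (φ g⁻¹ (Pi.single j 1) i) : MvPolynomial (Fin 2) K) • ρ0 g (s u))]
      · simp [hεsemi, hεequiv, hs]
      · rw [hd1equiv, ht, hsemi0, apply_X_eq_sum hσ, Finset.sum_smul]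
        exact Finset.sum_congr rfl fun j _ ↦ by rw [mul_comm, mul_smul]
    refine nonempty_quotient_comap_equiv (LinearMap.pi fun i ↦ LinearMap.lcomp K W (t i)) _ _ _
      ?_ ?_ ?_
    · rintro ψ ⟨hψ, hψd⟩ g i u
      simpa [← hψ.2] using hval hψ.1 (LinearMap.congr_fun hψd) g i u
    · rintro ψ ⟨hψ, hψd⟩
      refine ⟨fun h ↦ ?_, ?_⟩
      · have ht0 (i : Fin 2) (u : U) : ψ (t i u) = 0 := LinearMap.congr_fun (congrFun h i) u
        obtain ⟨χ, hχ, hχd⟩ := exists_mem_skyHom_comp_eq hσ hsemi0 d1 hd1equiv ψ hψ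
          fun p a b hp ↦ by
            rw [cocycle_one_apply hker0 hker1 hs ht hψ.1 (LinearMap.congr_fun hψd) (a := ![a, b])
              (by simpa using hp)]
            simp [ht0]
        exact ⟨χ, hχ, LinearMap.ext hχd⟩
      · rintro ⟨χ, hχ, rfl⟩
        ext i u
        simp [ht, hχ.1]
    · intro q hq
      obtain ⟨f, hf⟩ := exists_map_X_smul_eq (fun i ↦ q i ∘ₗ ε) fun i r p ↦ by simp [hεsemi]
      let ψ₀ : P1 →ₗ[K] W := f ∘ₗ d1.restrictScalars K
      have hψ₀ := map_smul_of_map_X_smul_eq_zero ψ₀ fun i p ↦ by simp [ψ₀, hf, hεd1]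
      have hψ₀t (i : Fin 2) (u : U) : ψ₀ (t i u) = q i u := by simp [ψ₀, ht, hf, hs]
      obtain ⟨ψ, hψ, hψeq⟩ := exists_mem_skyHom_average (ρW := ρW) hσ hsemi1 ψ₀ hψ₀
      refine ⟨ψ, ⟨hψ, LinearMap.ext fun z ↦ hψeq _ _ fun g ↦ ?_⟩, ?_⟩
      · simp [ψ₀, ← hd2equiv, hd1d2]
      · ext i u
        refine hψeq _ _ fun g ↦ ?_
        rw [hval hψ₀ (fun z ↦ by simp [ψ₀, hd1d2])]
        simp only [hψ₀t]
        rw [← hq g⁻¹ i u, Representation.self_inv_apply]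
  · have hval {ψ : P2 →ₗ[K] W}
        (hψ : ∀ (r : MvPolynomial (Fin 2) K) p, ψ (r • p) = eval (0 : Fin 2 → K) r • ψ p)
        (hψd : ∀ z, ψ (d3 z) = 0) (g : G) (u : U) :
        ψ (ρ2 g (c u)) = LinearMap.det ((φ g⁻¹ : (Fin 2 → K) ≃ₗ[K] (Fin 2 → K)) :
          (Fin 2 → K) →ₗ[K] (Fin 2 → K)) • ψ (c (ρU g u)) := by
      have hm (i : Fin 2) : σ g (X i) =
          ∑ j, C (LinearMap.toMatrix' (φ g⁻¹ : (Fin 2 → K) →ₗ[K] (Fin 2 → K)) i j) * X j := by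
        simp [apply_X_eq_sum hσ, LinearMap.toMatrix'_apply]
      rw [cocycle_two_apply hker0 hker1 hker2 hs ht hc hψ hψd
        (LinearMap.toMatrix' (φ g⁻¹ : (Fin 2 → K) →ₗ[K] (Fin 2 → K)))
        (b := fun i ↦ ρ1 g (t i u)) (a := ρ0 g (s u)), LinearMap.det_toMatrix', hεequiv, hs]
      · intro i
        rw [← hm, hd1equiv, ht, hsemi0]
      · rw [← hm, ← hm, hd2equiv, hc, map_sub, hsemi1, hsemi1]
    refine nonempty_quotient_comap_equiv (LinearMap.lcomp K W c) _ _ _ ?_ ?_ ?_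
    · rintro ψ ⟨hψ, hψd⟩ g u
      simpa [← hψ.2] using hval hψ.1 (LinearMap.congr_fun hψd) g u
    · rintro ψ ⟨hψ, hψd⟩
      refine ⟨fun h ↦ ?_, ?_⟩
      · have hc0 (u : U) : ψ (c u) = 0 := LinearMap.congr_fun h u
        obtain ⟨χ, hχ, hχd⟩ := exists_mem_skyHom_comp_eq hσ hsemi1 d2 hd2equiv ψ hψ
          fun p b₁ b₀ hp ↦ by
            have hrel := hd1d2 p
            rw [hp, map_add, map_smul, map_smul, ← eq_neg_iff_add_eq_zero, ← smul_neg] at hrel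
            obtain ⟨a, ha₀, ha₁⟩ := exists_eq_X_smul_of_X_smul_eq hrel
            rw [cocycle_two_apply hker0 hker1 hker2 hs ht hc hψ.1 (LinearMap.congr_fun hψd) 1
              (b := ![-b₀, b₁]) (a := a), hc0, smul_zero]
            · exact Fin.forall_fin_two.mpr ⟨by simpa using ha₀, by simpa using ha₁⟩
            · simp [hp]
        exact ⟨χ, hχ, LinearMap.ext hχd⟩
      · rintro ⟨χ, hχ, rfl⟩
        ext u
        simp [hc, hχ.1]
    · intro θ hθ
      obtain ⟨h, hh⟩ := exists_map_X_smul_eq ![0, θ ∘ₗ ε] fun i r p ↦ by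
        fin_cases i <;> simp [hεsemi]
      have hhd := map_smul_of_map_X_smul_eq_zero (h ∘ₗ d1.restrictScalars K) fun i p ↦ by
        fin_cases i <;> simp [hh, hεd1]
      obtain ⟨f, hf⟩ := exists_map_X_smul_eq ![h ∘ₗ d1.restrictScalars K, 0] fun i r p ↦ by
        fin_cases i
        · exact hhd r p
        · simp
      let ψ₀ : P2 →ₗ[K] W := f ∘ₗ d2.restrictScalars K
      have hψ₀ := map_smul_of_map_X_smul_eq_zero ψ₀ fun i p ↦ by
        fin_cases i <;> simp [ψ₀, hf, hd1d2]
      have hψ₀c (u : U) : ψ₀ (c u) = θ u := by simp [ψ₀, hc, hf, ht, hh, hs]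
      obtain ⟨ψ, hψ, hψeq⟩ := exists_mem_skyHom_average (ρW := ρW) hσ hsemi2 ψ₀ hψ₀
      refine ⟨ψ, ⟨hψ, LinearMap.ext fun z ↦ hψeq _ _ fun g ↦ ?_⟩, ?_⟩
      · simp [ψ₀, ← hd3equiv, hd2d3]
      · ext u
        refine hψeq _ _ fun g ↦ ?_
        rw [hval hψ₀ (fun z ↦ by simp [ψ₀, hd2d3]), hψ₀c, ← hθ g⁻¹ u,
          Representation.self_inv_apply]

end
end
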